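/- arXiv:1311.3725 — 3 statements merged into one kernel-verified Lean document; each statement's English description precedes it below -/
import Mathlib

section
/- Let π₁, π₂, π₃ : ℝ² → ℝ be surjective linear maps that are pairwise linearly independent, and for each j let v_j ∈ ℝ² be a unit vector spanning ker π_j. Let a : ℝ² → ℝ be a smooth compactly supported function and let S : ℝ² → ℝ be smooth. Suppose that |D_{π⊥}S(x,y)| ≥ 1 for every (x,y) in the convex hull of the support of a, where D_{π⊥}S denotes the third-order directional derivative (v₁·∇)(v₂·∇)(v₃·∇)S. Then there exists a constant C (depending on S, a and the maps π_j) such that for every real λ with |λ| ≥ 1 and all f₁, f₂, f₃ ∈ L²(ℝ): |∬_{ℝ²} e^{iλS(x,y)} a(x,y) f₁(π₁(x,y)) f₂(π₂(x,y)) f₃(π₃(x,y)) dx dy| ≤ C |λ|^{−1/6} ‖f₁‖_{L²} ‖f₂‖_{L²} ‖f₃‖_{L²}. -/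
open MeasureTheory

noncomputable section

/-!
In suitable linear coordinates `(x, y)` the three maps are, up to scalars, `x`, `y` and `x + y`.
Two applications of Cauchy-Schwarz (one removing `f₁` by differencing in the direction `v₁`, one
removing `f₂` by differencing in the direction `v₂`) reduce the problem to integrating out the
remaining variable, along which `x + y` is constant. The phase of that integral is the second
difference `Δ_{s v₂} Δ_{t v₁} S`, whose derivative along `v₃` is, by the mean value theorem, `t s`
times the third derivative in the hypothesis, so two integrations by parts bound the integral by
`(1 + (lam t s) ^ 2)⁻¹`. Integrating in `s` gives `(|lam| |t|)⁻¹`, hence a bound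
`(|lam| |t|) ^ (-1 / 2)` for the form at separation `t`; using the trivial bound for
`|t| ≤ |lam| ^ (-1 / 3)` gives `|lam| ^ (-1 / 3)` for the square of the form.
-/

namespace TrilinearOscillatory

open ComplexConjugate

/-! ### Multiplicative differences and oscillating amplitudes -/

section MulDiff

/-- The multiplicative difference `F (p + v) * conj (F p)` of a complex-valued function, which
differentiates the phase of `F` in the direction `v`. -/
def mulDiff {G : Type*} [Add G] (v : G) (F : G → ℂ) : G → ℂ :=
  fun p => F (p + v) * conj (F p)

/-- The amplitude `a` modulated by the phase `lam * S`: the kernel of the oscillatory forms. -/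
def oscillate {α : Type*} (lam : ℝ) (S : α → ℝ) (a : α → ℂ) : α → ℂ :=
  fun p => Complex.exp (Complex.I * lam * S p) * a p

theorem norm_oscillate {α : Type*} (lam : ℝ) (S : α → ℝ) (a : α → ℂ) (p : α) :
    ‖oscillate lam S a p‖ = ‖a p‖ := by
  have hphase : Complex.I * lam * S p = ((lam * S p : ℝ) : ℂ) * Complex.I := by
    push_cast; ring
  rw [oscillate, norm_mul, hphase, Complex.norm_exp_ofReal_mul_I, one_mul]

theorem continuous_oscillate {α : Type*} [TopologicalSpace α] (lam : ℝ) {S : α → ℝ} {a : α → ℂ}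
    (hS : Continuous S) (ha : Continuous a) : Continuous (oscillate lam S a) := by
  unfold oscillate; fun_prop

theorem mulDiff_oscillate {G : Type*} [AddCommMonoid G] (lam : ℝ) (S : G → ℝ) (a : G → ℂ) (v : G) :
    mulDiff v (oscillate lam S a) = oscillate lam (fwdDiff v S) (mulDiff v a) := by
  ext p
  have hexp : Complex.exp (Complex.I * lam * (S (p + v) - S p : ℝ)) =
      Complex.exp (Complex.I * lam * S (p + v)) * conj (Complex.exp (Complex.I * lam * S p)) := by
    rw [← Complex.exp_conj, ← Complex.exp_add]
    simp only [map_mul, Complex.conj_I, Complex.conj_ofReal, Complex.ofReal_sub]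
    ring_nf
  simp only [mulDiff, oscillate, fwdDiff, hexp, map_mul]
  ring

variable {G : Type*} [AddGroup G] [TopologicalSpace G] [ContinuousAdd G]

theorem mem_tsupport_of_mem_tsupport_mulDiff {v p : G} {F : G → ℂ}
    (hp : p ∈ tsupport (mulDiff v F)) : p ∈ tsupport F ∧ p + v ∈ tsupport F := by
  constructor
  · refine closure_mono (fun q hq => ?_) hp
    exact fun hq0 => hq (by simp [mulDiff, hq0])
  · refine tsupport_comp_subset_preimage F (continuous_add_const v)
      (closure_mono (fun q hq => ?_) hp)
    exact fun hq0 => hq (by simp_all [mulDiff])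

end MulDiff

/-! ### Directional derivatives and second differences -/

section DirDeriv

variable {V : Type*} [NormedAddCommGroup V] [NormedSpace ℝ V]

/-- The directional derivative `v · ∇F`, as a function so that it can be iterated. -/
def dirDeriv (v : V) (F : V → ℝ) : V → ℝ := fun p => fderiv ℝ F p v

theorem contDiff_dirDeriv {m n : WithTop ℕ∞} {F : V → ℝ} (hF : ContDiff ℝ n F) (hmn : m + 1 ≤ n)
    (v : V) : ContDiff ℝ m (dirDeriv v F) :=
  (hF.fderiv_right hmn).clm_apply contDiff_const

theorem dirDeriv_smul_left (k : ℝ) (v : V) (F : V → ℝ) :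
    dirDeriv (k • v) F = k • dirDeriv v F := by
  ext p
  simp [dirDeriv]

theorem dirDeriv_smul_right (k : ℝ) (v : V) (F : V → ℝ) :
    dirDeriv v (k • F) = k • dirDeriv v F := by
  ext p
  simp [dirDeriv, fderiv_const_smul_field]

theorem dirDeriv_fwdDiff {F : V → ℝ} (hF : Differentiable ℝ F) (v w : V) :
    dirDeriv v (fwdDiff w F) = fwdDiff w (dirDeriv v F) := by
  ext p
  have htranslate : DifferentiableAt ℝ (fun q => F (q + w)) p := by fun_prop
  have hsub : fderiv ℝ (fwdDiff w F) p = fderiv ℝ F (p + w) - fderiv ℝ F p := by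
    rw [← fderiv_comp_add_right w, ← fderiv_fun_sub htranslate (hF p)]
    rfl
  simp only [dirDeriv, hsub, fwdDiff, sub_apply]

theorem deriv_comp_add_smul {F : V → ℝ} (hF : Differentiable ℝ F) (p v : V) :
    deriv (fun y : ℝ => F (p + y • v)) = fun y => dirDeriv v F (p + y • v) := by
  ext y
  have hline : HasDerivAt (fun y : ℝ => p + y • v) v y := by
    simpa using ((hasDerivAt_id y).smul_const v).const_add p
  exact ((hF _).hasFDerivAt.comp_hasDerivAt y hline).deriv

theorem exists_fwdDiff_eq_dirDeriv {F : V → ℝ} (hF : Differentiable ℝ F) (p v : V) :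
    ∃ t ∈ Set.Icc (0 : ℝ) 1, fwdDiff v F p = dirDeriv v F (p + t • v) := by
  obtain ⟨ξ, hξ, hmvt⟩ := domain_mvt (f := F) (s := Set.univ) (x := p) (y := p + v)
    (fun q _ => (hF q).hasFDerivAt.hasFDerivWithinAt) convex_univ trivial trivial
  rw [segment_eq_image'] at hξ
  obtain ⟨t, ht, rfl⟩ := hξ
  exact ⟨t, ht, by simpa [fwdDiff, dirDeriv] using hmvt⟩

theorem exists_fwdDiff_fwdDiff_eq_dirDeriv_dirDeriv {F : V → ℝ} (hF : ContDiff ℝ 2 F)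
    {K : Set V} (hK : Convex ℝ K) {p u v : V} (hp : p ∈ K) (hpv : p + v ∈ K) (hpu : p + u ∈ K)
    (hpuv : p + u + v ∈ K) :
    ∃ ξ ∈ K, fwdDiff u (fwdDiff v F) p = dirDeriv v (dirDeriv u F) ξ := by
  have hF₁ : Differentiable ℝ F := hF.differentiable (by norm_num)
  have hF₂ : Differentiable ℝ (dirDeriv u F) :=
    (contDiff_dirDeriv (m := 1) hF (by norm_num) u).differentiable (by norm_num)
  have hdiff : Differentiable ℝ (fwdDiff v F) := by
    unfold fwdDiff; fun_prop
  obtain ⟨t, ht, houter⟩ := exists_fwdDiff_eq_dirDeriv hdiff p u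
  obtain ⟨s, hs, hinner⟩ := exists_fwdDiff_eq_dirDeriv hF₂ (p + t • u) v
  refine ⟨p + t • u + s • v, ?_, by rw [houter, dirDeriv_fwdDiff hF₁, hinner]⟩
  have hbase : p + t • u ∈ K := hK.add_smul_mem hp hpu ht
  have htop : p + t • u + v ∈ K := by
    have := hK.add_smul_mem hpv (y := u) (by convert hpuv using 1; abel) ht
    convert this using 1; abel
  exact hK.add_smul_mem hbase htop hs

end DirDeriv

/-! ### Amplitudes with bounded derivatives -/

section HasDerivBound

variable {V : Type*} [NormedAddCommGroup V] [NormedSpace ℝ V]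

/-- `F` is of class `C^n` and all its derivatives of order at most `n` have norm at most `M`: the
quantitative smoothness of amplitudes that makes nonstationary phase bounds uniform. -/
def HasDerivBound (n : ℕ) (M : ℝ) (F : V → ℂ) : Prop :=
  ContDiff ℝ n F ∧ ∀ k ≤ n, ∀ p, ‖iteratedFDeriv ℝ k F p‖ ≤ M

namespace HasDerivBound

variable {n : ℕ} {M N : ℝ} {F H : V → ℂ}

theorem bound_nonneg (hF : HasDerivBound n M F) : 0 ≤ M :=
  (norm_nonneg _).trans (hF.2 0 n.zero_le 0)

theorem comp_conj (hF : HasDerivBound n M F) : HasDerivBound n M (fun p => conj (F p)) :=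
  ⟨Complex.conjCLE.contDiff.comp hF.1, fun k hk p =>
    (Complex.conjLIE.norm_iteratedFDeriv_comp_left F p k).trans_le (hF.2 k hk p)⟩

theorem comp_add_right (hF : HasDerivBound n M F) (v : V) :
    HasDerivBound n M (fun p => F (p + v)) :=
  ⟨hF.1.comp (contDiff_id.add contDiff_const), fun k hk p => by
    rw [iteratedFDeriv_comp_add_right]; exact hF.2 k hk _⟩

theorem mul (hF : HasDerivBound n M F) (hH : HasDerivBound n N H) :
    HasDerivBound n (2 ^ n * (M * N)) (fun p => F p * H p) := by
  have hM := hF.bound_nonneg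
  have hN := hH.bound_nonneg
  refine ⟨hF.1.mul hH.1, fun k hk p => ?_⟩
  calc ‖iteratedFDeriv ℝ k (fun p => F p * H p) p‖
      ≤ ∑ i ∈ Finset.range (k + 1),
          (k.choose i : ℝ) * ‖iteratedFDeriv ℝ i F p‖ * ‖iteratedFDeriv ℝ (k - i) H p‖ :=
        norm_iteratedFDeriv_mul_le hF.1 hH.1 p (by exact_mod_cast hk)
    _ ≤ ∑ i ∈ Finset.range (k + 1), (k.choose i : ℝ) * M * N := by
        gcongr with i hi
        · exact hF.2 i (by grind) p
        · exact hH.2 (k - i) (by lia) p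
    _ = 2 ^ k * (M * N) := by
        simp_rw [mul_assoc]
        rw [← Finset.sum_mul]
        exact_mod_cast congrArg (fun j : ℕ => (j : ℝ) * (M * N)) (Nat.sum_range_choose k)
    _ ≤ 2 ^ n * (M * N) := by gcongr; norm_num

theorem mulDiff (hF : HasDerivBound n M F) (v : V) :
    HasDerivBound n (2 ^ n * (M * M)) (mulDiff v F) :=
  (hF.comp_add_right v).mul hF.comp_conj

theorem comp_add_smul (hF : HasDerivBound n M F) (p v : V) :
    HasDerivBound n (M * max 1 ‖v‖ ^ n) (fun y : ℝ => F (p + y • v)) := by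
  have hM := hF.bound_nonneg
  let line : ℝ →L[ℝ] V := ContinuousLinearMap.toSpanSingleton ℝ v
  have hline : ‖line‖ = ‖v‖ := ContinuousLinearMap.norm_toSpanSingleton v
  have htranslate := hF.comp_add_right p
  have hcomp : (fun y : ℝ => F (p + y • v)) = (fun q => F (q + p)) ∘ line := by
    ext y
    simp [line, add_comm]
  rw [hcomp]
  refine ⟨htranslate.1.comp line.contDiff, fun k hk y => ?_⟩
  rw [line.iteratedFDeriv_comp_right htranslate.1 y (by exact_mod_cast hk)]
  calc _ ≤ ‖iteratedFDeriv ℝ k (fun q => F (q + p)) (line y)‖ * ∏ _ : Fin k, ‖line‖ :=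
        ContinuousMultilinearMap.norm_compContinuousLinearMap_le _ _
    _ ≤ M * max 1 ‖v‖ ^ k := by
        rw [Finset.prod_const, Finset.card_univ, Fintype.card_fin, hline]
        gcongr
        · exact htranslate.2 k hk _
        · exact le_max_right _ _
    _ ≤ M * max 1 ‖v‖ ^ n := by
        gcongr
        exact le_max_left _ _

theorem norm_iteratedDeriv_le {A : ℝ → ℂ} (hA : HasDerivBound n M A) {k : ℕ} (hk : k ≤ n)
    (y : ℝ) : ‖iteratedDeriv k A y‖ ≤ M := by
  rw [← norm_iteratedFDeriv_eq_norm_iteratedDeriv]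
  exact hA.2 k hk y

end HasDerivBound

theorem exists_hasDerivBound {n : ℕ} {F : V → ℂ} (hF : ContDiff ℝ n F)
    (hcpt : HasCompactSupport F) : ∃ M, HasDerivBound n M F := by
  have hbound (k : ℕ) : ∃ M, k ≤ n → ∀ p, ‖iteratedFDeriv ℝ k F p‖ ≤ M := by
    by_cases hk : k ≤ n
    · obtain ⟨M, hM⟩ := (hcpt.iteratedFDeriv (𝕜 := ℝ) k).exists_bound_of_continuous
        (hF.continuous_iteratedFDeriv (by exact_mod_cast hk))
      exact ⟨M, fun _ => hM⟩
    · exact ⟨0, fun hk' => absurd hk' hk⟩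
  choose M hM using hbound
  refine ⟨∑ k ∈ Finset.range (n + 1), |M k|, hF, fun k hk p => ?_⟩
  calc ‖iteratedFDeriv ℝ k F p‖ ≤ |M k| := (hM k hk p).trans (le_abs_self _)
    _ ≤ ∑ k ∈ Finset.range (n + 1), |M k| :=
      Finset.single_le_sum (f := fun k => |M k|) (fun _ _ => abs_nonneg _) (by grind)

end HasDerivBound

/-! ### Nonstationary phase -/

section NonstationaryPhase

theorem contDiff_div_ofReal {n : WithTop ℕ∞} {A : ℝ → ℂ} {φ : ℝ → ℝ} (hA : ContDiff ℝ n A)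
    (hφ : ContDiff ℝ n φ) (hne : ∀ y ∈ tsupport A, φ y ≠ 0) :
    ContDiff ℝ n (fun y => A y / (φ y : ℂ)) := by
  refine contDiff_iff_contDiffAt.mpr fun y => ?_
  by_cases hy : y ∈ tsupport A
  · simp_rw [div_eq_mul_inv]
    exact hA.contDiffAt.mul ((Complex.ofRealCLM.contDiff.comp hφ).contDiffAt.inv
      (Complex.ofReal_ne_zero.mpr (hne y hy)))
  · refine contDiffAt_const (c := (0 : ℂ)) |>.congr_of_eventuallyEq ?_
    filter_upwards [notMem_tsupport_iff_eventuallyEq.mp hy] with z hz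
    simp [hz]

/-- The operator on amplitudes produced by integrating by parts against a phase whose derivative
is `φ`. -/
def ibpOp (φ : ℝ → ℝ) (A : ℝ → ℂ) : ℝ → ℂ := deriv fun y => A y / (φ y : ℂ)

theorem tsupport_ibpOp_subset (φ : ℝ → ℝ) (A : ℝ → ℂ) : tsupport (ibpOp φ A) ⊆ tsupport A :=
  (tsupport_deriv_subset).trans (closure_mono fun y hy hAy => hy (by simp [hAy]))

theorem hasDerivAt_oscillate_div {A : ℝ → ℂ} {ψ : ℝ → ℝ} {y : ℝ} (lam : ℝ)
    (hψ : DifferentiableAt ℝ ψ y)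
    (hdivide : DifferentiableAt ℝ (fun y => A y / ((deriv ψ y : ℝ) : ℂ)) y)
    (hne : y ∈ tsupport A → deriv ψ y ≠ 0) :
    HasDerivAt (oscillate lam ψ fun y => A y / ((deriv ψ y : ℝ) : ℂ))
      (Complex.I * lam * oscillate lam ψ A y + oscillate lam ψ (ibpOp (deriv ψ) A) y) y := by
  have hcancel : A y / ((deriv ψ y : ℝ) : ℂ) * deriv ψ y = A y := by
    by_cases hy : y ∈ tsupport A
    · exact div_mul_cancel₀ _ (Complex.ofReal_ne_zero.mpr (hne hy))
    · simp [image_eq_zero_of_notMem_tsupport hy]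
  refine ((hψ.hasDerivAt.ofReal_comp.const_mul (Complex.I * lam)).cexp.fun_mul
    hdivide.hasDerivAt).congr_deriv ?_
  simp only [oscillate, ibpOp]
  linear_combination Complex.I * lam * Complex.exp (Complex.I * lam * ψ y) * hcancel

theorem integral_oscillate_ibp {A : ℝ → ℂ} {ψ : ℝ → ℝ} (hA : ContDiff ℝ 1 A)
    (hψ : ContDiff ℝ 2 ψ) (hcpt : HasCompactSupport A) (hne : ∀ y ∈ tsupport A, deriv ψ y ≠ 0)
    (lam : ℝ) :
    Complex.I * lam * ∫ y, oscillate lam ψ A y =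
      -∫ y, oscillate lam ψ (ibpOp (deriv ψ) A) y := by
  have hdivide : ContDiff ℝ 1 (fun y => A y / ((deriv ψ y : ℝ) : ℂ)) :=
    contDiff_div_ofReal hA (hψ.deriv' (n := 1)) hne
  have hint {B : ℝ → ℂ} (hB : Continuous B) (hBcpt : HasCompactSupport B) :
      Integrable (oscillate lam ψ B) :=
    (continuous_oscillate lam hψ.continuous hB).integrable_of_hasCompactSupport hBcpt.mul_left
  have hintA := (hint hA.continuous hcpt).const_mul (Complex.I * lam)
  have hintT := hint (B := ibpOp (deriv ψ) A) (hdivide.continuous_deriv le_rfl)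
    (hcpt.of_isClosed_subset (isClosed_tsupport _) (tsupport_ibpOp_subset _ _))
  have hzero := integral_eq_zero_of_hasDerivAt_of_integrable
    (fun y => hasDerivAt_oscillate_div lam (hψ.differentiable two_ne_zero y)
      (hdivide.differentiable one_ne_zero y) (hne y))
    (hintA.add hintT) (hint hdivide.continuous (hcpt.mono fun y hy hAy => hy (by simp [hAy])))
  rw [integral_add hintA hintT, integral_const_mul] at hzero
  exact eq_neg_of_add_eq_zero_left hzero

theorem sq_mul_integral_oscillate {A : ℝ → ℂ} {ψ : ℝ → ℝ} (hA : ContDiff ℝ 2 A)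
    (hψ : ContDiff ℝ 3 ψ) (hcpt : HasCompactSupport A) (hne : ∀ y ∈ tsupport A, deriv ψ y ≠ 0)
    (lam : ℝ) :
    (lam : ℂ) ^ 2 * ∫ y, oscillate lam ψ A y =
      -∫ y, oscillate lam ψ (ibpOp (deriv ψ) (ibpOp (deriv ψ) A)) y := by
  have hψ₂ : ContDiff ℝ 2 ψ := hψ.of_le (by norm_num)
  have hψ' : ContDiff ℝ 2 (deriv ψ) := hψ.deriv'
  have hT : ContDiff ℝ 1 (ibpOp (deriv ψ) A) := (contDiff_div_ofReal hA hψ' hne).deriv'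
  have hTsupp := tsupport_ibpOp_subset (deriv ψ) A
  have hfirst := integral_oscillate_ibp (hA.of_le (by norm_num)) hψ₂ hcpt hne lam
  have hsecond := integral_oscillate_ibp hT hψ₂
    (hcpt.of_isClosed_subset (isClosed_tsupport _) hTsupp) (fun y hy => hne y (hTsupp hy)) lam
  linear_combination (-Complex.I * lam) * hfirst + hsecond
    + (lam : ℂ) ^ 2 * (∫ y, oscillate lam ψ A y) * Complex.I_sq

theorem ibpOp_ibpOp_apply {A : ℝ → ℂ} {φ : ℝ → ℝ} (hA : ContDiff ℝ 2 A) (hφ : ContDiff ℝ 2 φ)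
    {y : ℝ} (hy : φ y ≠ 0) :
    ibpOp φ (ibpOp φ A) y =
      (deriv (deriv A) y - A y * (deriv (deriv φ) y / φ y : ℝ)
        - 3 * deriv A y * (deriv φ y / φ y : ℝ) + 3 * A y * (deriv φ y / φ y : ℝ) ^ 2)
        / (φ y : ℂ) ^ 2 := by
  have hA₁ (z : ℝ) := (hA.differentiable (by norm_num) z).hasDerivAt
  have hA₂ := ((hA.deriv' (n := 1)).differentiable (by norm_num) y).hasDerivAt
  have hφ₁ (z : ℝ) := (hφ.differentiable (by norm_num) z).hasDerivAt.ofReal_comp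
  have hφ₂ := ((hφ.deriv' (n := 1)).differentiable (by norm_num) y).hasDerivAt.ofReal_comp
  have hinner : (fun z => ibpOp φ A z / (φ z : ℂ)) =ᶠ[nhds y]
      fun z => (deriv A z * φ z - A z * deriv φ z) / (φ z : ℂ) ^ 3 := by
    filter_upwards [hφ.continuous.continuousAt.eventually_ne hy] with z hz
    have hz' : (φ z : ℂ) ≠ 0 := Complex.ofReal_ne_zero.mpr hz
    rw [ibpOp, ((hA₁ z).fun_div (hφ₁ z) hz').deriv]
    field_simp
  have hy' : (φ y : ℂ) ≠ 0 := Complex.ofReal_ne_zero.mpr hy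
  have houter := (((hA₂.mul (hφ₁ y)).sub ((hA₁ y).mul hφ₂)).div ((hφ₁ y).pow 3)
    (pow_ne_zero 3 hy')).congr_of_eventuallyEq hinner
  rw [ibpOp, houter.deriv]
  simp only [Pi.mul_apply, Pi.sub_apply, Pi.pow_apply]
  push_cast
  field_simp
  ring

theorem norm_ibpOp_ibpOp_le {A : ℝ → ℂ} {φ : ℝ → ℝ} {M Q m y : ℝ} (hA : HasDerivBound 2 M A)
    (hφ : ContDiff ℝ 2 φ) (hQ : 0 ≤ Q) (hm : 0 < m) (hφ₀ : m ≤ |φ y|) (hφ₁ : |deriv φ y| ≤ Q * m)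
    (hφ₂ : |deriv (deriv φ) y| ≤ Q * m) :
    ‖ibpOp φ (ibpOp φ A) y‖ ≤ M * (1 + 4 * Q + 3 * Q ^ 2) / m ^ 2 := by
  have hφpos : 0 < |φ y| := hm.trans_le hφ₀
  have hM := hA.bound_nonneg
  have hratio {x : ℝ} (hx : |x| ≤ Q * m) : ‖((x / φ y : ℝ) : ℂ)‖ ≤ Q := by
    rw [Complex.norm_real, Real.norm_eq_abs, abs_div, div_le_iff₀ hφpos]
    exact hx.trans (by gcongr)
  have hr₁ := hratio hφ₁
  have hr₂ := hratio hφ₂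
  have hA₀ : ‖A y‖ ≤ M := by simpa using hA.norm_iteratedDeriv_le (k := 0) (by norm_num) y
  have hA₁ : ‖deriv A y‖ ≤ M := by simpa using hA.norm_iteratedDeriv_le (k := 1) (by norm_num) y
  have hA₂ : ‖deriv (deriv A) y‖ ≤ M := by
    simpa [iteratedDeriv_succ] using hA.norm_iteratedDeriv_le (k := 2) le_rfl y
  rw [ibpOp_ibpOp_apply hA.1 hφ (abs_pos.mp hφpos), norm_div, norm_pow, Complex.norm_real,
    Real.norm_eq_abs]
  gcongr
  calc _ ≤ ‖deriv (deriv A) y‖ + ‖A y‖ * ‖((deriv (deriv φ) y / φ y : ℝ) : ℂ)‖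
        + 3 * ‖deriv A y‖ * ‖((deriv φ y / φ y : ℝ) : ℂ)‖
        + 3 * ‖A y‖ * ‖((deriv φ y / φ y : ℝ) : ℂ)‖ ^ 2 := by
        refine (norm_add_le _ _).trans (add_le_add ((norm_sub_le _ _).trans
          (add_le_add ((norm_sub_le _ _).trans_eq ?_) ?_)) ?_) <;> simp
    _ ≤ M + M * Q + 3 * M * Q + 3 * M * Q ^ 2 := by gcongr
    _ = M * (1 + 4 * Q + 3 * Q ^ 2) := by ring

theorem norm_integral_oscillate_le_mul {A : ℝ → ℂ} {M R y₀ : ℝ} (lam : ℝ) (ψ : ℝ → ℝ)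
    (hR : 0 ≤ R) (hsupp : tsupport A ⊆ Metric.closedBall y₀ R) (hA : ∀ y, ‖A y‖ ≤ M) :
    ‖∫ y, oscillate lam ψ A y‖ ≤ M * (2 * R) := by
  rw [← setIntegral_eq_integral_of_forall_compl_eq_zero (s := Metric.closedBall y₀ R)
    fun y hy => by
      simp [oscillate, image_eq_zero_of_notMem_tsupport fun hy' => hy (hsupp hy')],
    ← Real.volume_real_closedBall hR]
  exact norm_setIntegral_le_of_norm_le_const measure_closedBall_lt_top fun y _ =>
    (norm_oscillate lam ψ A y).trans_le (hA y)

theorem norm_integral_oscillate_le_div {A : ℝ → ℂ} {ψ : ℝ → ℝ} {M Q m R y₀ lam : ℝ}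
    (hA : HasDerivBound 2 M A) (hψ : ContDiff ℝ 3 ψ) (hR : 0 ≤ R)
    (hsupp : tsupport A ⊆ Metric.closedBall y₀ R) (hQ : 0 ≤ Q) (hm : 0 < m) (hlam : lam ≠ 0)
    (hψ₁ : ∀ y ∈ tsupport A, m ≤ |deriv ψ y|)
    (hψ₂ : ∀ y ∈ tsupport A, |deriv (deriv ψ) y| ≤ Q * m)
    (hψ₃ : ∀ y ∈ tsupport A, |deriv (deriv (deriv ψ)) y| ≤ Q * m) :
    ‖∫ y, oscillate lam ψ A y‖ ≤ 2 * R * (M * (1 + 4 * Q + 3 * Q ^ 2)) / (lam * m) ^ 2 := by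
  set TTA := ibpOp (deriv ψ) (ibpOp (deriv ψ) A)
  have hcpt : HasCompactSupport A :=
    (isCompact_closedBall y₀ R).of_isClosed_subset (isClosed_tsupport _) hsupp
  have hTTA : tsupport TTA ⊆ tsupport A :=
    (tsupport_ibpOp_subset _ _).trans (tsupport_ibpOp_subset _ _)
  have hpointwise (y : ℝ) : ‖TTA y‖ ≤ M * (1 + 4 * Q + 3 * Q ^ 2) / m ^ 2 := by
    by_cases hy : y ∈ tsupport A
    · exact norm_ibpOp_ibpOp_le hA hψ.deriv' hQ hm (hψ₁ y hy) (hψ₂ y hy) (hψ₃ y hy)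
    · have hM := hA.bound_nonneg
      rw [image_eq_zero_of_notMem_tsupport fun hy' => hy (hTTA hy'), norm_zero]
      positivity
  have hbound := norm_integral_oscillate_le_mul lam ψ hR (hTTA.trans hsupp) hpointwise
  have htwice := congrArg norm (sq_mul_integral_oscillate hA.1 hψ hcpt
    (fun y hy => abs_pos.mp (hm.trans_le (hψ₁ y hy))) lam)
  rw [norm_mul, norm_neg, norm_pow, Complex.norm_real, Real.norm_eq_abs, sq_abs] at htwice
  calc ‖∫ y, oscillate lam ψ A y‖
      ≤ M * (1 + 4 * Q + 3 * Q ^ 2) / m ^ 2 * (2 * R) / lam ^ 2 := by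
        rw [le_div_iff₀ (by positivity), mul_comm, htwice]; exact hbound
    _ = 2 * R * (M * (1 + 4 * Q + 3 * Q ^ 2)) / (lam * m) ^ 2 := by ring

end NonstationaryPhase

/-! ### Decay of the twice differenced kernel -/

section KernelDecay

variable {V : Type*} [NormedAddCommGroup V] [NormedSpace ℝ V]

theorem contDiff_fwdDiff {n : WithTop ℕ∞} {F : V → ℝ} (hF : ContDiff ℝ n F) (v : V) :
    ContDiff ℝ n (fwdDiff v F) :=
  (hF.comp (contDiff_id.add contDiff_const)).sub hF

theorem deriv_fwdDiff_fwdDiff_comp_add_smul {F : V → ℝ} (hF : ContDiff ℝ 1 F) (p u v w : V) :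
    deriv (fun y : ℝ => fwdDiff u (fwdDiff v F) (p + y • w)) =
      fun y => fwdDiff u (fwdDiff v (dirDeriv w F)) (p + y • w) := by
  have hdiff := (contDiff_fwdDiff hF v).differentiable one_ne_zero
  rw [deriv_comp_add_smul ((contDiff_fwdDiff (contDiff_fwdDiff hF v) u).differentiable one_ne_zero),
    dirDeriv_fwdDiff hdiff, dirDeriv_fwdDiff (hF.differentiable one_ne_zero)]

theorem exists_fwdDiff_fwdDiff_smul_eq {F : V → ℝ} (hF : ContDiff ℝ 2 F) {a : V → ℂ} {v w q : V}
    {s t : ℝ} (hq : q ∈ tsupport (mulDiff (s • w) (mulDiff (t • v) a))) :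
    ∃ ξ ∈ convexHull ℝ (tsupport a),
      fwdDiff (s • w) (fwdDiff (t • v) F) q = t * s * dirDeriv v (dirDeriv w F) ξ := by
  obtain ⟨hq₀, hq₁⟩ := mem_tsupport_of_mem_tsupport_mulDiff hq
  obtain ⟨h₀₀, h₀₁⟩ := mem_tsupport_of_mem_tsupport_mulDiff hq₀
  obtain ⟨h₁₀, h₁₁⟩ := mem_tsupport_of_mem_tsupport_mulDiff hq₁
  have hsub := subset_convexHull ℝ (tsupport a)
  obtain ⟨ξ, hξ, heq⟩ := exists_fwdDiff_fwdDiff_eq_dirDeriv_dirDeriv hF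
    (convex_convexHull ℝ (tsupport a)) (hsub h₀₀) (hsub h₀₁) (hsub h₁₀) (hsub h₁₁)
  refine ⟨ξ, hξ, ?_⟩
  rw [heq, dirDeriv_smul_left, dirDeriv_smul_left, dirDeriv_smul_right]
  simp only [Pi.smul_apply, smul_eq_mul]
  ring

theorem exists_line_preimage_subset_closedBall {B : Set V} (hB : Bornology.IsBounded B) {v : V}
    (hv : v ≠ 0) :
    ∃ R, 0 ≤ R ∧ ∀ p : V, ∃ y₀ : ℝ, ∀ y : ℝ, p + y • v ∈ B → y ∈ Metric.closedBall y₀ R := by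
  refine ⟨Metric.diam B / ‖v‖, by positivity, fun p => ?_⟩
  by_cases hmeet : ∃ y₀ : ℝ, p + y₀ • v ∈ B
  · obtain ⟨y₀, hy₀⟩ := hmeet
    refine ⟨y₀, fun y hy => ?_⟩
    have hdist : ‖(p + y • v) - (p + y₀ • v)‖ ≤ Metric.diam B := by
      rw [← dist_eq_norm]; exact Metric.dist_le_diam_of_mem hB hy hy₀
    rw [add_sub_add_left_eq_sub, ← sub_smul, norm_smul] at hdist
    rwa [Metric.mem_closedBall, dist_eq_norm, le_div_iff₀ (norm_pos_iff.mpr hv)]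
  · exact ⟨0, fun y hy => absurd ⟨y, hy⟩ hmeet⟩

/-- The restriction of the double multiplicative difference of `F` in the directions `t • v₁` and
`s • v₂` to the line through `p` in the direction `v₃`: the integrand left once two functions have
been removed by Cauchy-Schwarz. -/
def diffOnLine (v₁ v₂ v₃ : V) (t s : ℝ) (p : V) (F : V → ℂ) : ℝ → ℂ :=
  fun y => mulDiff (s • v₂) (mulDiff (t • v₁) F) (p + y • v₃)

theorem diffOnLine_oscillate (v₁ v₂ v₃ : V) (t s : ℝ) (p : V) (lam : ℝ) (S : V → ℝ) (a : V → ℂ) :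
    diffOnLine v₁ v₂ v₃ t s p (oscillate lam S a) =
      oscillate lam (fun y => fwdDiff (s • v₂) (fwdDiff (t • v₁) S) (p + y • v₃))
        (diffOnLine v₁ v₂ v₃ t s p a) := by
  unfold diffOnLine
  rw [mulDiff_oscillate, mulDiff_oscillate]
  rfl

variable {v₁ v₂ v₃ p : V} {a : V → ℂ} {S : V → ℝ}

theorem mem_tsupport_mulDiff_of_mem_tsupport_diffOnLine {t s y : ℝ}
    (hy : y ∈ tsupport (diffOnLine v₁ v₂ v₃ t s p a)) :
    p + y • v₃ ∈ tsupport (mulDiff (s • v₂) (mulDiff (t • v₁) a)) :=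
  tsupport_comp_subset_preimage (mulDiff (s • v₂) (mulDiff (t • v₁) a))
    (f := fun y : ℝ => p + y • v₃) (by fun_prop) hy

theorem norm_integral_diffOnLine_oscillate_le {c Q R M lam t s y₀ : ℝ} (hS : ContDiff ℝ 5 S)
    (hM : HasDerivBound 2 M (diffOnLine v₁ v₂ v₃ t s p a)) (hc : 0 < c) (hQ : 0 ≤ Q)
    (hR : 0 ≤ R) (hsupp : tsupport (diffOnLine v₁ v₂ v₃ t s p a) ⊆ Metric.closedBall y₀ R)
    (hS₁ : ∀ q ∈ convexHull ℝ (tsupport a), c ≤ |dirDeriv v₁ (dirDeriv v₂ (dirDeriv v₃ S)) q|)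
    (hS₂ : ∀ q ∈ convexHull ℝ (tsupport a),
      |dirDeriv v₁ (dirDeriv v₂ (dirDeriv v₃ (dirDeriv v₃ S))) q| ≤ Q * c)
    (hS₃ : ∀ q ∈ convexHull ℝ (tsupport a),
      |dirDeriv v₁ (dirDeriv v₂ (dirDeriv v₃ (dirDeriv v₃ (dirDeriv v₃ S)))) q| ≤ Q * c)
    (hlam : lam ≠ 0) (hts : t * s ≠ 0) :
    ‖∫ y, diffOnLine v₁ v₂ v₃ t s p (oscillate lam S a) y‖ ≤
      2 * R * (M * (1 + 4 * Q + 3 * Q ^ 2)) / (lam * (|t * s| * c)) ^ 2 := by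
  have hD₁ : ContDiff ℝ 4 (dirDeriv v₃ S) := contDiff_dirDeriv hS (by norm_num) v₃
  have hD₂ : ContDiff ℝ 3 (dirDeriv v₃ (dirDeriv v₃ S)) := contDiff_dirDeriv hD₁ (by norm_num) v₃
  have hD₃ : ContDiff ℝ 2 (dirDeriv v₃ (dirDeriv v₃ (dirDeriv v₃ S))) :=
    contDiff_dirDeriv hD₂ (by norm_num) v₃
  have hphase₁ := deriv_fwdDiff_fwdDiff_comp_add_smul (hS.of_le (by norm_num)) p (s • v₂)
    (t • v₁) v₃
  have hphase₂ := deriv_fwdDiff_fwdDiff_comp_add_smul (hD₁.of_le (by norm_num)) p (s • v₂)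
    (t • v₁) v₃
  have hphase₃ := deriv_fwdDiff_fwdDiff_comp_add_smul (hD₂.of_le (by norm_num)) p (s • v₂)
    (t • v₁) v₃
  rw [diffOnLine_oscillate]
  refine norm_integral_oscillate_le_div hM ?_ hR hsupp hQ
    (mul_pos (abs_pos.mpr hts) hc) hlam ?_ ?_ ?_
  · exact (contDiff_fwdDiff (contDiff_fwdDiff (hS.of_le (by norm_num)) _) _).comp
      (contDiff_const.add (contDiff_id.smul contDiff_const))
  all_goals
    intro y hy
    have hy' := mem_tsupport_mulDiff_of_mem_tsupport_diffOnLine hy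
  · obtain ⟨ξ, hξ, heq⟩ := exists_fwdDiff_fwdDiff_smul_eq (hD₁.of_le (by norm_num)) hy'
    simp only [hphase₁, heq, abs_mul]
    gcongr
    exact hS₁ ξ hξ
  · obtain ⟨ξ, hξ, heq⟩ := exists_fwdDiff_fwdDiff_smul_eq (hD₂.of_le (by norm_num)) hy'
    simp only [hphase₁, hphase₂, heq, abs_mul]
    rw [mul_left_comm]
    gcongr
    exact hS₂ ξ hξ
  · obtain ⟨ξ, hξ, heq⟩ := exists_fwdDiff_fwdDiff_smul_eq hD₃ hy'
    simp only [hphase₁, hphase₂, hphase₃, heq, abs_mul]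
    rw [mul_left_comm]
    gcongr
    exact hS₃ ξ hξ

theorem le_mul_inv_one_add_sq {b x T D : ℝ} (hT : b ≤ T) (hD : b * x ^ 2 ≤ D) :
    b ≤ (T + D) * (1 + x ^ 2)⁻¹ := by
  rw [← div_eq_mul_inv, le_div_iff₀ (by positivity)]
  linarith

theorem div_mul_abs_sq_mul_sq {lam t s : ℝ} (hne : lam * (t * s) ≠ 0) (B c : ℝ) :
    B / (lam * (|t * s| * c)) ^ 2 * (lam * t * s) ^ 2 = B / c ^ 2 := by
  have hsq : (lam * (|t * s| * c)) ^ 2 = c ^ 2 * (lam * t * s) ^ 2 := by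
    rw [mul_pow, mul_pow, sq_abs]; ring
  rw [hsq, ← div_div, div_mul_cancel₀]
  rw [mul_assoc]
  exact pow_ne_zero 2 hne

theorem exists_abs_dirDeriv_dirDeriv_le [ProperSpace V] {K : Set V} (hK : Bornology.IsBounded K)
    {F : V → ℝ} (hF : ContDiff ℝ 2 F) (v w : V) :
    ∃ Q, ∀ q ∈ K, |dirDeriv v (dirDeriv w F) q| ≤ Q := by
  have hcont : Continuous (dirDeriv v (dirDeriv w F)) :=
    (contDiff_dirDeriv (m := 0) (contDiff_dirDeriv (m := 1) hF (by norm_num) w)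
      (by norm_num) v).continuous
  obtain ⟨Q, hQ⟩ := hK.isCompact_closure.exists_bound_of_continuousOn hcont.continuousOn
  exact ⟨Q, fun q hq => hQ q (subset_closure hq)⟩

theorem exists_norm_integral_diffOnLine_oscillate_le [ProperSpace V] {c : ℝ}
    (ha : ContDiff ℝ 2 a) (hcpt : HasCompactSupport a) (hS : ContDiff ℝ 5 S) (hv₃ : v₃ ≠ 0)
    (hc : 0 < c)
    (hnd : ∀ q ∈ convexHull ℝ (tsupport a), c ≤ |dirDeriv v₁ (dirDeriv v₂ (dirDeriv v₃ S)) q|) :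
    ∃ C, ∀ lam : ℝ, lam ≠ 0 → ∀ (t s : ℝ) (p : V),
      ‖∫ y, diffOnLine v₁ v₂ v₃ t s p (oscillate lam S a) y‖ ≤
        C * (1 + (lam * t * s) ^ 2)⁻¹ := by
  obtain ⟨M, hM⟩ := exists_hasDerivBound (n := 2) ha hcpt
  obtain ⟨R, hR, hline⟩ := exists_line_preimage_subset_closedBall hcpt.isBounded hv₃
  have hD₂ : ContDiff ℝ 3 (dirDeriv v₃ (dirDeriv v₃ S)) :=
    contDiff_dirDeriv (contDiff_dirDeriv (m := 4) hS (by norm_num) v₃) (by norm_num) v₃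
  have hhull := isBounded_convexHull.mpr hcpt.isBounded
  obtain ⟨Q₂, hQ₂⟩ := exists_abs_dirDeriv_dirDeriv_le hhull (hD₂.of_le (by norm_num)) v₁ v₂
  obtain ⟨Q₃, hQ₃⟩ := exists_abs_dirDeriv_dirDeriv_le hhull
    (contDiff_dirDeriv hD₂ (by norm_num) v₃) v₁ v₂
  set Q := max |Q₂| |Q₃| / c
  have hQ : 0 ≤ Q := by positivity
  have hQc : max |Q₂| |Q₃| = Q * c := (div_mul_cancel₀ _ hc.ne').symm
  set N := 2 ^ 2 * (2 ^ 2 * (M * M) * (2 ^ 2 * (M * M))) * max 1 ‖v₃‖ ^ 2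
  refine ⟨N * (2 * R) + 2 * R * (N * (1 + 4 * Q + 3 * Q ^ 2)) / c ^ 2, fun lam hlam t s p => ?_⟩
  have hN : HasDerivBound 2 N (diffOnLine v₁ v₂ v₃ t s p a) :=
    ((hM.mulDiff _).mulDiff _).comp_add_smul p v₃
  have hN₀ := hN.bound_nonneg
  obtain ⟨y₀, hy₀⟩ := hline p
  have hsupp : tsupport (diffOnLine v₁ v₂ v₃ t s p a) ⊆ Metric.closedBall y₀ R := fun y hy =>
    hy₀ y (mem_tsupport_of_mem_tsupport_mulDiff (mem_tsupport_of_mem_tsupport_mulDiff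
      (mem_tsupport_mulDiff_of_mem_tsupport_diffOnLine hy)).1).1
  refine le_mul_inv_one_add_sq ?_ ?_
  · rw [diffOnLine_oscillate]
    exact norm_integral_oscillate_le_mul lam _ hR hsupp fun y => by
      simpa using hN.norm_iteratedDeriv_le (k := 0) (by norm_num) y
  · rcases eq_or_ne (t * s) 0 with hts | hts
    · rw [mul_assoc lam, hts, mul_zero, zero_pow two_ne_zero, mul_zero]
      positivity
    · rw [← div_mul_abs_sq_mul_sq (mul_ne_zero hlam hts)]
      gcongr
      exact norm_integral_diffOnLine_oscillate_le hS hN hc hQ hR hsupp hnd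
        (fun q hq => (hQ₂ q hq).trans ((le_abs_self _).trans (hQc ▸ le_max_left _ _)))
        (fun q hq => (hQ₃ q hq).trans ((le_abs_self _).trans (hQc ▸ le_max_right _ _))) hlam hts

end KernelDecay

/-! ### Autocorrelations and bilinear forms on `L²` -/

section Autocorrelation

theorem norm_integral_mul_sq_le {α 𝕜 : Type*} [RCLike 𝕜] [MeasurableSpace α] {μ : Measure α}
    {f g : α → 𝕜} (hf : MemLp f 2 μ) (hg : MemLp g 2 μ) :
    ‖∫ x, f x * g x ∂μ‖ ^ 2 ≤ (∫ x, ‖f x‖ ^ 2 ∂μ) * ∫ x, ‖g x‖ ^ 2 ∂μ := by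
  have hholder := integral_mul_norm_le_Lp_mul_Lq (μ := μ) Real.HolderConjugate.two_two
    (by simpa using hf) (by simpa using hg)
  simp only [Real.rpow_two, ← Real.sqrt_eq_rpow] at hholder
  have hnorm : ‖∫ x, f x * g x ∂μ‖ ≤ ∫ x, ‖f x‖ * ‖g x‖ ∂μ := by
    simpa only [norm_mul] using norm_integral_le_integral_norm (μ := μ) (fun x => f x * g x)
  refine (pow_le_pow_left₀ (norm_nonneg _) (hnorm.trans hholder) 2).trans_eq ?_
  rw [mul_pow, Real.sq_sqrt (integral_nonneg fun _ => by positivity),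
    Real.sq_sqrt (integral_nonneg fun _ => by positivity)]

theorem lintegral_enorm_sq_ne_top {α F : Type*} [MeasurableSpace α] [NormedAddCommGroup F]
    {μ : Measure α} {f : α → F} (hf : MemLp f 2 μ) : ∫⁻ x, ‖f x‖ₑ ^ 2 ∂μ ≠ ⊤ := by
  have hlt := (eLpNorm_lt_top_iff_lintegral_rpow_enorm_lt_top two_ne_zero
    ENNReal.ofNat_ne_top).mp hf.2
  simpa only [ENNReal.toReal_ofNat, ENNReal.rpow_two] using hlt.ne

theorem lintegral_sq_lintegral_mul_ne_top {α β : Type*} [MeasurableSpace α] [MeasurableSpace β]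
    {μ : Measure α} {ν : Measure β} [SFinite ν] {E H : α → β → ℂ}
    (hE : StronglyMeasurable (Function.uncurry E)) (hE2 : MemLp (Function.uncurry E) 2 (μ.prod ν))
    (hH : StronglyMeasurable (Function.uncurry H)) {c : ENNReal} (hc : c ≠ ⊤)
    (hHc : ∀ x, ∫⁻ y, ‖H x y‖ₑ ^ 2 ∂ν ≤ c) :
    ∫⁻ x, (∫⁻ y, ‖E x y * H x y‖ₑ ∂ν) ^ 2 ∂μ ≠ ⊤ := by
  have hslice (x : α) :
      (∫⁻ y, ‖E x y * H x y‖ₑ ∂ν) ^ 2 ≤ (∫⁻ y, ‖E x y‖ₑ ^ 2 ∂ν) * c := by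
    have hholder := ENNReal.lintegral_mul_le_Lp_mul_Lq ν Real.HolderConjugate.two_two
      (hE.comp_measurable (measurable_prodMk_left (x := x))).enorm.aemeasurable
      (hH.comp_measurable (measurable_prodMk_left (x := x))).enorm.aemeasurable
    simp_rw [enorm_mul]
    refine (pow_le_pow_left' hholder 2).trans ?_
    simp only [mul_pow, ENNReal.rpow_two, ← ENNReal.rpow_mul_natCast]
    norm_num
    gcongr
    exact hHc x
  have hE2' : ∫⁻ x, ∫⁻ y, ‖E x y‖ₑ ^ 2 ∂ν ∂μ ≠ ⊤ := by
    have hne := lintegral_enorm_sq_ne_top hE2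
    rwa [lintegral_prod _ (hE.enorm.pow_const 2).aemeasurable] at hne
  refine ne_top_of_le_ne_top (ENNReal.mul_ne_top hE2' hc) ((lintegral_mono hslice).trans_eq ?_)
  exact lintegral_mul_const _ (hE.enorm.pow_const 2).lintegral_prod_right'

variable {G : Type*} [MeasurableSpace G] [AddCommGroup G] [MeasurableAdd₂ G] {ν : Measure G}
  [ν.IsAddLeftInvariant]

theorem integrable_mulDiff {F : G → ℂ} (hF : MemLp F 2 ν) (s : G) :
    Integrable (mulDiff s F) ν :=
  (hF.comp_measurePreserving (measurePreserving_add_right ν s)).integrable_mul hF.star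

theorem integral_norm_mulDiff_le {F : G → ℂ} (hF : MemLp F 2 ν) (s : G) :
    ∫ z, ‖mulDiff s F z‖ ∂ν ≤ ∫ z, ‖F z‖ ^ 2 ∂ν := by
  have hshift := hF.comp_measurePreserving (measurePreserving_add_right ν s)
  have hcs := norm_integral_mul_sq_le hshift.norm hF.norm
  have htrans : ∫ z, ‖F (z + s)‖ ^ 2 ∂ν = ∫ z, ‖F z‖ ^ 2 ∂ν :=
    integral_add_right_eq_self (fun z => ‖F z‖ ^ 2) s
  simp only [Function.comp_apply, norm_norm, htrans, ← sq] at hcs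
  have hnorm (z : G) : ‖mulDiff s F z‖ = ‖F (z + s)‖ * ‖F z‖ := by
    rw [mulDiff, norm_mul, RCLike.norm_conj]
  simp_rw [hnorm]
  exact (le_abs_self _).trans
    (abs_le_of_sq_le_sq' hcs (integral_nonneg fun _ => by positivity)).2

variable {X : Type*} [MeasurableSpace X] {μ : Measure X} [SFinite ν] {K : X → G → ℂ}

theorem integrable_autocorrelation (hK : StronglyMeasurable (Function.uncurry K))
    (hfin : ∫⁻ x, (∫⁻ y, ‖K x y‖ₑ ∂ν) ^ 2 ∂μ ≠ ⊤) :
    Integrable (fun p : (X × G) × G => mulDiff p.2 (K p.1.1) p.1.2) ((μ.prod ν).prod ν) := by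
  have hmeas : StronglyMeasurable fun p : (X × G) × G => mulDiff p.2 (K p.1.1) p.1.2 :=
    (hK.comp_measurable (g := fun p : (X × G) × G => (p.1.1, p.1.2 + p.2)) (by fun_prop)).mul
      (Complex.continuous_conj.comp_stronglyMeasurable
        (hK.comp_measurable (g := fun p : (X × G) × G => p.1) (by fun_prop)))
  refine ⟨hmeas.aestronglyMeasurable, ?_⟩
  have hsq : ∫⁻ p, ‖mulDiff p.2 (K p.1.1) p.1.2‖ₑ ∂((μ.prod ν).prod ν) =
      ∫⁻ x, (∫⁻ y, ‖K x y‖ₑ ∂ν) ^ 2 ∂μ := by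
    have hKx (x : X) : Measurable fun y => ‖K x y‖ₑ :=
      (hK.comp_measurable measurable_prodMk_left).enorm
    have hinner (p : X × G) : ∫⁻ t, ‖mulDiff t (K p.1) p.2‖ₑ ∂ν =
        (∫⁻ y, ‖K p.1 y‖ₑ ∂ν) * ‖K p.1 p.2‖ₑ := by
      simp_rw [mulDiff, enorm_mul, RCLike.enorm_conj]
      have hshift : Measurable fun t => ‖K p.1 (p.2 + t)‖ₑ :=
        (hKx p.1).comp (measurable_const_add p.2)
      rw [lintegral_mul_const _ hshift, lintegral_add_left_eq_self (fun y => ‖K p.1 y‖ₑ)]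
    have hinner_meas : Measurable fun p : X × G => (∫⁻ y, ‖K p.1 y‖ₑ ∂ν) * ‖K p.1 p.2‖ₑ :=
      (hK.enorm.lintegral_prod_right'.comp measurable_fst).mul hK.enorm
    rw [lintegral_prod _ hmeas.enorm.aemeasurable]
    simp_rw [hinner]
    rw [lintegral_prod _ hinner_meas.aemeasurable]
    simp_rw [lintegral_const_mul _ (hKx _), sq]
  rw [HasFiniteIntegral, hsq]
  exact hfin.lt_top

variable [SFinite μ]

theorem integrable_norm_sq_integral_and_integral_eq (hK : StronglyMeasurable (Function.uncurry K))
    (hfin : ∫⁻ x, (∫⁻ y, ‖K x y‖ₑ ∂ν) ^ 2 ∂μ ≠ ⊤) :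
    Integrable (fun x => ‖∫ y, K x y ∂ν‖ ^ 2) μ ∧
      ((∫ x, ‖∫ y, K x y ∂ν‖ ^ 2 ∂μ : ℝ) : ℂ) =
        ∫ t, ∫ p, mulDiff t (K p.1) p.2 ∂(μ.prod ν) ∂ν := by
  have hint := integrable_autocorrelation hK hfin
  have hinner (p : X × G) : ∫ t, mulDiff t (K p.1) p.2 ∂ν =
      (∫ y, K p.1 y ∂ν) * conj (K p.1 p.2) := by
    simp_rw [mulDiff]
    rw [integral_mul_const, integral_add_left_eq_self]
  have hslice (x : X) : ∫ y, (∫ z, K x z ∂ν) * conj (K x y) ∂ν =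
      ((‖∫ y, K x y ∂ν‖ ^ 2 : ℝ) : ℂ) := by
    rw [integral_const_mul, integral_conj, Complex.mul_conj']
    push_cast
    rfl
  have hprod : Integrable (fun p : X × G => (∫ y, K p.1 y ∂ν) * conj (K p.1 p.2))
      (μ.prod ν) := by
    simpa only [hinner] using hint.integral_prod_left
  have hsq : Integrable (fun x => ((‖∫ y, K x y ∂ν‖ ^ 2 : ℝ) : ℂ)) μ := by
    simpa only [hslice] using hprod.integral_prod_left
  refine ⟨hsq.re, ?_⟩
  rw [← integral_integral_swap (f := fun (p : X × G) t => mulDiff t (K p.1) p.2) hint]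
  simp_rw [hinner]
  rw [integral_prod _ hprod, ← integral_complex_ofReal]
  simp_rw [hslice]

theorem norm_integral_mul_sq_le_integral_autocorrelation {f : X → ℂ} (hf : MemLp f 2 μ)
    (hK : StronglyMeasurable (Function.uncurry K))
    (hfin : ∫⁻ x, (∫⁻ y, ‖K x y‖ₑ ∂ν) ^ 2 ∂μ ≠ ⊤) :
    ‖∫ p, f p.1 * K p.1 p.2 ∂(μ.prod ν)‖ ^ 2 ≤
      (∫ x, ‖f x‖ ^ 2 ∂μ) * ∫ t, ‖∫ p, mulDiff t (K p.1) p.2 ∂(μ.prod ν)‖ ∂ν := by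
  have hf0 : 0 ≤ ∫ x, ‖f x‖ ^ 2 ∂μ := integral_nonneg fun _ => by positivity
  by_cases hint : Integrable (fun p : X × G => f p.1 * K p.1 p.2) (μ.prod ν)
  swap
  · rw [integral_undef hint, norm_zero, zero_pow two_ne_zero]
    exact mul_nonneg hf0 (integral_nonneg fun _ => norm_nonneg _)
  obtain ⟨hsq, hautocorr⟩ := integrable_norm_sq_integral_and_integral_eq hK hfin
  have hmem : MemLp (fun x => ∫ y, K x y ∂ν) 2 μ :=
    (memLp_two_iff_integrable_sq_norm hK.integral_prod_right.aestronglyMeasurable).mpr hsq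
  calc ‖∫ p, f p.1 * K p.1 p.2 ∂(μ.prod ν)‖ ^ 2
      = ‖∫ x, f x * ∫ y, K x y ∂ν ∂μ‖ ^ 2 := by
        rw [integral_prod _ hint]
        simp_rw [integral_const_mul]
    _ ≤ (∫ x, ‖f x‖ ^ 2 ∂μ) * ∫ x, ‖∫ y, K x y ∂ν‖ ^ 2 ∂μ := norm_integral_mul_sq_le hf hmem
    _ = (∫ x, ‖f x‖ ^ 2 ∂μ) * ‖∫ t, ∫ p, mulDiff t (K p.1) p.2 ∂(μ.prod ν) ∂ν‖ := by
        rw [← hautocorr, Complex.norm_real,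
          Real.norm_of_nonneg (integral_nonneg fun _ => by positivity)]
    _ ≤ _ := by
        gcongr
        exact norm_integral_le_integral_norm _

theorem norm_integral_mulDiff_mul_le {E : X → G → ℂ} {B : G → ℂ} {j : ℝ} {s : G}
    (hB2 : MemLp B 2 ν) (hEj : ∀ z, ‖∫ x, mulDiff s (E x) z ∂μ‖ ≤ j) :
    ‖∫ p, mulDiff s (fun z => E p.1 z * B z) p.2 ∂(μ.prod ν)‖ ≤ j * ∫ z, ‖B z‖ ^ 2 ∂ν := by
  have hj0 : 0 ≤ j := (norm_nonneg _).trans (hEj 0)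
  have hB0 : 0 ≤ ∫ z, ‖B z‖ ^ 2 ∂ν := integral_nonneg fun _ => by positivity
  by_cases hint :
      Integrable (fun p : X × G => mulDiff s (fun z => E p.1 z * B z) p.2) (μ.prod ν)
  swap
  · rw [integral_undef hint, norm_zero]
    exact mul_nonneg hj0 hB0
  have hfactor (z : G) : ∫ x, mulDiff s (fun z => E x z * B z) z ∂μ =
      (∫ x, mulDiff s (E x) z ∂μ) * mulDiff s B z := by
    rw [← integral_mul_const]
    congr 1 with x
    simp only [mulDiff, map_mul]
    ring
  rw [integral_prod_symm _ hint]
  simp_rw [hfactor]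
  calc ‖∫ z, (∫ x, mulDiff s (E x) z ∂μ) * mulDiff s B z ∂ν‖
      ≤ ∫ z, j * ‖mulDiff s B z‖ ∂ν := by
        refine norm_integral_le_of_norm_le ((integrable_mulDiff hB2 s).norm.const_mul _)
          (.of_forall fun z => ?_)
        rw [norm_mul]
        gcongr
        exact hEj z
    _ ≤ j * ∫ z, ‖B z‖ ^ 2 ∂ν := by
        rw [integral_const_mul]
        exact mul_le_mul_of_nonneg_left (integral_norm_mulDiff_le hB2 s) hj0

theorem norm_integral_mul_mul_sq_le_of_autocorrelation_le {A : X → ℂ} {E : X → G → ℂ} {B : G → ℂ}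
    {J : G → ℝ} (hA : MemLp A 2 μ) (hE : StronglyMeasurable (Function.uncurry E))
    (hE2 : MemLp (Function.uncurry E) 2 (μ.prod ν)) (hB : StronglyMeasurable B)
    (hB2 : MemLp B 2 ν) (hJ : Integrable J ν)
    (hEJ : ∀ s z, ‖∫ x, mulDiff s (E x) z ∂μ‖ ≤ J s) :
    ‖∫ p, A p.1 * (E p.1 p.2 * B p.2) ∂(μ.prod ν)‖ ^ 2 ≤
      (∫ x, ‖A x‖ ^ 2 ∂μ) * ((∫ s, J s ∂ν) * ∫ z, ‖B z‖ ^ 2 ∂ν) := by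
  have hBX : StronglyMeasurable (Function.uncurry fun _ : X => B) :=
    hB.comp_measurable measurable_snd
  refine (norm_integral_mul_sq_le_integral_autocorrelation (K := fun x z => E x z * B z) hA
    (hE.mul hBX) (lintegral_sq_lintegral_mul_ne_top hE hE2 hBX (lintegral_enorm_sq_ne_top hB2)
      fun _ => le_rfl)).trans ?_
  gcongr
  rw [← integral_mul_const]
  exact integral_mono_of_nonneg (.of_forall fun _ => norm_nonneg _) (hJ.mul_const _)
    (.of_forall fun s => norm_integral_mulDiff_mul_le hB2 (hEJ s))

end Autocorrelation

/-! ### Trilinear forms on `L²` -/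

section Trilinear

theorem memLp_two_mul_prod {α β : Type*} [MeasurableSpace α] [MeasurableSpace β]
    {μ : Measure α} {ν : Measure β} {u : α → ℂ} {w : β → ℂ}
    (hu : MemLp u 2 μ) (hw : MemLp w 2 ν) :
    MemLp (fun p : α × β => u p.1 * w p.2) 2 (μ.prod ν) := by
  refine (memLp_two_iff_integrable_sq_norm (hu.1.comp_fst.mul hw.1.comp_snd)).mpr ?_
  simp_rw [Pi.mul_apply, norm_mul, mul_pow]
  exact ((memLp_two_iff_integrable_sq_norm hu.1).mp hu).mul_prod
    ((memLp_two_iff_integrable_sq_norm hw.1).mp hw)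

theorem memLp_two_sqrt {α : Type*} [MeasurableSpace α] {μ : Measure α} {U : α → ℝ}
    (hU : Integrable U μ) (hU0 : 0 ≤ U) : MemLp (fun x => √(U x)) 2 μ := by
  rw [memLp_two_iff_integrable_sq
    (Real.continuous_sqrt.comp_aestronglyMeasurable hU.aestronglyMeasurable)]
  simpa only [Real.sq_sqrt (hU0 _)] using hU

theorem integral_sqrt_mul_sqrt_le {α : Type*} [MeasurableSpace α] {μ : Measure α} {U W : α → ℝ}
    (hU : Integrable U μ) (hU0 : 0 ≤ U) (hW : Integrable W μ) (hW0 : 0 ≤ W) :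
    ∫ x, √(U x) * √(W x) ∂μ ≤ √((∫ x, U x ∂μ) * ∫ x, W x ∂μ) := by
  refine Real.le_sqrt_of_sq_le ?_
  have hcs := norm_integral_mul_sq_le (memLp_two_sqrt hU hU0) (memLp_two_sqrt hW hW0)
  simpa only [Real.norm_eq_abs, sq_abs, Real.sq_sqrt (hU0 _), Real.sq_sqrt (hW0 _)] using hcs

theorem integral_le_measureReal_mul_add_mul_sqrt {α : Type*} [MeasurableSpace α] {μ : Measure α}
    {A : Set α} {b U W : α → ℝ} {P η : ℝ} (hA : MeasurableSet A) (hμA : μ A ≠ ⊤) (hη : 0 ≤ η)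
    (hb0 : 0 ≤ b) (hbP : ∀ t, b t ≤ P) (hU : Integrable U μ) (hU0 : 0 ≤ U) (hW : Integrable W μ)
    (hW0 : 0 ≤ W) (hbUW : ∀ᵐ t ∂μ, t ∉ A → b t ^ 2 ≤ U t * (η ^ 2 * W t)) :
    ∫ t, b t ∂μ ≤ μ.real A * P + η * √((∫ t, U t ∂μ) * ∫ t, W t ∂μ) := by
  have hsqrt : Integrable (fun t => √(U t) * √(W t)) μ :=
    (memLp_two_sqrt hU hU0).integrable_mul (memLp_two_sqrt hW hW0)
  have hind : Integrable (A.indicator fun _ => P) μ := (integrable_indicator_iff hA).mpr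
    (integrableOn_const hμA)
  have hpointwise : ∀ᵐ t ∂μ, b t ≤ A.indicator (fun _ => P) t + η * (√(U t) * √(W t)) := by
    filter_upwards [hbUW] with t ht
    by_cases htA : t ∈ A
    · rw [Set.indicator_of_mem htA]
      exact (hbP t).trans (le_add_of_nonneg_right (by positivity))
    · rw [Set.indicator_of_notMem htA, zero_add]
      refine (abs_le_of_sq_le_sq' ((ht htA).trans_eq ?_) (by positivity)).2
      rw [mul_pow, mul_pow, Real.sq_sqrt (hU0 t), Real.sq_sqrt (hW0 t), mul_left_comm]
  calc ∫ t, b t ∂μ ≤ ∫ t, A.indicator (fun _ => P) t + η * (√(U t) * √(W t)) ∂μ :=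
        integral_mono_of_nonneg (.of_forall hb0) (hind.add (hsqrt.const_mul η)) hpointwise
    _ = μ.real A * P + η * ∫ t, √(U t) * √(W t) ∂μ := by
        rw [integral_add hind (hsqrt.const_mul η), integral_indicator_const P hA,
          integral_const_mul, smul_eq_mul]
    _ ≤ _ := by
        gcongr
        exact integral_sqrt_mul_sqrt_le hU hU0 hW hW0

variable {G : Type*} [MeasurableSpace G] [AddCommGroup G] [MeasurableAdd₂ G] {ν : Measure G}
  [SFinite ν] [ν.IsAddLeftInvariant] {g h : G → ℂ}

theorem integrable_prod_norm_mulDiff_sq (hg : MemLp g 2 ν) :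
    Integrable (fun p : G × G => ‖mulDiff p.2 g p.1‖ ^ 2) (ν.prod ν) := by
  have hsq := (memLp_two_iff_integrable_sq_norm hg.1).mp hg
  have hshear := (measurePreserving_prod_add ν ν).integrable_comp_of_integrable
    (hsq.mul_prod hsq)
  refine hshear.congr (.of_forall fun p => ?_)
  simp only [Function.comp_apply, mulDiff, norm_mul, RCLike.norm_conj]
  ring

theorem integral_integral_norm_mulDiff_sq (hg : MemLp g 2 ν) :
    ∫ t, ∫ y, ‖mulDiff t g y‖ ^ 2 ∂ν ∂ν = (∫ y, ‖g y‖ ^ 2 ∂ν) ^ 2 := by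
  have hinner (y : G) : ∫ t, ‖mulDiff t g y‖ ^ 2 ∂ν = (∫ t, ‖g t‖ ^ 2 ∂ν) * ‖g y‖ ^ 2 := by
    simp_rw [mulDiff, norm_mul, RCLike.norm_conj, mul_pow]
    rw [integral_mul_const, integral_add_left_eq_self (fun t => ‖g t‖ ^ 2)]
  rw [← integral_integral_swap (f := fun y t => ‖mulDiff t g y‖ ^ 2)
    (integrable_prod_norm_mulDiff_sq hg)]
  simp_rw [hinner]
  rw [integral_const_mul, sq]

theorem ae_memLp_mulDiff (hg : MemLp g 2 ν) : ∀ᵐ t ∂ν, MemLp (mulDiff t g) 2 ν := by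
  filter_upwards [(integrable_prod_norm_mulDiff_sq hg).prod_left_ae] with t ht
  exact (memLp_two_iff_integrable_sq_norm (integrable_mulDiff hg t).1).mpr ht

theorem stronglyMeasurable_mulDiff {G : Type*} [MeasurableSpace G] [Add G] [MeasurableAdd G]
    {F : G → ℂ} (hF : StronglyMeasurable F) (t : G) : StronglyMeasurable (mulDiff t F) :=
  (hF.comp_measurable (measurable_add_const t)).mul
    (Complex.continuous_conj.comp_stronglyMeasurable hF)

variable [MeasurableNeg G] {E : G × G → ℂ} {M : ℝ} {A : Set G}

theorem measurePreserving_sub_prod_swap (ν : Measure G) [SFinite ν] [ν.IsAddLeftInvariant] :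
    MeasurePreserving (fun q : G × G => (q.2 - q.1, q.1)) (ν.prod ν) (ν.prod ν) :=
  (measurePreserving_sub_prod ν ν).comp Measure.measurePreserving_swap

theorem integral_mulDiff_mul_mul (E : G × G → ℂ) (g h : G → ℂ) (t : G) :
    ∫ p, mulDiff t (fun y => E (p.1, y) * g y * h (p.1 + y)) p.2 ∂(ν.prod ν) =
      ∫ q, mulDiff t g q.1 * (mulDiff (0, t) E (q.2 - q.1, q.1) * mulDiff t h q.2)
        ∂(ν.prod ν) := by
  have hemb : MeasurableEmbedding fun q : G × G => (q.2 - q.1, q.1) :=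
    ((MeasurableEquiv.shearSubRight G).trans .prodComm).measurableEmbedding
  rw [← (measurePreserving_sub_prod_swap ν).integral_comp hemb]
  congr 1 with q
  simp only [mulDiff, map_mul, Prod.mk_add_mk, add_zero, sub_add_cancel]
  rw [← add_assoc, sub_add_cancel]
  ring

theorem norm_mulDiff_le_sq {G : Type*} [Add G] {F : G → ℂ} (hF : ∀ p, ‖F p‖ ≤ M) (v p : G) :
    ‖mulDiff v F p‖ ≤ M ^ 2 := by
  rw [mulDiff, norm_mul, RCLike.norm_conj, sq]
  exact mul_le_mul (hF _) (hF _) (norm_nonneg _) ((norm_nonneg _).trans (hF p))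

theorem norm_integral_mulDiff_mul_mul_le (hEM : ∀ p, ‖E p‖ ≤ M) (hg : MemLp g 2 ν)
    (hh : MemLp h 2 ν) (t : G) :
    ‖∫ p, mulDiff t (fun y => E (p.1, y) * g y * h (p.1 + y)) p.2 ∂(ν.prod ν)‖ ≤
      M ^ 2 * ((∫ y, ‖g y‖ ^ 2 ∂ν) * ∫ z, ‖h z‖ ^ 2 ∂ν) := by
  rw [integral_mulDiff_mul_mul]
  have hprod := (integrable_mulDiff hg t).norm.mul_prod (integrable_mulDiff hh t).norm
  calc ‖∫ q, mulDiff t g q.1 * (mulDiff (0, t) E (q.2 - q.1, q.1) * mulDiff t h q.2) ∂(ν.prod ν)‖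
      ≤ ∫ q, M ^ 2 * (‖mulDiff t g q.1‖ * ‖mulDiff t h q.2‖) ∂(ν.prod ν) := by
        refine norm_integral_le_of_norm_le (hprod.const_mul _) (.of_forall fun q => ?_)
        rw [norm_mul, norm_mul, mul_left_comm]
        gcongr
        exact norm_mulDiff_le_sq hEM _ _
    _ = M ^ 2 * ((∫ y, ‖mulDiff t g y‖ ∂ν) * ∫ z, ‖mulDiff t h z‖ ∂ν) := by
        rw [integral_const_mul,
          integral_prod_mul (fun y => ‖mulDiff t g y‖) fun z => ‖mulDiff t h z‖]
    _ ≤ M ^ 2 * ((∫ y, ‖g y‖ ^ 2 ∂ν) * ∫ z, ‖h z‖ ^ 2 ∂ν) := by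
        refine mul_le_mul_of_nonneg_left ?_ (sq_nonneg M)
        exact mul_le_mul (integral_norm_mulDiff_le hg t) (integral_norm_mulDiff_le hh t)
          (integral_nonneg fun _ => norm_nonneg _) (integral_nonneg fun _ => by positivity)

instance {G H : Type*} [MeasurableSpace G] [MeasurableSpace H] [Add G] [Add H] [MeasurableAdd₂ G]
    [MeasurableAdd₂ H] : MeasurableAdd₂ (G × H) :=
  ⟨((measurable_fst.comp measurable_fst).add (measurable_fst.comp measurable_snd)).prodMk
    ((measurable_snd.comp measurable_fst).add (measurable_snd.comp measurable_snd))⟩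

theorem memLp_mulDiff_of_norm_le {G : Type*} [MeasurableSpace G] [Add G] [MeasurableAdd G]
    {μ : Measure G} {F : G → ℂ} (hF : StronglyMeasurable F) (hF2 : MemLp F 2 μ)
    (hFM : ∀ p, ‖F p‖ ≤ M) (v : G) : MemLp (mulDiff v F) 2 μ := by
  refine hF2.of_le_mul (c := M) (stronglyMeasurable_mulDiff hF v).aestronglyMeasurable
    (.of_forall fun p => ?_)
  rw [mulDiff, norm_mul, RCLike.norm_conj]
  gcongr
  exact hFM _

theorem norm_integral_mulDiff_mul_mul_sq_le {J : G → ℝ} {t : G} (hE : StronglyMeasurable E)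
    (hEM : ∀ p, ‖E p‖ ≤ M) (hE2 : MemLp E 2 (ν.prod ν)) (hgt : MemLp (mulDiff t g) 2 ν)
    (hh : StronglyMeasurable h) (hht : MemLp (mulDiff t h) 2 ν) (hJ : Integrable J ν)
    (hEJ : ∀ s z, ‖∫ y, mulDiff (s, 0) (mulDiff (0, t) E) (z - y, y) ∂ν‖ ≤ J s) :
    ‖∫ p, mulDiff t (fun y => E (p.1, y) * g y * h (p.1 + y)) p.2 ∂(ν.prod ν)‖ ^ 2 ≤
      (∫ y, ‖mulDiff t g y‖ ^ 2 ∂ν) * ((∫ s, J s ∂ν) * ∫ z, ‖mulDiff t h z‖ ^ 2 ∂ν) := by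
  rw [integral_mulDiff_mul_mul]
  have hshear := measurePreserving_sub_prod_swap ν
  refine norm_integral_mul_mul_sq_le_of_autocorrelation_le
    (E := fun y z => mulDiff (0, t) E (z - y, y)) hgt
    ((stronglyMeasurable_mulDiff hE _).comp_measurable hshear.measurable)
    ((memLp_mulDiff_of_norm_le hE hE2 hEM _).comp_measurePreserving hshear)
    (stronglyMeasurable_mulDiff hh t) hht hJ fun s z => ?_
  convert hEJ s z using 4 with y
  simp only [mulDiff, Prod.mk_add_mk, add_zero, sub_add_eq_add_sub]

theorem memLp_two_mul_comp_snd {α β : Type*} [MeasurableSpace α] [MeasurableSpace β]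
    {μ : Measure α} {ν : Measure β} {F : α × β → ℂ} {w : β → ℂ} {s : Set α} {s' : Set β}
    (hF : StronglyMeasurable F) (hFM : ∀ p, ‖F p‖ ≤ M) (hs : MeasurableSet s) (hμs : μ s ≠ ⊤)
    (hsupp : Function.support F ⊆ s ×ˢ s') (hwm : StronglyMeasurable w)
    (hw : MemLp (s'.indicator w) 2 ν) :
    MemLp (fun p => F p * w p.2) 2 (μ.prod ν) := by
  have hdom := memLp_two_mul_prod (memLp_indicator_const 2 hs (M : ℂ) (.inr hμs)) hw
  refine hdom.mono (hF.mul (hwm.comp_measurable measurable_snd)).aestronglyMeasurable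
    (.of_forall fun p => ?_)
  by_cases hp : F p = 0
  · rw [hp, zero_mul, norm_zero]
    exact norm_nonneg _
  · obtain ⟨hp1, hp2⟩ := hsupp hp
    rw [Set.indicator_of_mem hp1, Set.indicator_of_mem hp2, norm_mul, norm_mul, Complex.norm_real]
    gcongr
    exact (hFM p).trans (le_abs_self M)

variable {s : Set G}

theorem integral_norm_integral_mulDiff_mul_mul_le {J : G → G → ℝ} {η : ℝ}
    (hE : StronglyMeasurable E) (hEM : ∀ p, ‖E p‖ ≤ M) (hE2 : MemLp E 2 (ν.prod ν))
    (hg : MemLp g 2 ν) (hh : StronglyMeasurable h) (hh2 : MemLp h 2 ν) (hA : MeasurableSet A)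
    (hνA : ν A ≠ ⊤) (hη : 0 ≤ η) (hJ : ∀ t ∉ A, Integrable (J t) ν)
    (hJη : ∀ t ∉ A, ∫ s, J t s ∂ν ≤ η ^ 2)
    (hEJ : ∀ t ∉ A, ∀ s z, ‖∫ y, mulDiff (s, 0) (mulDiff (0, t) E) (z - y, y) ∂ν‖ ≤ J t s) :
    ∫ t, ‖∫ p, mulDiff t (fun y => E (p.1, y) * g y * h (p.1 + y)) p.2 ∂(ν.prod ν)‖ ∂ν ≤
      (ν.real A * M ^ 2 + η) * ((∫ y, ‖g y‖ ^ 2 ∂ν) * ∫ z, ‖h z‖ ^ 2 ∂ν) := by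
  have hdecay : ∀ᵐ t ∂ν, t ∉ A →
      ‖∫ p, mulDiff t (fun y => E (p.1, y) * g y * h (p.1 + y)) p.2 ∂(ν.prod ν)‖ ^ 2 ≤
        (∫ y, ‖mulDiff t g y‖ ^ 2 ∂ν) * (η ^ 2 * ∫ z, ‖mulDiff t h z‖ ^ 2 ∂ν) := by
    filter_upwards [ae_memLp_mulDiff hg, ae_memLp_mulDiff hh2] with t hgt hht htA
    refine (norm_integral_mulDiff_mul_mul_sq_le hE hEM hE2 hgt hh hht (hJ t htA)
      (hEJ t htA)).trans ?_
    gcongr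
    exact hJη t htA
  refine (integral_le_measureReal_mul_add_mul_sqrt hA hνA hη (fun _ => norm_nonneg _)
    (norm_integral_mulDiff_mul_mul_le hEM hg hh2)
    (integrable_prod_norm_mulDiff_sq hg).integral_prod_right
    (fun _ => integral_nonneg fun _ => by positivity)
    (integrable_prod_norm_mulDiff_sq hh2).integral_prod_right
    (fun _ => integral_nonneg fun _ => by positivity) hdecay).trans_eq ?_
  rw [integral_integral_norm_mulDiff_sq hg, integral_integral_norm_mulDiff_sq hh2, ← mul_pow,
    Real.sqrt_sq (mul_nonneg (integral_nonneg fun _ => by positivity)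
      (integral_nonneg fun _ => by positivity))]
  ring

theorem norm_integral_trilinear_sq_le {f : G → ℂ} {J : G → G → ℝ} {η : ℝ}
    (hE : StronglyMeasurable E) (hEM : ∀ p, ‖E p‖ ≤ M) (hs : MeasurableSet s) (hνs : ν s ≠ ⊤)
    (hsupp : Function.support E ⊆ s ×ˢ s) (hf : MemLp f 2 ν) (hg : StronglyMeasurable g)
    (hg2 : MemLp g 2 ν) (hh : StronglyMeasurable h) (hh2 : MemLp h 2 ν) (hA : MeasurableSet A)
    (hνA : ν A ≠ ⊤) (hη : 0 ≤ η) (hJ : ∀ t ∉ A, Integrable (J t) ν)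
    (hJη : ∀ t ∉ A, ∫ s, J t s ∂ν ≤ η ^ 2)
    (hEJ : ∀ t ∉ A, ∀ s z, ‖∫ y, mulDiff (s, 0) (mulDiff (0, t) E) (z - y, y) ∂ν‖ ≤ J t s) :
    ‖∫ p, f p.1 * (E p * g p.2 * h (p.1 + p.2)) ∂(ν.prod ν)‖ ^ 2 ≤
      (∫ x, ‖f x‖ ^ 2 ∂ν) *
        ((ν.real A * M ^ 2 + η) * ((∫ y, ‖g y‖ ^ 2 ∂ν) * ∫ z, ‖h z‖ ^ 2 ∂ν)) := by
  have hE2 : MemLp E 2 (ν.prod ν) := by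
    simpa only [mul_one] using memLp_two_mul_comp_snd (w := fun _ => 1) hE hEM hs hνs hsupp
      stronglyMeasurable_const (memLp_indicator_const 2 hs 1 (.inr hνs))
  have hEg : MemLp (fun p => E p * g p.2) 2 (ν.prod ν) :=
    memLp_two_mul_comp_snd hE hEM hs hνs hsupp hg (hg2.indicator hs)
  have hEgm : StronglyMeasurable fun p => E p * g p.2 := hE.mul (hg.comp_measurable measurable_snd)
  have hhm : StronglyMeasurable fun p : G × G => h (p.1 + p.2) := hh.comp_measurable measurable_add
  have hfin : ∫⁻ x, (∫⁻ y, ‖E (x, y) * g y * h (x + y)‖ₑ ∂ν) ^ 2 ∂ν ≠ ⊤ :=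
    lintegral_sq_lintegral_mul_ne_top (E := fun x y => E (x, y) * g y) (H := fun x y => h (x + y))
      hEgm hEg hhm (lintegral_enorm_sq_ne_top hh2)
      fun x => (lintegral_add_left_eq_self (fun y => ‖h y‖ₑ ^ 2) x).le
  refine (norm_integral_mul_sq_le_integral_autocorrelation
    (K := fun x y => E (x, y) * g y * h (x + y)) hf (hEgm.mul hhm) hfin).trans ?_
  gcongr
  exact integral_norm_integral_mulDiff_mul_mul_le hE hEM hE2 hg2 hh hh2 hA hνA hη hJ hJη hEJ

end Trilinear

/-! ### The model trilinear form on the line -/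

section Model

theorem integrable_mul_inv_one_add_mul_sq (C : ℝ) {L : ℝ} (hL : L ≠ 0) :
    Integrable fun s : ℝ => C * (1 + (L * s) ^ 2)⁻¹ :=
  ((integrable_comp_mul_left_iff (fun x : ℝ => (1 + x ^ 2)⁻¹) hL).mpr
    integrable_inv_one_add_sq).const_mul C

theorem integral_mul_inv_one_add_mul_sq (C L : ℝ) :
    ∫ s : ℝ, C * (1 + (L * s) ^ 2)⁻¹ = C * Real.pi / |L| := by
  rw [integral_const_mul, Measure.integral_comp_mul_left (fun x : ℝ => (1 + x ^ 2)⁻¹) L,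
    integral_univ_inv_one_add_sq, smul_eq_mul, abs_inv]
  ring

-- The parameter `δ = |lam| ^ (-1 / 3)` balances the trivial bound on `|t| ≤ δ` against the decay
-- `(|lam| * |t|) ^ (-1 / 2)` on `|t| > δ`.
theorem norm_integral_trilinear_sq_le_of_decay {E : ℝ × ℝ → ℂ} {M C lam δ : ℝ} {f g h : ℝ → ℂ}
    (hE : Continuous E) (hEc : HasCompactSupport E) (hEM : ∀ p, ‖E p‖ ≤ M)
    (hδ : 0 < δ) (hlam : |lam| * δ ^ 3 = 1)
    (hdecay : ∀ t s z : ℝ, ‖∫ y, mulDiff (s, 0) (mulDiff (0, t) E) (z - y, y)‖ ≤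
      C * (1 + (lam * t * s) ^ 2)⁻¹)
    (hf : MemLp f 2) (hg : StronglyMeasurable g) (hg2 : MemLp g 2) (hh : StronglyMeasurable h)
    (hh2 : MemLp h 2) :
    ‖∫ p : ℝ × ℝ, f p.1 * (E p * g p.2 * h (p.1 + p.2))‖ ^ 2 ≤ (2 * M ^ 2 + √(C * Real.pi)) * δ *
      ((∫ x, ‖f x‖ ^ 2) * (∫ y, ‖g y‖ ^ 2) * ∫ z, ‖h z‖ ^ 2) := by
  obtain ⟨R, hR⟩ := hEc.isCompact.isBounded.subset_closedBall (0 : ℝ × ℝ)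
  have hsupp : Function.support E ⊆ Metric.closedBall 0 R ×ˢ Metric.closedBall 0 R := by
    rw [closedBall_prod_same]
    exact (subset_tsupport E).trans hR
  have hC : 0 ≤ C := by
    simpa using (norm_nonneg _).trans (hdecay 0 0 0)
  have hlam0 : lam ≠ 0 := by
    rintro rfl
    simp at hlam
  have hlarge (t : ℝ) (ht : t ∉ Metric.closedBall 0 δ) : δ < |t| := by
    simpa using ht
  have hJ (t : ℝ) (ht : t ∉ Metric.closedBall 0 δ) :
      ∫ s, C * (1 + (lam * t * s) ^ 2)⁻¹ ≤ (√(C * Real.pi) * δ) ^ 2 := by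
    have htpos : 0 < |t| := hδ.trans (hlarge t ht)
    rw [integral_mul_inv_one_add_mul_sq, abs_mul, mul_pow, Real.sq_sqrt (by positivity),
      div_le_iff₀ (by positivity)]
    calc C * Real.pi = C * Real.pi * (|lam| * δ ^ 3) := by rw [hlam, mul_one]
      _ = C * Real.pi * δ ^ 2 * (|lam| * δ) := by ring
      _ ≤ C * Real.pi * δ ^ 2 * (|lam| * |t|) := by
        gcongr
        exact (hlarge t ht).le
  refine (norm_integral_trilinear_sq_le (η := √(C * Real.pi) * δ) hE.stronglyMeasurable hEM
    measurableSet_closedBall measure_closedBall_lt_top.ne hsupp hf hg hg2 hh hh2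
    measurableSet_closedBall measure_closedBall_lt_top.ne (by positivity)
    (fun t ht => integrable_mul_inv_one_add_mul_sq C
      (mul_ne_zero hlam0 (abs_pos.mp (hδ.trans (hlarge t ht))))) hJ
    fun t _ => hdecay t).trans_eq ?_
  rw [Real.volume_real_closedBall hδ.le]
  ring

variable {V : Type*} [NormedAddCommGroup V] [NormedSpace ℝ V]

theorem mulDiff_mulDiff_comp_symm (Ψ : V ≃L[ℝ] ℝ × ℝ) (F : V → ℂ) (t s z y : ℝ) :
    mulDiff (s, 0) (mulDiff (0, t) (F ∘ Ψ.symm)) (z - y, y) =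
      diffOnLine (Ψ.symm (0, 1)) (Ψ.symm (1, 0)) (Ψ.symm (-1, 1)) t s (Ψ.symm (z, 0)) F y := by
  simp only [diffOnLine, mulDiff, Function.comp_apply, ← map_smul, ← map_add, Prod.smul_mk,
    Prod.mk_add_mk, smul_eq_mul, mul_zero, mul_one, mul_neg, zero_add, sub_eq_add_neg]

theorem exists_norm_integral_oscillate_trilinear_sq_le [ProperSpace V] (Ψ : V ≃L[ℝ] ℝ × ℝ)
    {a : V → ℂ} {S : V → ℝ} {c : ℝ} (ha : ContDiff ℝ 2 a) (hcpt : HasCompactSupport a)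
    (hS : ContDiff ℝ 5 S) (hc : 0 < c)
    (hnd : ∀ q ∈ convexHull ℝ (tsupport a), c ≤
      |dirDeriv (Ψ.symm (0, 1)) (dirDeriv (Ψ.symm (1, 0)) (dirDeriv (Ψ.symm (-1, 1)) S)) q|) :
    ∃ C, ∀ lam δ : ℝ, 0 < δ → |lam| * δ ^ 3 = 1 → ∀ f g h : ℝ → ℂ, MemLp f 2 →
      StronglyMeasurable g → MemLp g 2 → StronglyMeasurable h → MemLp h 2 →
        ‖∫ p : ℝ × ℝ, f p.1 * (oscillate lam S a (Ψ.symm p) * g p.2 * h (p.1 + p.2))‖ ^ 2 ≤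
          C * δ * ((∫ x, ‖f x‖ ^ 2) * (∫ y, ‖g y‖ ^ 2) * ∫ z, ‖h z‖ ^ 2) := by
  obtain ⟨M, hM⟩ := ha.continuous.bounded_above_of_compact_support hcpt
  obtain ⟨C, hC⟩ := exists_norm_integral_diffOnLine_oscillate_le ha hcpt hS
    (v₃ := Ψ.symm (-1, 1)) (by simp) hc hnd
  refine ⟨2 * M ^ 2 + √(C * Real.pi), fun lam δ hδ hlam f g h hf hg hg2 hh hh2 => ?_⟩
  have hlam0 : lam ≠ 0 := by
    rintro rfl
    simp at hlam
  have hsupp : HasCompactSupport (oscillate lam S a) := hcpt.mul_left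
  refine norm_integral_trilinear_sq_le_of_decay (E := oscillate lam S a ∘ Ψ.symm)
    ((continuous_oscillate lam hS.continuous ha.continuous).comp Ψ.symm.continuous)
    (hsupp.comp_homeomorph Ψ.symm.toHomeomorph) (fun p => ?_) hδ hlam
    (fun t s z => ?_) hf hg hg2 hh hh2
  · rw [Function.comp_apply, norm_oscillate]
    exact hM _
  · simp_rw [mulDiff_mulDiff_comp_symm]
    exact hC lam hlam0 t s _

end Model

/-! ### Coordinates adapted to three linear functionals -/

section DualPlane

variable {K V : Type*} [Field K] [AddCommGroup V] [Module K V]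

theorem span_pair_eq_top (hV : Module.finrank K V = 2) {π₁ π₂ : V →ₗ[K] K}
    (hindep : LinearIndependent K ![π₁, π₂]) : Submodule.span K {π₁, π₂} = ⊤ := by
  have : FiniteDimensional K V := .of_finrank_pos (by lia)
  have hspan := hindep.span_eq_top_of_card_eq_finrank
    (by rw [Fintype.card_fin, Subspace.dual_finrank_eq, hV])
  rwa [Matrix.range_cons_cons_empty] at hspan

theorem eq_zero_of_apply_eq_zero (hV : Module.finrank K V = 2) {π₁ π₂ : V →ₗ[K] K}
    (hindep : LinearIndependent K ![π₁, π₂]) {p : V} (hp₁ : π₁ p = 0) (hp₂ : π₂ p = 0) :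
    p = 0 := by
  refine (Module.forall_dual_apply_eq_zero_iff K p).mp fun φ => ?_
  have hφ : φ ∈ Submodule.span K {π₁, π₂} := by
    rw [span_pair_eq_top hV hindep]
    exact Submodule.mem_top
  obtain ⟨α, β, rfl⟩ := Submodule.mem_span_pair.mp hφ
  simp [hp₁, hp₂]

theorem exists_smul_add_smul_eq (hV : Module.finrank K V = 2) {π₁ π₂ π₃ : V →ₗ[K] K}
    (hindep₁₂ : LinearIndependent K ![π₁, π₂]) (hindep₂₃ : LinearIndependent K ![π₂, π₃])
    (hindep₁₃ : LinearIndependent K ![π₁, π₃]) :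
    ∃ α β : K, α ≠ 0 ∧ β ≠ 0 ∧ α • π₁ + β • π₂ = π₃ := by
  have hπ₃ : π₃ ∈ Submodule.span K {π₁, π₂} := by
    rw [span_pair_eq_top hV hindep₁₂]
    exact Submodule.mem_top
  obtain ⟨α, β, hαβ⟩ := Submodule.mem_span_pair.mp hπ₃
  refine ⟨α, β, ?_, ?_, hαβ⟩
  · rintro rfl
    have := LinearIndependent.pair_iff.mp hindep₂₃ β (-1) (by simp [← hαβ])
    simp at this
  · rintro rfl
    have := LinearIndependent.pair_iff.mp hindep₁₃ α (-1) (by simp [← hαβ])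
    simp at this

end DualPlane

section Coordinates

variable {V : Type*} [NormedAddCommGroup V] [NormedSpace ℝ V]

theorem exists_adapted_coordinates (hV : Module.finrank ℝ V = 2) {π₁ π₂ π₃ : V →ₗ[ℝ] ℝ}
    (hindep₁₂ : LinearIndependent ℝ ![π₁, π₂]) (hindep₂₃ : LinearIndependent ℝ ![π₂, π₃])
    (hindep₁₃ : LinearIndependent ℝ ![π₁, π₃]) :
    ∃ (Ψ : V ≃L[ℝ] ℝ × ℝ) (α β : ℝ), α ≠ 0 ∧ β ≠ 0 ∧ (∀ p, π₁ p = α * (Ψ p).1) ∧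
      (∀ p, π₂ p = β * (Ψ p).2) ∧ ∀ p, π₃ p = (Ψ p).1 + (Ψ p).2 := by
  have : FiniteDimensional ℝ V := .of_finrank_pos (by lia)
  obtain ⟨α, β, hα, hβ, rfl⟩ := exists_smul_add_smul_eq hV hindep₁₂ hindep₂₃ hindep₁₃
  have hinj : Function.Injective ((α • π₁).prod (β • π₂)) := by
    refine LinearMap.ker_eq_bot.mp (LinearMap.ker_eq_bot'.mpr fun p hp => ?_)
    have hp' : (α * π₁ p, β * π₂ p) = (0 : ℝ × ℝ) := hp
    simp only [Prod.mk_eq_zero, mul_eq_zero, hα, hβ, false_or] at hp'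
    exact eq_zero_of_apply_eq_zero hV hindep₁₂ hp'.1 hp'.2
  let Ψ : V ≃L[ℝ] ℝ × ℝ :=
    (LinearEquiv.ofInjectiveOfFinrankEq _ hinj (by simp [hV])).toContinuousLinearEquiv
  have hΨ (p : V) : Ψ p = (α * π₁ p, β * π₂ p) := rfl
  refine ⟨Ψ, α⁻¹, β⁻¹, inv_ne_zero hα, inv_ne_zero hβ, fun p => ?_, fun p => ?_, fun p => ?_⟩
  · rw [hΨ, inv_mul_cancel_left₀ hα]
  · rw [hΨ, inv_mul_cancel_left₀ hβ]
  · rw [hΨ]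
    rfl

theorem exists_pos_le_abs_dirDeriv {s : Set V} {S : V → ℝ} {c : ℝ} (hc : 0 < c)
    {v₁ v₂ v₃ w₁ w₂ w₃ : V} (hv₁ : ∃ k : ℝ, v₁ = k • w₁) (hv₂ : ∃ k : ℝ, v₂ = k • w₂)
    (hv₃ : ∃ k : ℝ, v₃ = k • w₃)
    (hnd : ∀ q ∈ s, c ≤ |dirDeriv v₁ (dirDeriv v₂ (dirDeriv v₃ S)) q|) :
    ∃ c' > 0, ∀ q ∈ s, c' ≤ |dirDeriv w₁ (dirDeriv w₂ (dirDeriv w₃ S)) q| := by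
  obtain ⟨k₁, rfl⟩ := hv₁
  obtain ⟨k₂, rfl⟩ := hv₂
  obtain ⟨k₃, rfl⟩ := hv₃
  refine ⟨c / (|k₃ * k₂ * k₁| + 1), by positivity, fun q hq => ?_⟩
  have hq' := hnd q hq
  simp only [dirDeriv_smul_left, dirDeriv_smul_right, Pi.smul_apply, smul_eq_mul, ← mul_assoc,
    abs_mul _ (dirDeriv w₁ _ q)] at hq'
  rw [div_le_iff₀ (by positivity), mul_comm]
  refine hq'.trans ?_
  gcongr
  exact le_add_of_nonneg_right zero_le_one

theorem exists_pos_le_abs_dirDeriv_symm (Ψ : V ≃L[ℝ] ℝ × ℝ) {s : Set V} {S : V → ℝ} {c : ℝ}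
    (hc : 0 < c) {v₁ v₂ v₃ : V} (hv₁ : (Ψ v₁).1 = 0) (hv₂ : (Ψ v₂).2 = 0)
    (hv₃ : (Ψ v₃).1 + (Ψ v₃).2 = 0)
    (hnd : ∀ q ∈ s, c ≤ |dirDeriv v₁ (dirDeriv v₂ (dirDeriv v₃ S)) q|) :
    ∃ c' > 0, ∀ q ∈ s, c' ≤
      |dirDeriv (Ψ.symm (0, 1)) (dirDeriv (Ψ.symm (1, 0)) (dirDeriv (Ψ.symm (-1, 1)) S)) q| := by
  have hsmul {v : V} {w : ℝ × ℝ} {k : ℝ} (h : Ψ v = k • w) : ∃ k : ℝ, v = k • Ψ.symm w :=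
    ⟨k, by rw [← map_smul, ← h, Ψ.symm_apply_apply]⟩
  refine exists_pos_le_abs_dirDeriv hc (hsmul (k := (Ψ v₁).2) ?_) (hsmul (k := (Ψ v₂).1) ?_)
    (hsmul (k := (Ψ v₃).2) ?_) hnd
  · ext <;> simp [hv₁]
  · ext <;> simp [hv₂]
  · ext <;> simp [eq_neg_of_add_eq_zero_left hv₃]

theorem exists_integral_comp_eq_mul [MeasurableSpace V] [BorelSpace V] (μ : Measure V)
    [μ.IsAddHaarMeasure] (Ψ : V ≃L[ℝ] ℝ × ℝ) :
    ∃ κ : ℝ, ∀ H : ℝ × ℝ → ℂ, ∫ p, H (Ψ p) ∂μ = κ * ∫ q, H q := by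
  have hhaar : (μ.map Ψ).IsAddHaarMeasure := Ψ.isAddHaarMeasure_map μ
  refine ⟨(μ.map Ψ).addHaarScalarFactor volume, fun H => ?_⟩
  calc ∫ p, H (Ψ p) ∂μ = ∫ q, H q ∂(μ.map Ψ) :=
        (Ψ.toHomeomorph.measurableEmbedding.integral_map H).symm
    _ = (μ.map Ψ).addHaarScalarFactor volume * ∫ q, H q := by
        conv_lhs => rw [Measure.isAddLeftInvariant_eq_smul (μ.map Ψ) volume]
        rw [integral_smul_nnreal_measure]
        rfl

end Coordinates

/-! ### Square-integrable functions in adapted coordinates -/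

section Decay

theorem memLp_two_comp_mul_left {f : ℝ → ℂ} (hfm : StronglyMeasurable f) (hf : MemLp f 2) {α : ℝ}
    (hα : α ≠ 0) : MemLp (fun x => f (α * x)) 2 := by
  have hfα : StronglyMeasurable fun x => f (α * x) := hfm.comp_measurable (measurable_const_mul α)
  exact (memLp_two_iff_integrable_sq_norm hfα.aestronglyMeasurable).mpr
    (((memLp_two_iff_integrable_sq_norm hfm.aestronglyMeasurable).mp hf).comp_mul_left' hα)

theorem integral_norm_sq_comp_mul_left (f : ℝ → ℂ) (α : ℝ) :
    ∫ x, ‖f (α * x)‖ ^ 2 = |α⁻¹| * ∫ x, ‖f x‖ ^ 2 :=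
  Measure.integral_comp_mul_left (fun x => ‖f x‖ ^ 2) α

theorem integral_norm_sq_eq_norm_sq {X F : Type*} [MeasurableSpace X] {μ : Measure X}
    [NormedAddCommGroup F] [InnerProductSpace ℂ F] (f : Lp F 2 μ) :
    ∫ x, ‖f x‖ ^ 2 ∂μ = ‖f‖ ^ 2 := by
  have hinner := L2.inner_def (𝕜 := ℂ) f f
  simp only [inner_self_eq_norm_sq_to_K] at hinner
  exact_mod_cast hinner.symm

theorem le_sqrt_mul_rpow_mul_of_sq_le {x K t N : ℝ} (ht : 0 ≤ t) (hN : 0 ≤ N)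
    (h : x ^ 2 ≤ K * t ^ (-(1 / 3) : ℝ) * N ^ 2) : x ≤ √K * t ^ (-(1 / 6) : ℝ) * N := by
  have hsqrt : √(t ^ (-(1 / 3) : ℝ)) = t ^ (-(1 / 6) : ℝ) := by
    rw [Real.sqrt_eq_rpow, ← Real.rpow_mul ht]
    norm_num
  refine (Real.le_sqrt_of_sq_le h).trans_eq ?_
  rw [Real.sqrt_mul' _ (sq_nonneg N), Real.sqrt_sq hN, Real.sqrt_mul' _ (Real.rpow_nonneg ht _),
    hsqrt]

theorem mul_rpow_neg_third_pow_three {t : ℝ} (ht : 0 < t) : t * (t ^ (-(1 / 3) : ℝ)) ^ 3 = 1 := by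
  rw [← Real.rpow_mul_natCast ht.le]
  norm_num [Real.rpow_neg_one, ht.ne']

theorem norm_integral_comp_sq_le {V : Type*} [NormedAddCommGroup V] [NormedSpace ℝ V]
    [MeasurableSpace V] {μ : Measure V} (Ψ : V ≃L[ℝ] ℝ × ℝ) {κ C δ α β : ℝ} {F : V → ℂ}
    (hκ : ∀ H : ℝ × ℝ → ℂ, ∫ p, H (Ψ p) ∂μ = κ * ∫ q, H q) (hα : α ≠ 0) (hβ : β ≠ 0)
    (hF : ∀ f g h : ℝ → ℂ, MemLp f 2 → StronglyMeasurable g → MemLp g 2 → StronglyMeasurable h →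
      MemLp h 2 → ‖∫ p : ℝ × ℝ, f p.1 * (F (Ψ.symm p) * g p.2 * h (p.1 + p.2))‖ ^ 2 ≤
        C * δ * ((∫ x, ‖f x‖ ^ 2) * (∫ y, ‖g y‖ ^ 2) * ∫ z, ‖h z‖ ^ 2))
    (f₁ f₂ f₃ : Lp ℂ 2 (volume : Measure ℝ)) :
    ‖∫ p, F p * f₁ (α * (Ψ p).1) * f₂ (β * (Ψ p).2) * f₃ ((Ψ p).1 + (Ψ p).2) ∂μ‖ ^ 2 ≤
      κ ^ 2 * C * |α⁻¹| * |β⁻¹| * δ * (‖f₁‖ * ‖f₂‖ * ‖f₃‖) ^ 2 := by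
  have hchange : ∫ p, F p * f₁ (α * (Ψ p).1) * f₂ (β * (Ψ p).2) * f₃ ((Ψ p).1 + (Ψ p).2) ∂μ =
      κ * ∫ q : ℝ × ℝ, f₁ (α * q.1) * (F (Ψ.symm q) * f₂ (β * q.2) * f₃ (q.1 + q.2)) := by
    rw [← hκ]
    refine integral_congr_ae (.of_forall fun p => ?_)
    simp only [Ψ.symm_apply_apply]
    ring
  have hmodel := hF (fun x => f₁ (α * x)) (fun y => f₂ (β * y)) f₃
    (memLp_two_comp_mul_left (Lp.stronglyMeasurable f₁) (Lp.memLp f₁) hα)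
    ((Lp.stronglyMeasurable f₂).comp_measurable (measurable_const_mul β))
    (memLp_two_comp_mul_left (Lp.stronglyMeasurable f₂) (Lp.memLp f₂) hβ)
    (Lp.stronglyMeasurable f₃) (Lp.memLp f₃)
  rw [integral_norm_sq_comp_mul_left, integral_norm_sq_comp_mul_left] at hmodel
  simp only [integral_norm_sq_eq_norm_sq] at hmodel
  rw [hchange, norm_mul, mul_pow, Complex.norm_real, Real.norm_eq_abs, sq_abs]
  refine (mul_le_mul_of_nonneg_left hmodel (sq_nonneg κ)).trans_eq ?_
  ring

theorem tsupport_ofReal {X : Type*} [TopologicalSpace X] (a : X → ℝ) :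
    tsupport (fun p => (a p : ℂ)) = tsupport a := by
  simp [tsupport, Function.support]

end Decay

end TrilinearOscillatory

open TrilinearOscillatory in
theorem trilinear_nondegenerate_decay_general {V : Type*} [NormedAddCommGroup V] [NormedSpace ℝ V]
    [MeasurableSpace V] [BorelSpace V] (hV : Module.finrank ℝ V = 2) (μ : Measure V)
    [μ.IsAddHaarMeasure] (π₁ π₂ π₃ : V →ₗ[ℝ] ℝ)
    (hindep₁₂ : LinearIndependent ℝ ![π₁, π₂]) (hindep₂₃ : LinearIndependent ℝ ![π₂, π₃])
    (hindep₁₃ : LinearIndependent ℝ ![π₁, π₃]) (v₁ v₂ v₃ : V)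
    (hker₁ : π₁ v₁ = 0) (hker₂ : π₂ v₂ = 0) (hker₃ : π₃ v₃ = 0)
    (a : V → ℂ) (ha : ContDiff ℝ 2 a) (hacs : HasCompactSupport a)
    (S : V → ℝ) (hS : ContDiff ℝ 5 S) {c : ℝ} (hc : 0 < c)
    (hD : ∀ p ∈ convexHull ℝ (tsupport a), c ≤ |dirDeriv v₁ (dirDeriv v₂ (dirDeriv v₃ S)) p|) :
    ∃ C : ℝ, ∀ lam : ℝ, lam ≠ 0 → ∀ f₁ f₂ f₃ : Lp ℂ 2 (volume : Measure ℝ),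
      ‖∫ p, Complex.exp (Complex.I * lam * S p) * a p * f₁ (π₁ p) * f₂ (π₂ p) * f₃ (π₃ p) ∂μ‖ ≤
        C * |lam| ^ (-(1 / 6) : ℝ) * ‖f₁‖ * ‖f₂‖ * ‖f₃‖ := by
  have : FiniteDimensional ℝ V := .of_finrank_pos (by lia)
  have : ProperSpace V := FiniteDimensional.proper ℝ V
  obtain ⟨Ψ, α, β, hα, hβ, hπ₁, hπ₂, hπ₃⟩ :=
    exists_adapted_coordinates hV hindep₁₂ hindep₂₃ hindep₁₃
  obtain ⟨c', hc', hD'⟩ := exists_pos_le_abs_dirDeriv_symm Ψ hc (by simpa [hπ₁, hα] using hker₁)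
    (by simpa [hπ₂, hβ] using hker₂) (by simpa [hπ₃] using hker₃) hD
  obtain ⟨κ, hκ⟩ := exists_integral_comp_eq_mul μ Ψ
  obtain ⟨C, hC⟩ := exists_norm_integral_oscillate_trilinear_sq_le Ψ ha hacs hS hc' hD'
  refine ⟨√(κ ^ 2 * C * |α⁻¹| * |β⁻¹|), fun lam hlam f₁ f₂ f₃ => ?_⟩
  have hlam' : 0 < |lam| := abs_pos.mpr hlam
  have hsq := norm_integral_comp_sq_le Ψ hκ hα hβ
    (hC lam _ (Real.rpow_pos_of_pos hlam' _) (mul_rpow_neg_third_pow_three hlam')) f₁ f₂ f₃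
  simpa only [oscillate, hπ₁, hπ₂, hπ₃, mul_assoc] using
    le_sqrt_mul_rpow_mul_of_sq_le hlam'.le (by positivity) hsq

/-- Trilinear oscillatory integral estimate under a simple
nondegeneracy condition (Theorem `global70` of the paper). -/
theorem trilinear_nondegenerate_decay
    (π₁ π₂ π₃ : (ℝ × ℝ) →ₗ[ℝ] ℝ)
    (hsurj₁ : Function.Surjective π₁) (hsurj₂ : Function.Surjective π₂)
    (hsurj₃ : Function.Surjective π₃)
    (hindep₁₂ : LinearIndependent ℝ ![π₁, π₂])
    (hindep₂₃ : LinearIndependent ℝ ![π₂, π₃])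
    (hindep₁₃ : LinearIndependent ℝ ![π₁, π₃])
    (v₁ v₂ v₃ : ℝ × ℝ)
    (hker₁ : π₁ v₁ = 0) (hker₂ : π₂ v₂ = 0) (hker₃ : π₃ v₃ = 0)
    (hunit₁ : v₁.1 ^ 2 + v₁.2 ^ 2 = 1) (hunit₂ : v₂.1 ^ 2 + v₂.2 ^ 2 = 1)
    (hunit₃ : v₃.1 ^ 2 + v₃.2 ^ 2 = 1)
    (a : ℝ × ℝ → ℝ) (ha : ContDiff ℝ (⊤ : ℕ∞) a) (hacs : HasCompactSupport a)
    (S : ℝ × ℝ → ℝ) (hS : ContDiff ℝ (⊤ : ℕ∞) S)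
    (hD : ∀ p ∈ convexHull ℝ (tsupport a),
      1 ≤ |fderiv ℝ (fun q : ℝ × ℝ =>
              fderiv ℝ (fun r : ℝ × ℝ => fderiv ℝ S r v₃) q v₂) p v₁|) :
    ∃ C : ℝ, ∀ lam : ℝ, 1 ≤ |lam| →
      ∀ f₁ f₂ f₃ : Lp ℂ 2 (volume : Measure ℝ),
        ‖∫ p : ℝ × ℝ, Complex.exp (Complex.I * lam * S p) * (a p : ℂ) *
            f₁ (π₁ p) * f₂ (π₂ p) * f₃ (π₃ p)‖ ≤
          C * |lam| ^ (-(1 / 6) : ℝ) * ‖f₁‖ * ‖f₂‖ * ‖f₃‖ := by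
  obtain ⟨C, hC⟩ := trilinear_nondegenerate_decay_general (by simp) volume π₁ π₂ π₃ hindep₁₂
    hindep₂₃ hindep₁₃ v₁ v₂ v₃ hker₁ hker₂ hker₃ (fun p => a p)
    (Complex.ofRealCLM.contDiff.comp (contDiff_infty.mp ha 2)) (hacs.comp_left Complex.ofReal_zero)
    S (contDiff_infty.mp hS 5) one_pos (by rwa [TrilinearOscillatory.tsupport_ofReal])
  exact ⟨C, fun lam hlam => hC lam (abs_pos.mp (one_pos.trans_le hlam))⟩
end
end

section
/- There is an absolute constant C with the following property. Let δ₁, δ₂ ∈ (0,1], μ > 0, and λ ∈ ℝ with λ ≠ 0. Let a : ℝ² → ℂ be a smooth function supported in I × J, where I and J are intervals with |I| ≤ δ₁ and |J| ≤ δ₂, satisfying ‖a‖_∞ ≤ 1, |∂_y a(x,y)| ≤ δ₂^{−1} and |∂_y² a(x,y)| ≤ δ₂^{−2} for all (x,y). Let S : ℝ² → ℝ be smooth and suppose that for all (x,y) in the convex hull of the support of a: μ ≤ |DS(x,y)|, and |∂_y^β DS(x,y)| ≤ μ δ₂^{−β} for β = 1, 2. Then for all f₁, f₂, f₃ ∈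 L²(ℝ): |Λ_S(f₁,f₂,f₃)| ≤ C |λμ|^{−1/6} ‖f₁‖_{L²} ‖f₂‖_{L²} ‖f₃‖_{L²}. -/
open MeasureTheory

noncomputable section

/-- Partial derivative in the first variable. -/
def pdx (f : ℝ × ℝ → ℝ) : ℝ × ℝ → ℝ := fun p => deriv (fun t => f (t, p.2)) p.1

/-- Partial derivative in the second variable. -/
def pdy (f : ℝ × ℝ → ℝ) : ℝ × ℝ → ℝ := fun p => deriv (fun t => f (p.1, t)) p.2

/-- Partial derivative in the second variable, for complex-valued functions. -/
def pdyC (f : ℝ × ℝ → ℂ) : ℝ × ℝ → ℂ := fun p => deriv (fun t => f (p.1, t)) p.2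

/-- The differential operator `DS = ∂ₓ∂_y(∂ₓ − ∂_y)S = S_xxy − S_xyy`. -/
def DOp (S : ℝ × ℝ → ℝ) : ℝ × ℝ → ℝ := pdx (pdy (fun p => pdx S p - pdy S p))

/-!
Write the form as a pairing of `f₃` with the integrals over the lines `x + y = t` and apply
Cauchy–Schwarz. Expanding the square in the shift `τ` along such a line leaves, for every `τ`, a
bilinear form in the multiplicative derivatives `f₁ x * conj (f₁ (x - τ))` and
`f₂ y * conj (f₂ (y + τ))`, whose phase is the difference of `λS` in the direction `(-τ, τ)`.
Its `TT*` kernel at `(x, x')` is an oscillatory integral in `y`; the mean value theorem identifies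
the `y`-derivatives of its phase with `λ * τ * (x - x')` times values of `DS` and of its
`y`-derivatives. Two integrations by parts bound the kernel by
`δ₂ * (1 + (δ₂ * λ * μ * τ * (x - x')) ^ 2)⁻¹` up to a constant, and by Schur's test the bilinear
form has norm `O(|λμτ| ^ (-1/2))`. This is used for `|τ| > |λμ| ^ (-1/3)`, the trivial bound for
the remaining `τ`.
-/

section NonstationaryPhase

variable {φ : ℝ → ℝ} {b w ψ : ℝ → ℂ} {A B₀ B₁ B₂ N δ y : ℝ}

lemma integrable_of_norm_le_of_support_subset {T : Set ℝ} (hw : Continuous w)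
    (hT : MeasurableSet T) (hvol : volume T < ⊤) (hsupp : Function.support w ⊆ T)
    (hB : ∀ y ∈ T, ‖w y‖ ≤ A) : Integrable w :=
  (integrableOn_iff_integrable_of_support_subset hsupp).1 <|
    Measure.integrableOn_of_bounded hvol.ne hw.aestronglyMeasurable <|
      (ae_restrict_iff' hT).2 (Filter.Eventually.of_forall hB)

lemma norm_integral_cexp_mul_le_of_support_subset {T : Set ℝ} (hδ : 0 ≤ δ)
    (hvol : volume T ≤ ENNReal.ofReal δ) (hsupp : Function.support w ⊆ T)
    (hB₀ : 0 ≤ B₀) (hB : ∀ y ∈ T, ‖w y‖ ≤ B₀) :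
    ‖∫ y, Complex.exp (Complex.I * φ y) * w y‖ ≤ B₀ * δ := by
  have hvanish : ∀ y ∉ T, Complex.exp (Complex.I * φ y) * w y = 0 := fun y hy => by
    rw [Function.notMem_support.1 fun h => hy (hsupp h), mul_zero]
  rw [← setIntegral_eq_integral_of_forall_compl_eq_zero hvanish]
  calc ‖∫ y in T, Complex.exp (Complex.I * φ y) * w y‖
      ≤ B₀ * volume.real T :=
        norm_setIntegral_le_of_norm_le_const (hvol.trans_lt ENNReal.ofReal_lt_top) fun y hy => by
          simpa only [norm_mul, Complex.norm_exp_I_mul_ofReal, one_mul] using hB y hy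
    _ ≤ B₀ * δ := by gcongr; exact ENNReal.toReal_le_of_le_ofReal hδ hvol

lemma integral_cexp_mul_deriv_mul (hφ : ∀ y, HasDerivAt (fun t => (φ t : ℂ)) (ψ y) y)
    (hw : Differentiable ℝ w) (hwi : Integrable w) (hwi' : Integrable (deriv w))
    (hψw : Integrable (ψ * w)) :
    ∫ y, Complex.exp (Complex.I * φ y) * (ψ * w) y =
      Complex.I * ∫ y, Complex.exp (Complex.I * φ y) * deriv w y := by
  have hφc : Continuous fun t => (φ t : ℂ) :=
    continuous_iff_continuousAt.2 fun y => (hφ y).continuousAt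
  have integrable_cexp_mul : ∀ {g : ℝ → ℂ}, Integrable g →
      Integrable fun y => Complex.exp (Complex.I * φ y) * g y := fun hg =>
    hg.bdd_mul (c := 1) (by fun_prop : Continuous _).aestronglyMeasurable
      (Filter.Eventually.of_forall fun y => (Complex.norm_exp_I_mul_ofReal _).le)
  have hderiv : ∀ y, HasDerivAt (fun y => Complex.exp (Complex.I * φ y) * w y)
      (Complex.I * (Complex.exp (Complex.I * φ y) * (ψ * w) y) +
        Complex.exp (Complex.I * φ y) * deriv w y) y := fun y =>
    (((hφ y).const_mul Complex.I).cexp.mul (hw y).hasDerivAt).congr_deriv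
      (by rw [Pi.mul_apply]; ring)
  have hzero := integral_eq_zero_of_hasDerivAt_of_integrable hderiv
    (((integrable_cexp_mul hψw).const_mul _).add (integrable_cexp_mul hwi'))
    (integrable_cexp_mul hwi)
  rw [integral_add ((integrable_cexp_mul hψw).const_mul _) (integrable_cexp_mul hwi'),
    integral_const_mul] at hzero
  linear_combination (-Complex.I) * hzero +
    (∫ y, Complex.exp (Complex.I * φ y) * (ψ * w) y) * Complex.I_sq

lemma tsupport_div_subset_left {X 𝕜 : Type*} [TopologicalSpace X] [DivisionRing 𝕜]
    (f g : X → 𝕜) : tsupport (f / g) ⊆ tsupport f := by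
  rw [div_eq_mul_inv]
  exact tsupport_mul_subset_left

lemma contDiff_div_of_ne_zero_on_tsupport {n : WithTop ℕ∞} (hb : ContDiff ℝ n b)
    (hψ : ContDiff ℝ n ψ) (hne : ∀ y ∈ tsupport b, ψ y ≠ 0) : ContDiff ℝ n (b / ψ) := by
  refine contDiff_iff_contDiffAt.2 fun y => ?_
  by_cases hy : y ∈ tsupport b
  · rw [div_eq_mul_inv]
    exact hb.contDiffAt.mul (hψ.contDiffAt.inv (hne y hy))
  · exact contDiffAt_const.congr_of_eventuallyEq (notMem_tsupport_iff_eventuallyEq.1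
      fun h => hy (tsupport_div_subset_left b ψ h))

lemma norm_deriv_div_le (hb : DifferentiableAt ℝ b y) (hψ : DifferentiableAt ℝ ψ y)
    (hN : 0 < N) (hψ₀ : N ≤ ‖ψ y‖) (hψ₁ : ‖deriv ψ y‖ ≤ N / δ)
    (hb₀ : ‖b y‖ ≤ B₀) (hb₁ : ‖deriv b y‖ ≤ B₁ / δ) :
    ‖deriv (b / ψ) y‖ ≤ (B₁ + B₀) / δ / N := by
  have hne : ψ y ≠ 0 := norm_pos_iff.1 (hN.trans_le hψ₀)
  have hquot : deriv (b / ψ) y = (deriv b y - b y * (deriv ψ y / ψ y)) / ψ y := by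
    rw [deriv_div hb hψ hne]
    field_simp
  have hB₀ : 0 ≤ B₀ := (norm_nonneg _).trans hb₀
  have hB₁ : 0 ≤ B₁ / δ := (norm_nonneg _).trans hb₁
  have hlog : 0 ≤ N / δ := (norm_nonneg _).trans hψ₁
  calc ‖deriv (b / ψ) y‖
      ≤ (‖deriv b y‖ + ‖b y‖ * (‖deriv ψ y‖ / ‖ψ y‖)) / ‖ψ y‖ := by
        rw [hquot, norm_div, ← norm_div (deriv ψ y), ← norm_mul]
        gcongr
        exact norm_sub_le _ _
    _ ≤ (B₁ / δ + B₀ * (N / δ / N)) / N := by gcongr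
    _ = (B₁ + B₀) / δ / N := by field_simp

lemma norm_deriv_deriv_div_le (hb : ContDiff ℝ 2 b) (hψ : ContDiff ℝ 2 ψ)
    (hN : 0 < N) (hψ₀ : N ≤ ‖ψ y‖) (hψ₁ : ‖deriv ψ y‖ ≤ N / δ)
    (hψ₂ : ‖deriv (deriv ψ) y‖ ≤ N / δ ^ 2) (hb₀ : ‖b y‖ ≤ B₀) (hb₁ : ‖deriv b y‖ ≤ B₁ / δ)
    (hb₂ : ‖deriv (deriv b) y‖ ≤ B₂ / δ ^ 2) :
    ‖deriv (deriv (b / ψ)) y‖ ≤ (B₂ + 2 * B₁ + 3 * B₀) / δ ^ 2 / N := by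
  have hne : ψ y ≠ 0 := norm_pos_iff.1 (hN.trans_le hψ₀)
  have hb' : Differentiable ℝ b := hb.differentiable (by norm_num)
  have hψ' : Differentiable ℝ ψ := hψ.differentiable (by norm_num)
  have hdb : Differentiable ℝ (deriv b) := hb.differentiable_deriv_two
  have hdψ : Differentiable ℝ (deriv ψ) := hψ.differentiable_deriv_two
  set c : ℝ → ℂ := fun t => deriv b t - (b / ψ) t * deriv ψ t
  have hquot : deriv (b / ψ) =ᶠ[nhds y] c / ψ := by
    filter_upwards [hψ'.continuous.continuousAt.eventually_ne hne] with t ht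
    rw [deriv_div (hb' t) (hψ' t) ht]
    simp only [c, Pi.div_apply]
    field_simp
  have hderiv : HasDerivAt c (deriv (deriv b) y -
      (deriv (b / ψ) y * deriv ψ y + (b / ψ) y * deriv (deriv ψ) y)) y :=
    (hdb y).hasDerivAt.sub
      (((hb' y).div (hψ' y) hne).hasDerivAt.mul (hdψ y).hasDerivAt)
  have hB₀ : 0 ≤ B₀ := (norm_nonneg _).trans hb₀
  have hbψ : ‖(b / ψ) y‖ ≤ B₀ / N := by rw [Pi.div_apply, norm_div]; gcongr
  have hbψ₁ : ‖deriv (b / ψ) y‖ ≤ (B₁ + B₀) / δ / N :=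
    norm_deriv_div_le (hb' y) (hψ' y) hN hψ₀ hψ₁ hb₀ hb₁
  have hc₀ : ‖c y‖ ≤ (B₁ + B₀) / δ :=
    calc ‖c y‖ ≤ ‖deriv b y‖ + ‖(b / ψ) y‖ * ‖deriv ψ y‖ := by
          rw [← norm_mul]; exact norm_sub_le _ _
      _ ≤ B₁ / δ + B₀ / N * (N / δ) := by gcongr
      _ = (B₁ + B₀) / δ := by field_simp
  have hc₁ : ‖deriv c y‖ ≤ (B₂ + B₁ + 2 * B₀) / δ / δ :=
    calc ‖deriv c y‖ ≤ ‖deriv (deriv b) y‖ +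
          (‖deriv (b / ψ) y‖ * ‖deriv ψ y‖ + ‖(b / ψ) y‖ * ‖deriv (deriv ψ) y‖) := by
          rw [hderiv.deriv, ← norm_mul, ← norm_mul]
          exact (norm_sub_le _ _).trans (by gcongr; exact norm_add_le _ _)
      _ ≤ B₂ / δ ^ 2 + ((B₁ + B₀) / δ / N * (N / δ) + B₀ / N * (N / δ ^ 2)) := by
          gcongr
          exact (norm_nonneg _).trans hbψ₁
      _ = (B₂ + B₁ + 2 * B₀) / δ / δ := by field_simp; ring
  rw [hquot.deriv_eq]
  refine (norm_deriv_div_le hderiv.differentiableAt (hψ' y) hN hψ₀ hψ₁ hc₀ hc₁).trans_eq ?_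
  field_simp
  ring

lemma integral_cexp_mul_eq_deriv_div (hφ : ∀ y, HasDerivAt (fun t => (φ t : ℂ)) (ψ y) y)
    (hψ : ContDiff ℝ 1 ψ) (hb : ContDiff ℝ 1 b) {T : Set ℝ} (hT : MeasurableSet T)
    (hvol : volume T < ⊤) (hsupp : tsupport b ⊆ T) (hN : 0 < N) (hψ₀ : ∀ y ∈ T, N ≤ ‖ψ y‖)
    (hψ₁ : ∀ y ∈ T, ‖deriv ψ y‖ ≤ N / δ) (hb₀ : ∀ y ∈ T, ‖b y‖ ≤ B₀)
    (hb₁ : ∀ y ∈ T, ‖deriv b y‖ ≤ B₁ / δ) :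
    ∫ y, Complex.exp (Complex.I * φ y) * b y =
      Complex.I * ∫ y, Complex.exp (Complex.I * φ y) * deriv (b / ψ) y := by
  have hne : ∀ y ∈ T, ψ y ≠ 0 := fun y hy => norm_pos_iff.1 (hN.trans_le (hψ₀ y hy))
  have hw : ContDiff ℝ 1 (b / ψ) :=
    contDiff_div_of_ne_zero_on_tsupport hb hψ fun y hy => hne y (hsupp hy)
  have hsuppw : tsupport (b / ψ) ⊆ T := (tsupport_div_subset_left b ψ).trans hsupp
  have hcancel : ψ * (b / ψ) = b := by
    funext y
    by_cases hy : y ∈ T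
    · exact mul_div_cancel₀ _ (hne y hy)
    · simp [image_eq_zero_of_notMem_tsupport fun h => hy (hsupp h)]
  have hbi : Integrable b := integrable_of_norm_le_of_support_subset hb.continuous hT hvol
    ((subset_tsupport b).trans hsupp) hb₀
  have hwi : Integrable (b / ψ) :=
    integrable_of_norm_le_of_support_subset (A := B₀ / N) hw.continuous hT hvol
      ((subset_tsupport _).trans hsuppw) fun y hy => by
        have hB₀ := (norm_nonneg _).trans (hb₀ y hy)
        rw [Pi.div_apply, norm_div]
        exact div_le_div₀ hB₀ (hb₀ y hy) hN (hψ₀ y hy)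
  have hwi' : Integrable (deriv (b / ψ)) :=
    integrable_of_norm_le_of_support_subset (hw.continuous_deriv le_rfl) hT hvol
      (support_deriv_subset.trans hsuppw) fun y hy =>
        norm_deriv_div_le (hb.differentiable one_ne_zero y) (hψ.differentiable one_ne_zero y) hN
          (hψ₀ y hy) (hψ₁ y hy) (hb₀ y hy) (hb₁ y hy)
  have hparts := integral_cexp_mul_deriv_mul hφ (hw.differentiable one_ne_zero) hwi hwi'
    (by rwa [hcancel])
  rwa [hcancel] at hparts

-- Integrating by parts twice gains the factor `(δ * N)⁻¹ ^ 2` over the trivial bound.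
lemma norm_integral_cexp_mul_le_of_deriv_bounds
    (hφ : ∀ y, HasDerivAt (fun t => (φ t : ℂ)) (ψ y) y) (hψ : ContDiff ℝ 2 ψ)
    (hb : ContDiff ℝ 2 b) {T : Set ℝ} (hT : MeasurableSet T) (hδ : 0 < δ)
    (hvol : volume T ≤ ENNReal.ofReal δ) (hsupp : tsupport b ⊆ T) (hN : 0 < N)
    (hψ₀ : ∀ y ∈ T, N ≤ ‖ψ y‖) (hψ₁ : ∀ y ∈ T, ‖deriv ψ y‖ ≤ N / δ)
    (hψ₂ : ∀ y ∈ T, ‖deriv (deriv ψ) y‖ ≤ N / δ ^ 2) (hb₀ : ∀ y ∈ T, ‖b y‖ ≤ B₀)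
    (hb₁ : ∀ y ∈ T, ‖deriv b y‖ ≤ B₁ / δ) (hb₂ : ∀ y ∈ T, ‖deriv (deriv b) y‖ ≤ B₂ / δ ^ 2)
    (hB : 0 ≤ B₂ + 3 * B₁ + 4 * B₀) :
    ‖∫ y, Complex.exp (Complex.I * φ y) * b y‖ ≤
      (B₂ + 3 * B₁ + 4 * B₀) * δ / (δ * N) ^ 2 := by
  have hfin : volume T < ⊤ := hvol.trans_lt ENNReal.ofReal_lt_top
  have hψ' : ContDiff ℝ 1 ψ := hψ.of_le one_le_two
  have hb' : ContDiff ℝ 1 b := hb.of_le one_le_two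
  set w : ℝ → ℂ := deriv (b / ψ)
  have hw : ContDiff ℝ 1 w := by
    have hquot : ContDiff ℝ (1 + 1) (b / ψ) :=
      contDiff_div_of_ne_zero_on_tsupport hb hψ fun y hy =>
        norm_pos_iff.1 (hN.trans_le (hψ₀ y (hsupp hy)))
    exact (contDiff_succ_iff_deriv.1 hquot).2.2
  have hsuppw : tsupport w ⊆ T :=
    (tsupport_deriv_subset.trans (tsupport_div_subset_left b ψ)).trans hsupp
  have hw₀ : ∀ y ∈ T, ‖w y‖ ≤ (B₁ + B₀) / δ / N := fun y hy =>
    norm_deriv_div_le (hb'.differentiable one_ne_zero y) (hψ'.differentiable one_ne_zero y) hN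
      (hψ₀ y hy) (hψ₁ y hy) (hb₀ y hy) (hb₁ y hy)
  have hw₁ : ∀ y ∈ T, ‖deriv w y‖ ≤ (B₂ + 2 * B₁ + 3 * B₀) / δ / N / δ := fun y hy =>
    (norm_deriv_deriv_div_le hb hψ hN (hψ₀ y hy) (hψ₁ y hy) (hψ₂ y hy) (hb₀ y hy) (hb₁ y hy)
      (hb₂ y hy)).trans_eq (by field_simp)
  rw [integral_cexp_mul_eq_deriv_div hφ hψ' hb' hT hfin hsupp hN hψ₀ hψ₁ hb₀ hb₁,
    integral_cexp_mul_eq_deriv_div hφ hψ' hw hT hfin hsuppw hN hψ₀ hψ₁ hw₀ hw₁,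
    norm_mul, norm_mul, Complex.norm_I, one_mul, one_mul]
  calc ‖∫ y, Complex.exp (Complex.I * φ y) * deriv (w / ψ) y‖
      ≤ (B₂ + 3 * B₁ + 4 * B₀) / (δ * N) ^ 2 * δ :=
        norm_integral_cexp_mul_le_of_support_subset hδ.le hvol
          (support_deriv_subset.trans ((tsupport_div_subset_left w ψ).trans hsuppw))
          (by positivity) fun y hy =>
            (norm_deriv_div_le (hw.differentiable one_ne_zero y)
              (hψ'.differentiable one_ne_zero y) hN (hψ₀ y hy) (hψ₁ y hy) (hw₀ y hy)
              (hw₁ y hy)).trans_eq (by field_simp; ring)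
    _ = (B₂ + 3 * B₁ + 4 * B₀) * δ / (δ * N) ^ 2 := by ring

lemma deriv_comp_ofReal {f : ℝ → ℝ} (hf : Differentiable ℝ f) :
    deriv (fun t => (f t : ℂ)) = fun t => ((deriv f t : ℝ) : ℂ) :=
  funext fun t => (hf t).hasDerivAt.ofReal_comp.deriv

theorem norm_integral_cexp_mul_le_inv_one_add_sq (hφ : ContDiff ℝ 3 φ) (hb : ContDiff ℝ 2 b)
    (hδ : 0 < δ) (hN : 0 ≤ N) (hvol : volume (tsupport b) ≤ ENNReal.ofReal δ)
    (hφ₁ : ∀ y ∈ tsupport b, N ≤ |deriv φ y|)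
    (hφ₂ : ∀ y ∈ tsupport b, |deriv (deriv φ) y| ≤ N / δ)
    (hφ₃ : ∀ y ∈ tsupport b, |deriv (deriv (deriv φ)) y| ≤ N / δ ^ 2)
    (hb₀ : ∀ y, ‖b y‖ ≤ B₀) (hb₁ : ∀ y, ‖deriv b y‖ ≤ B₁ / δ)
    (hb₂ : ∀ y, ‖deriv (deriv b) y‖ ≤ B₂ / δ ^ 2) :
    ‖∫ y, Complex.exp (Complex.I * φ y) * b y‖ ≤
      (B₂ + 3 * B₁ + 5 * B₀) * δ * (1 + (δ * N) ^ 2)⁻¹ := by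
  have hB₀ : 0 ≤ B₀ := (norm_nonneg _).trans (hb₀ 0)
  have hB₁ : 0 ≤ B₁ := by
    simpa only [le_div_iff₀ hδ, zero_mul] using (norm_nonneg _).trans (hb₁ 0)
  have hB₂ : 0 ≤ B₂ := by
    simpa only [le_div_iff₀ (pow_pos hδ 2), zero_mul] using (norm_nonneg _).trans (hb₂ 0)
  have htrivial : ‖∫ y, Complex.exp (Complex.I * φ y) * b y‖ ≤ B₀ * δ :=
    norm_integral_cexp_mul_le_of_support_subset hδ.le hvol (subset_tsupport b) hB₀
      fun y _ => hb₀ y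
  obtain rfl | hNpos := hN.eq_or_lt
  · refine htrivial.trans ?_
    rw [mul_zero, zero_pow two_ne_zero, add_zero, inv_one, mul_one]
    gcongr
    linarith
  have hφ' : ContDiff ℝ 2 (deriv φ) := (contDiff_succ_iff_deriv.1 hφ).2.2
  have hderiv₁ := deriv_comp_ofReal (hφ'.differentiable two_ne_zero)
  have hderiv₂ := deriv_comp_ofReal hφ'.differentiable_deriv_two
  have hparts := norm_integral_cexp_mul_le_of_deriv_bounds (ψ := fun y => ((deriv φ y : ℝ) : ℂ))
    (fun y => (hφ.differentiable three_ne_zero y).hasDerivAt.ofReal_comp)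
    (Complex.ofRealCLM.contDiff.comp hφ') hb (isClosed_tsupport b).measurableSet hδ hvol
    subset_rfl hNpos (by simpa only [Complex.norm_real, Real.norm_eq_abs] using hφ₁)
    (by simpa only [hderiv₁, Complex.norm_real, Real.norm_eq_abs] using hφ₂)
    (by simpa only [hderiv₁, hderiv₂, Complex.norm_real, Real.norm_eq_abs] using hφ₃)
    (fun y _ => hb₀ y) (fun y _ => hb₁ y) (fun y _ => hb₂ y) (by positivity)
  rw [le_div_iff₀ (by positivity)] at hparts
  rw [← div_eq_mul_inv, le_div_iff₀ (by positivity)]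
  linarith

end NonstationaryPhase

section MixedDifference

variable {E : Type*}

/-- The mixed difference of `f` in the directions `p - p'` and `h`, i.e. the alternating sum of
`f` over the vertices `p`, `p + h`, `p'`, `p' + h` of a parallelogram. -/
def mixedDifference [Add E] (f : E → ℝ) (h p p' : E) : ℝ :=
  f p - f (p + h) - (f p' - f (p' + h))

variable [NormedAddCommGroup E] [NormedSpace ℝ E] {f : E → ℝ}

lemma fderiv_fderiv_apply (hf : ContDiff ℝ 2 f) (p u v : E) :
    fderiv ℝ (fun q => fderiv ℝ f q u) p v = fderiv ℝ (fderiv ℝ f) p v u := by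
  have hdiff : DifferentiableAt ℝ (fderiv ℝ f) p :=
    (hf.fderiv_right (m := 1) le_rfl).differentiable one_ne_zero p
  rw [fderiv_clm_apply hdiff (differentiableAt_const u)]
  simp

lemma exists_mem_segment_fderiv_eq_sub (hf : Differentiable ℝ f) (p u : E) :
    ∃ z ∈ segment ℝ p (p + u), f (p + u) - f p = fderiv ℝ f z u := by
  simpa only [add_sub_cancel_left] using domain_mvt
    (fun z _ => (hf z).hasFDerivAt.hasFDerivWithinAt) convex_univ (Set.mem_univ p)
    (Set.mem_univ (p + u))

lemma exists_mixedDifference_eq_fderiv_fderiv (hf : ContDiff ℝ 2 f) {h p p' : E} {s : Set E}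
    (hp : p ∈ s) (hph : p + h ∈ s) (hp' : p' ∈ s) (hp'h : p' + h ∈ s) :
    ∃ ξ ∈ convexHull ℝ s, mixedDifference f h p p' = fderiv ℝ (fderiv ℝ f) ξ h (p' - p) := by
  have hf' : Differentiable ℝ f := hf.differentiable two_ne_zero
  have hfu : Differentiable ℝ fun q => fderiv ℝ f q (p' - p) :=
    ((hf.fderiv_right (m := 1) le_rfl).clm_apply contDiff_const).differentiable one_ne_zero
  have hfh : Differentiable ℝ fun q => f (q + h) := hf'.comp (differentiable_id.add_const h)
  obtain ⟨q, hq, hq_eq⟩ := exists_mem_segment_fderiv_eq_sub (hfh.sub hf') p (p' - p)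
  obtain ⟨ξ, hξ, hξ_eq⟩ := exists_mem_segment_fderiv_eq_sub hfu q h
  rw [add_sub_cancel] at hq hq_eq
  have hq_mem : q ∈ convexHull ℝ s := segment_subset_convexHull hp hp' hq
  have hqh_mem : q + h ∈ convexHull ℝ s :=
    segment_subset_convexHull hph hp'h <| by
      simpa only [add_comm _ h] using (mem_segment_translate ℝ h).2 hq
  refine ⟨ξ, (convex_convexHull ℝ s).segment_subset hq_mem hqh_mem hξ, ?_⟩
  have hderiv : fderiv ℝ ((fun q => f (q + h)) - f) q = fderiv ℝ f (q + h) - fderiv ℝ f q := by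
    rw [fderiv_sub (hfh q) (hf' q), fderiv_comp_add_right]
  rw [← fderiv_fderiv_apply hf, ← hξ_eq, ← sub_apply, ← hderiv, ← hq_eq,
    mixedDifference, Pi.sub_apply, Pi.sub_apply]
  ring

end MixedDifference

section PartialDerivatives

variable {f g φ : ℝ × ℝ → ℝ} {n : WithTop ℕ∞}

lemma pdx_eq_fderiv (hf : Differentiable ℝ f) : pdx f = fun p => fderiv ℝ f p (1, 0) :=
  funext fun p => ((hf p).hasFDerivAt.comp_hasDerivAt p.1
    ((hasDerivAt_id p.1).prodMk (hasDerivAt_const p.1 p.2))).deriv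

lemma pdy_eq_fderiv (hf : Differentiable ℝ f) : pdy f = fun p => fderiv ℝ f p (0, 1) :=
  funext fun p => ((hf p).hasFDerivAt.comp_hasDerivAt p.2
    ((hasDerivAt_const p.2 p.1).prodMk (hasDerivAt_id p.2))).deriv

lemma contDiff_pdx (hf : ContDiff ℝ (n + 1) f) : ContDiff ℝ n (pdx f) := by
  rw [pdx_eq_fderiv (hf.differentiable (by simp))]
  exact (hf.fderiv_right le_rfl).clm_apply contDiff_const

lemma contDiff_pdy (hf : ContDiff ℝ (n + 1) f) : ContDiff ℝ n (pdy f) := by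
  rw [pdy_eq_fderiv (hf.differentiable (by simp))]
  exact (hf.fderiv_right le_rfl).clm_apply contDiff_const

lemma pdx_sub (hf : Differentiable ℝ f) (hg : Differentiable ℝ g) :
    pdx (fun p => f p - g p) = fun p => pdx f p - pdx g p :=
  funext fun p => deriv_fun_sub (hf.comp (by fun_prop) p.1) (hg.comp (by fun_prop) p.1)

lemma pdy_sub (hf : Differentiable ℝ f) (hg : Differentiable ℝ g) :
    pdy (fun p => f p - g p) = fun p => pdy f p - pdy g p :=
  funext fun p => deriv_fun_sub (hf.comp (by fun_prop) p.2) (hg.comp (by fun_prop) p.2)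

lemma pdx_const_mul (c : ℝ) (f : ℝ × ℝ → ℝ) : pdx (fun p => c * f p) = fun p => c * pdx f p :=
  funext fun _ => deriv_const_mul_field c

lemma pdy_const_mul (c : ℝ) (f : ℝ × ℝ → ℝ) : pdy (fun p => c * f p) = fun p => c * pdy f p :=
  funext fun _ => deriv_const_mul_field c

lemma pdx_pdy_comm (hf : ContDiff ℝ 2 f) : pdx (pdy f) = pdy (pdx f) := by
  have hf' : Differentiable ℝ f := hf.differentiable two_ne_zero
  have hfx : ContDiff ℝ 1 (pdx f) := contDiff_pdx hf
  have hfy : ContDiff ℝ 1 (pdy f) := contDiff_pdy hf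
  rw [pdx_eq_fderiv (hfy.differentiable one_ne_zero),
    pdy_eq_fderiv (hfx.differentiable one_ne_zero), pdx_eq_fderiv hf', pdy_eq_fderiv hf']
  funext p
  rw [fderiv_fderiv_apply hf, fderiv_fderiv_apply hf]
  exact (hf.contDiffAt.isSymmSndFDerivAt (by simp)).eq _ _

lemma DOp_const_mul (c : ℝ) (φ : ℝ × ℝ → ℝ) :
    DOp (fun p => c * φ p) = fun p => c * DOp φ p := by
  simp only [DOp, pdx_const_mul, pdy_const_mul, ← mul_sub]

lemma pdy_DOp (hφ : ContDiff ℝ 4 φ) : pdy (DOp φ) = DOp (pdy φ) := by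
  have hφx : ContDiff ℝ 3 (pdx φ) := contDiff_pdx hφ
  have hφy : ContDiff ℝ 3 (pdy φ) := contDiff_pdy hφ
  have hsub : ContDiff ℝ 3 fun p => pdx φ p - pdy φ p := hφx.sub hφy
  rw [DOp, DOp, ← pdx_pdy_comm (contDiff_pdy hsub),
    pdy_sub (hφx.differentiable three_ne_zero) (hφy.differentiable three_ne_zero),
    pdx_pdy_comm (hφ.of_le (by norm_num))]

lemma DOp_eq_fderiv_fderiv_pdy (hφ : ContDiff ℝ 3 φ) (p : ℝ × ℝ) :
    DOp φ p = fderiv ℝ (fderiv ℝ (pdy φ)) p (1, -1) (1, 0) := by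
  have hφx : ContDiff ℝ 2 (pdx φ) := contDiff_pdx hφ
  have hφy : ContDiff ℝ 2 (pdy φ) := contDiff_pdy hφ
  have hφxy : ContDiff ℝ 1 (pdx (pdy φ)) := contDiff_pdx hφy
  have hφyy : ContDiff ℝ 1 (pdy (pdy φ)) := contDiff_pdy hφy
  have hdirection : ((1, -1) : ℝ × ℝ) = (1, 0) - (0, 1) := by simp
  rw [DOp, pdy_sub (hφx.differentiable two_ne_zero) (hφy.differentiable two_ne_zero),
    ← pdx_pdy_comm (hφ.of_le (by norm_num)), pdx_sub (hφxy.differentiable one_ne_zero)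
      (hφyy.differentiable one_ne_zero), pdx_pdy_comm hφy, hdirection, map_sub,
    sub_apply, ← fderiv_fderiv_apply hφy, ← fderiv_fderiv_apply hφy,
    ← pdx_eq_fderiv (hφy.differentiable two_ne_zero),
    pdx_eq_fderiv (hφxy.differentiable one_ne_zero),
    pdy_eq_fderiv (hφxy.differentiable one_ne_zero)]

lemma deriv_mixedDifference (hf : Differentiable ℝ f) (h : ℝ × ℝ) (x x' : ℝ) :
    deriv (fun y => mixedDifference f h (x, y) (x', y)) =
      fun y => mixedDifference (pdy f) h (x, y) (x', y) := by
  have hrow : ∀ c y, HasDerivAt (fun y => f (c, y)) (pdy f (c, y)) y := fun c y =>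
    (hf.comp (by fun_prop : Differentiable ℝ fun y => (c, y)) y).hasDerivAt
  exact funext fun y => (((hrow x y).sub ((hrow (x + h.1) (y + h.2)).comp_add_const y h.2)).sub
    ((hrow x' y).sub ((hrow (x' + h.1) (y + h.2)).comp_add_const y h.2))).deriv

lemma exists_abs_mixedDifference_pdy_eq (hφ : ContDiff ℝ 3 φ) {τ x x' y : ℝ} {s : Set (ℝ × ℝ)}
    (hp : (x, y) ∈ s) (hpτ : (x, y) + (-τ, τ) ∈ s) (hp' : (x', y) ∈ s)
    (hp'τ : (x', y) + (-τ, τ) ∈ s) :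
    ∃ ξ ∈ convexHull ℝ s,
      |mixedDifference (pdy φ) (-τ, τ) (x, y) (x', y)| = |τ| * |x - x'| * |DOp φ ξ| := by
  obtain ⟨ξ, hξ, heq⟩ :=
    exists_mixedDifference_eq_fderiv_fderiv (contDiff_pdy hφ) hp hpτ hp' hp'τ
  refine ⟨ξ, hξ, ?_⟩
  have hshear : ((-τ, τ) : ℝ × ℝ) = (-τ) • (1, -1) := by simp
  have hhorizontal : ((x', y) : ℝ × ℝ) - (x, y) = (x' - x) • (1, 0) := by simp
  rw [heq, hshear, hhorizontal, map_smul, map_smul, smul_apply,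
    ← DOp_eq_fderiv_fderiv_pdy hφ, smul_eq_mul, smul_eq_mul, abs_mul, abs_mul, abs_neg,
    abs_sub_comm x']
  ring

end PartialDerivatives

section DerivBounded

variable {n : ℕ} {A B : ℝ} {u v : ℝ → ℂ}

/-- `u` is `C^n` and its derivatives up to order `n` grow at most geometrically with ratio `A`,
i.e. `u` is bounded by `1` and varies at scale `A⁻¹`. -/
structure DerivBounded (n : ℕ) (A : ℝ) (u : ℝ → ℂ) : Prop where
  contDiff : ContDiff ℝ n u
  norm_iteratedDeriv_le : ∀ j ≤ n, ∀ y, ‖iteratedDeriv j u y‖ ≤ A ^ j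

namespace DerivBounded

lemma mul (hu : DerivBounded n A u) (hv : DerivBounded n B v) :
    DerivBounded n (A + B) fun y => u y * v y where
  contDiff := hu.contDiff.mul hv.contDiff
  norm_iteratedDeriv_le j hj y := by
    have hj' : (j : WithTop ℕ∞) ≤ n := by exact_mod_cast hj
    rw [add_pow, ← norm_iteratedFDeriv_eq_norm_iteratedDeriv]
    refine (norm_iteratedFDeriv_mul_le hu.contDiff hv.contDiff y hj').trans
      (Finset.sum_le_sum fun i hi => ?_)
    have hi' : i ≤ j := Finset.mem_range_succ_iff.1 hi
    have hui := hu.norm_iteratedDeriv_le i (hi'.trans hj) y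
    have hvi := hv.norm_iteratedDeriv_le (j - i) ((Nat.sub_le j i).trans hj) y
    rw [norm_iteratedFDeriv_eq_norm_iteratedDeriv, norm_iteratedFDeriv_eq_norm_iteratedDeriv,
      mul_assoc, mul_comm]
    have hAi : 0 ≤ A ^ i := (norm_nonneg _).trans hui
    gcongr

lemma conj (hu : DerivBounded n A u) : DerivBounded n A fun y => starRingEnd ℂ (u y) where
  contDiff := Complex.conjLIE.contDiff.comp hu.contDiff
  norm_iteratedDeriv_le j hj y := by
    rw [← norm_iteratedFDeriv_eq_norm_iteratedDeriv]
    refine (Complex.conjLIE.norm_iteratedFDeriv_comp_left u y j).trans_le ?_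
    rw [norm_iteratedFDeriv_eq_norm_iteratedDeriv]
    exact hu.norm_iteratedDeriv_le j hj y

lemma comp_add_const (hu : DerivBounded n A u) (s : ℝ) :
    DerivBounded n A fun y => u (y + s) where
  contDiff := hu.contDiff.comp (contDiff_id.add contDiff_const)
  norm_iteratedDeriv_le j hj y := by
    rw [iteratedDeriv_comp_add_const]
    exact hu.norm_iteratedDeriv_le j hj _

end DerivBounded

end DerivBounded

section Kernel

open scoped ComplexConjugate

variable {E : Type*}

/-- The multiplicative derivative `x ↦ f x * conj (f (x + h))` of `f` in the direction `h`. It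
turns the phase of `f` into a difference of phases. -/
def mulDeriv [Add E] (h : E) (f : E → ℂ) (x : E) : ℂ := f x * conj (f (x + h))

lemma norm_mulDeriv_le_one {E : Type*} [Add E] {f : E → ℂ} (hf : ∀ x, ‖f x‖ ≤ 1) (h x : E) :
    ‖mulDeriv h f x‖ ≤ 1 := by
  rw [mulDeriv, norm_mul, RCLike.norm_conj]
  exact mul_le_one₀ (hf _) (norm_nonneg _) (hf _)

lemma mulDeriv_cexp_mul_mul_conj [Add E] (φ : E → ℝ) (a : E → ℂ) (h p p' : E) :
    mulDeriv h (fun q => Complex.exp (Complex.I * φ q) * a q) p *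
        conj (mulDeriv h (fun q => Complex.exp (Complex.I * φ q) * a q) p') =
      Complex.exp (Complex.I * mixedDifference φ h p p') *
        (mulDeriv h a p * conj (mulDeriv h a p')) := by
  have hconj : ∀ t : ℝ, conj (Complex.exp (Complex.I * t)) = Complex.exp (-(Complex.I * t)) :=
    fun t => by rw [← Complex.exp_conj]; simp
  have hconj_neg : ∀ t : ℝ,
      conj (Complex.exp (-(Complex.I * t))) = Complex.exp (Complex.I * t) :=
    fun t => by rw [← hconj, Complex.conj_conj]
  have hsplit : Complex.I * mixedDifference φ h p p' =
      Complex.I * φ p + -(Complex.I * φ (p + h)) + -(Complex.I * φ p') +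
        Complex.I * φ (p' + h) := by
    rw [mixedDifference]; push_cast; ring
  simp only [mulDeriv, map_mul, Complex.conj_conj, hconj, hconj_neg, hsplit, Complex.exp_add]
  ring

lemma mem_tsupport_of_mem_tsupport {X Y M M' : Type*} [TopologicalSpace X] [TopologicalSpace Y]
    [Zero M] [Zero M'] {f : Y → M} {b : X → M'} {g : X → Y} (hg : Continuous g)
    (hfb : ∀ x, f (g x) = 0 → b x = 0) {x : X} (hx : x ∈ tsupport b) : g x ∈ tsupport f :=
  closure_minimal (t := g ⁻¹' tsupport f)
    (fun x hx => subset_tsupport f <| mt (hfb x) hx)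
    ((isClosed_tsupport f).preimage hg) hx

variable {a : ℝ × ℝ → ℂ} {φ : ℝ × ℝ → ℝ} {δ μ τ : ℝ} {J : Set ℝ}

lemma derivBounded_row (ha : ContDiff ℝ 2 a) (ha₀ : ∀ p, ‖a p‖ ≤ 1) (ha₁ : ∀ p, ‖pdyC a p‖ ≤ δ⁻¹)
    (ha₂ : ∀ p, ‖pdyC (pdyC a) p‖ ≤ δ⁻¹ ^ 2) (x : ℝ) :
    DerivBounded 2 δ⁻¹ fun y => a (x, y) where
  contDiff := ha.comp (contDiff_const.prodMk contDiff_id)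
  norm_iteratedDeriv_le j hj y := by
    interval_cases j
    · simpa using ha₀ (x, y)
    · rw [iteratedDeriv_one, pow_one]
      exact ha₁ (x, y)
    · rw [iteratedDeriv_succ, iteratedDeriv_one]
      exact ha₂ (x, y)

lemma DerivBounded.mulDeriv_row {n : ℕ} {A : ℝ} (ha : ∀ x, DerivBounded n A fun y => a (x, y))
    (h : ℝ × ℝ) (x : ℝ) : DerivBounded n (A + A) fun y => mulDeriv h a (x, y) :=
  (ha x).mul ((ha (x + h.1)).comp_add_const h.2).conj

lemma mem_tsupport_of_mem_tsupport_mulDeriv_mul_conj {h : ℝ × ℝ} {x x' y : ℝ}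
    (hy : y ∈ tsupport fun y => mulDeriv h a (x, y) * conj (mulDeriv h a (x', y))) :
    (x, y) ∈ tsupport a ∧ (x, y) + h ∈ tsupport a ∧
      (x', y) ∈ tsupport a ∧ (x', y) + h ∈ tsupport a := by
  refine ⟨mem_tsupport_of_mem_tsupport (g := fun y => (x, y)) (by fun_prop) (fun y ha => ?_) hy,
    mem_tsupport_of_mem_tsupport (g := fun y => (x, y) + h) (by fun_prop) (fun y ha => ?_) hy,
    mem_tsupport_of_mem_tsupport (g := fun y => (x', y)) (by fun_prop) (fun y ha => ?_) hy,
    mem_tsupport_of_mem_tsupport (g := fun y => (x', y) + h) (by fun_prop) (fun y ha => ?_) hy⟩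
  all_goals simp [mulDeriv, ha]

lemma abs_deriv_mixedDifference_bounds {s : Set (ℝ × ℝ)} (hφ : ContDiff ℝ 5 φ)
    (hD : ∀ p ∈ convexHull ℝ s, μ ≤ |DOp φ p| ∧ |pdy (DOp φ) p| ≤ μ * δ⁻¹ ∧
      |pdy (pdy (DOp φ)) p| ≤ μ * δ⁻¹ ^ 2)
    {x x' y : ℝ} (hp : (x, y) ∈ s) (hpτ : (x, y) + (-τ, τ) ∈ s) (hp' : (x', y) ∈ s)
    (hp'τ : (x', y) + (-τ, τ) ∈ s) :
    let Φ : ℝ → ℝ := fun y => mixedDifference φ (-τ, τ) (x, y) (x', y)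
    let N : ℝ := |τ| * |x - x'| * μ
    N ≤ |deriv Φ y| ∧ |deriv (deriv Φ) y| ≤ N / δ ∧ |deriv (deriv (deriv Φ)) y| ≤ N / δ ^ 2 := by
  intro Φ N
  have hφ₁ : ContDiff ℝ 4 (pdy φ) := contDiff_pdy hφ
  have hφ₂ : ContDiff ℝ 3 (pdy (pdy φ)) := contDiff_pdy hφ₁
  have hDφ : pdy (DOp φ) = DOp (pdy φ) := pdy_DOp (hφ.of_le (by norm_num))
  have hDDφ : pdy (pdy (DOp φ)) = DOp (pdy (pdy φ)) := by rw [hDφ, pdy_DOp hφ₁]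
  have hΦ₁ : deriv Φ = fun y => mixedDifference (pdy φ) (-τ, τ) (x, y) (x', y) :=
    deriv_mixedDifference (hφ.differentiable (by norm_num)) _ x x'
  have hΦ₂ : deriv (deriv Φ) = fun y => mixedDifference (pdy (pdy φ)) (-τ, τ) (x, y) (x', y) := by
    rw [hΦ₁, deriv_mixedDifference (hφ₁.differentiable (by norm_num))]
  have hΦ₃ : deriv (deriv (deriv Φ)) =
      fun y => mixedDifference (pdy (pdy (pdy φ))) (-τ, τ) (x, y) (x', y) := by
    rw [hΦ₂, deriv_mixedDifference (hφ₂.differentiable (by norm_num))]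
  rw [hΦ₃, hΦ₂, hΦ₁, mul_div_assoc, mul_div_assoc, div_eq_mul_inv, div_eq_mul_inv, ← inv_pow]
  refine ⟨?_, ?_, ?_⟩
  · obtain ⟨ξ, hξ, heq⟩ :=
      exists_abs_mixedDifference_pdy_eq (hφ.of_le (by norm_num)) hp hpτ hp' hp'τ
    rw [heq]
    exact mul_le_mul_of_nonneg_left (hD ξ hξ).1 (by positivity)
  · obtain ⟨ξ, hξ, heq⟩ :=
      exists_abs_mixedDifference_pdy_eq (hφ₁.of_le (by norm_num)) hp hpτ hp' hp'τ
    rw [heq, ← hDφ]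
    gcongr
    exact (hD ξ hξ).2.1
  · obtain ⟨ξ, hξ, heq⟩ := exists_abs_mixedDifference_pdy_eq hφ₂ hp hpτ hp' hp'τ
    rw [heq, ← hDDφ]
    gcongr
    exact (hD ξ hξ).2.2

theorem norm_integral_mulDeriv_mul_conj_le (hδ : 0 < δ) (hμ : 0 ≤ μ)
    (hJ : volume J ≤ ENNReal.ofReal δ) (hsupp : ∀ p ∈ tsupport a, p.2 ∈ J)
    (ha : ContDiff ℝ 2 a) (ha₀ : ∀ p, ‖a p‖ ≤ 1) (ha₁ : ∀ p, ‖pdyC a p‖ ≤ δ⁻¹)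
    (ha₂ : ∀ p, ‖pdyC (pdyC a) p‖ ≤ δ⁻¹ ^ 2) (hφ : ContDiff ℝ 5 φ)
    (hD : ∀ p ∈ convexHull ℝ (tsupport a), μ ≤ |DOp φ p| ∧ |pdy (DOp φ) p| ≤ μ * δ⁻¹ ∧
      |pdy (pdy (DOp φ)) p| ≤ μ * δ⁻¹ ^ 2) (τ x x' : ℝ) :
    ‖∫ y, mulDeriv (-τ, τ) (fun q => Complex.exp (Complex.I * φ q) * a q) (x, y) *
        conj (mulDeriv (-τ, τ) (fun q => Complex.exp (Complex.I * φ q) * a q) (x', y))‖ ≤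
      33 * δ * (1 + (δ * (μ * |τ|) * (x - x')) ^ 2)⁻¹ := by
  set b : ℝ → ℂ := fun y => mulDeriv (-τ, τ) a (x, y) * conj (mulDeriv (-τ, τ) a (x', y))
  have hrow := DerivBounded.mulDeriv_row (derivBounded_row ha ha₀ ha₁ ha₂) (-τ, τ)
  have hb : DerivBounded 2 (δ⁻¹ + δ⁻¹ + (δ⁻¹ + δ⁻¹)) b := (hrow x).mul (hrow x').conj
  have hb₂ := hb.norm_iteratedDeriv_le 2 le_rfl
  rw [iteratedDeriv_succ, iteratedDeriv_one] at hb₂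
  have hphase_bounds := fun y (hy : y ∈ tsupport b) =>
    have ⟨hp, hpτ, hp', hp'τ⟩ := mem_tsupport_of_mem_tsupport_mulDeriv_mul_conj hy
    abs_deriv_mixedDifference_bounds hφ hD hp hpτ hp' hp'τ
  have hphase : ContDiff ℝ 3 fun y => mixedDifference φ (-τ, τ) (x, y) (x', y) := by
    have := hφ.of_le (m := 3) (by norm_num)
    unfold mixedDifference
    fun_prop
  have hvol : volume (tsupport b) ≤ ENNReal.ofReal δ :=
    (measure_mono fun y hy =>
      hsupp _ (mem_tsupport_of_mem_tsupport_mulDeriv_mul_conj hy).1).trans hJ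
  simp only [mulDeriv_cexp_mul_mul_conj]
  refine (norm_integral_cexp_mul_le_inv_one_add_sq (N := |τ| * |x - x'| * μ) (B₀ := 1) (B₁ := 4)
    (B₂ := 16) hphase hb.contDiff hδ (by positivity) hvol (fun y hy => (hphase_bounds y hy).1)
    (fun y hy => (hphase_bounds y hy).2.1) (fun y hy => (hphase_bounds y hy).2.2)
    (fun y => ?_) (fun y => ?_) (fun y => ?_)).trans_eq ?_
  · simpa using hb.norm_iteratedDeriv_le 0 zero_le_two y
  · have hb₁ := hb.norm_iteratedDeriv_le 1 one_le_two y
    rw [iteratedDeriv_one] at hb₁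
    exact hb₁.trans_eq (by ring)
  · exact (hb₂ y).trans_eq (by ring)
  · have habs : (δ * (|τ| * |x - x'| * μ)) ^ 2 = (δ * (μ * |τ|) * (x - x')) ^ 2 := by
      linear_combination (δ * |τ| * μ) ^ 2 * sq_abs (x - x')
    rw [habs]
    ring

end Kernel

section TTStar

open scoped ComplexConjugate ENNReal

variable {X Y : Type*} [MeasurableSpace X] [MeasurableSpace Y] {μ : Measure X} {ν : Measure Y}

lemma sq_rpow_inv_two (z : ℝ≥0∞) : (z ^ (2⁻¹ : ℝ)) ^ 2 = z :=
  mod_cast ENNReal.rpow_inv_natCast_pow two_ne_zero z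

lemma sq_lintegral_mul_le {f g : X → ℝ≥0∞} (hf : AEMeasurable f μ) (hg : AEMeasurable g μ) :
    (∫⁻ x, f x * g x ∂μ) ^ 2 ≤ (∫⁻ x, f x ^ 2 ∂μ) * ∫⁻ x, g x ^ 2 ∂μ := by
  have hHolder := ENNReal.lintegral_mul_le_Lp_mul_Lq μ Real.HolderConjugate.two_two hf hg
  simp only [Pi.mul_apply, ENNReal.rpow_two] at hHolder
  refine (pow_le_pow_left' hHolder 2).trans_eq ?_
  rw [mul_pow, ← ENNReal.rpow_two, ← ENNReal.rpow_two, ← ENNReal.rpow_mul, ← ENNReal.rpow_mul]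
  norm_num

lemma sq_eLpNorm_two (f : X → ℂ) : eLpNorm f 2 μ ^ 2 = ∫⁻ x, ‖f x‖ₑ ^ 2 ∂μ := by
  simpa using eLpNorm_nnreal_pow_eq_lintegral (μ := μ) (f := f) (p := 2) two_ne_zero

lemma integrable_indicator_of_lintegral_sq_ne_top {f : X → ℂ} {s : Set X} (hf : Measurable f)
    (hf₂ : ∫⁻ x, ‖f x‖ₑ ^ 2 ∂μ ≠ ∞) (hs : MeasurableSet s) (hμs : μ s ≠ ∞) :
    Integrable (s.indicator f) μ := by
  have : IsFiniteMeasure (μ.restrict s) := isFiniteMeasure_restrict.2 hμs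
  have hmem : MemLp f 2 μ := by
    refine ⟨hf.aestronglyMeasurable, ?_⟩
    rw [← sq_eLpNorm_two] at hf₂
    exact lt_top_iff_ne_top.2 fun htop => hf₂ (by rw [htop, ENNReal.top_pow two_ne_zero])
  exact (integrable_indicator_iff hs).2 ((hmem.restrict s).integrable one_le_two)

variable [SFinite μ]

lemma integral_prod_mul_conj (f : X → ℂ) :
    ∫ q : X × X, f q.1 * conj (f q.2) ∂(μ.prod μ) = ((‖∫ x, f x ∂μ‖ ^ 2 : ℝ) : ℂ) := by
  rw [integral_prod_mul f (fun x => conj (f x)), integral_conj, Complex.mul_conj,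
    Complex.normSq_eq_norm_sq]

variable [SFinite ν] {g : X → Y → ℂ}

lemma lintegral_sq_enorm_integral_eq
    (hg : Integrable (fun q : (X × X) × Y => g q.1.1 q.2 * conj (g q.1.2 q.2))
      ((μ.prod μ).prod ν)) :
    ∫⁻ y, ‖∫ x, g x y ∂μ‖ₑ ^ 2 ∂ν =
      ‖∫ q : (X × X) × Y, g q.1.1 q.2 * conj (g q.1.2 q.2) ∂((μ.prod μ).prod ν)‖ₑ := by
  have hrow : ∀ y, ∫ q : X × X, g q.1 y * conj (g q.2 y) ∂(μ.prod μ) =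
      ((‖∫ x, g x y ∂μ‖ ^ 2 : ℝ) : ℂ) := fun y => integral_prod_mul_conj fun x => g x y
  have hsq : Integrable (fun y => ‖∫ x, g x y ∂μ‖ ^ 2) ν :=
    (hg.integral_prod_right.congr (.of_forall hrow)).re
  rw [integral_prod_symm _ hg]
  simp only [hrow]
  rw [integral_complex_ofReal, ← ofReal_norm, Complex.norm_real,
    Real.norm_of_nonneg (integral_nonneg fun y => sq_nonneg _),
    ofReal_integral_eq_lintegral_ofReal hsq (.of_forall fun y => sq_nonneg _)]
  simp only [ENNReal.ofReal_pow (norm_nonneg _), ofReal_norm]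

theorem sq_enorm_integral_mul_integral_le {G : Y → ℂ} (hG : AEMeasurable G ν)
    (hg : Measurable (Function.uncurry g))
    (hgg : Integrable (fun q : (X × X) × Y => g q.1.1 q.2 * conj (g q.1.2 q.2))
      ((μ.prod μ).prod ν)) :
    ‖∫ y, G y * ∫ x, g x y ∂μ ∂ν‖ₑ ^ 2 ≤ (∫⁻ y, ‖G y‖ₑ ^ 2 ∂ν) *
      ‖∫ q : (X × X) × Y, g q.1.1 q.2 * conj (g q.1.2 q.2) ∂((μ.prod μ).prod ν)‖ₑ := by
  have hint : Measurable fun y => ∫ x, g x y ∂μ :=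
    hg.stronglyMeasurable.integral_prod_left.measurable
  rw [← lintegral_sq_enorm_integral_eq hgg]
  refine le_trans ?_ (sq_lintegral_mul_le hG.enorm hint.enorm.aemeasurable)
  gcongr
  refine (enorm_integral_le_lintegral_enorm _).trans_eq ?_
  simp only [enorm_mul]

end TTStar

section Correlation

open scoped ComplexConjugate ENNReal

lemma enorm_mulDeriv {E : Type*} [Add E] (h : E) (f : E → ℂ) (x : E) :
    ‖mulDeriv h f x‖ₑ = ‖f x‖ₑ * ‖f (x + h)‖ₑ := by
  rw [mulDeriv, enorm_mul, RCLike.enorm_conj]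

@[fun_prop]
lemma measurable_mulDeriv {α E : Type*} [Add E] [MeasurableSpace E] [MeasurableAdd₂ E]
    [MeasurableSpace α] {f : E → ℂ} {h x : α → E} (hf : Measurable f) (hh : Measurable h)
    (hx : Measurable x) : Measurable fun q => mulDeriv (h q) f (x q) :=
  (hf.comp hx).mul (Complex.continuous_conj.measurable.comp (hf.comp (hx.add hh)))

variable {G : Type*} [AddCommGroup G] [MeasurableSpace G] [MeasurableAdd₂ G] {ν : Measure G}

lemma measurable_lintegral_enorm_mulDeriv_pow [SFinite ν] {f : G → ℂ} (hf : Measurable f) (n : ℕ) :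
    Measurable fun h => ∫⁻ x, ‖mulDeriv h f x‖ₑ ^ n ∂ν :=
  Measurable.lintegral_prod_right (f := fun h x => ‖mulDeriv h f x‖ₑ ^ n) (by fun_prop)

variable [ν.IsAddLeftInvariant]

lemma lintegral_mul_comp_add_le {u : G → ℝ≥0∞} (hu : Measurable u) (h : G) :
    ∫⁻ x, u x * u (x + h) ∂ν ≤ ∫⁻ x, u x ^ 2 ∂ν := by
  have hCS := sq_lintegral_mul_le (μ := ν) hu.aemeasurable
    (hu.comp (measurable_add_const h)).aemeasurable
  simp only [Function.comp_def] at hCS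
  rw [lintegral_add_right_eq_self (fun x => u x ^ 2) h, ← sq] at hCS
  exact (ENNReal.pow_le_pow_left_iff two_ne_zero).1 hCS

lemma lintegral_enorm_mulDeriv_le {f : G → ℂ} (hf : Measurable f) (h : G) :
    ∫⁻ x, ‖mulDeriv h f x‖ₑ ∂ν ≤ ∫⁻ x, ‖f x‖ₑ ^ 2 ∂ν := by
  simpa only [enorm_mulDeriv] using lintegral_mul_comp_add_le hf.enorm h

lemma integrable_mulDeriv {f : G → ℂ} (hf : Measurable f) (hf₂ : ∫⁻ x, ‖f x‖ₑ ^ 2 ∂ν ≠ ∞) (h : G) :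
    Integrable (mulDeriv h f) ν :=
  ⟨(measurable_mulDeriv hf measurable_const measurable_id).aestronglyMeasurable,
    (lintegral_enorm_mulDeriv_le hf h).trans_lt hf₂.lt_top⟩

lemma lintegral_enorm_mulDeriv_neg_pow (f : G → ℂ) (h : G) (n : ℕ) :
    ∫⁻ x, ‖mulDeriv (-h) f x‖ₑ ^ n ∂ν = ∫⁻ x, ‖mulDeriv h f x‖ₑ ^ n ∂ν := by
  rw [← lintegral_add_right_eq_self _ h]
  simp only [enorm_mulDeriv, add_neg_cancel_right, mul_comm]

variable [SFinite ν]

lemma lintegral_lintegral_enorm_mulDeriv_pow {f : G → ℂ} (hf : Measurable f) (n : ℕ) :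
    ∫⁻ h, ∫⁻ x, ‖mulDeriv h f x‖ₑ ^ n ∂ν ∂ν = (∫⁻ x, ‖f x‖ₑ ^ n ∂ν) ^ 2 := by
  rw [lintegral_lintegral_swap (by fun_prop), sq, ← lintegral_mul_const _ (by fun_prop)]
  refine lintegral_congr fun x => ?_
  simp only [enorm_mulDeriv, mul_pow]
  rw [lintegral_const_mul _ (by fun_prop), lintegral_add_left_eq_self (fun y => ‖f y‖ₑ ^ n)]

lemma lintegral_prod_mul_mul_comp_sub_le [MeasurableNeg G] {u κ : G → ℝ≥0∞} (hu : Measurable u)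
    (hκ : Measurable κ) :
    ∫⁻ p : G × G, u p.1 * u p.2 * κ (p.1 - p.2) ∂(ν.prod ν) ≤
      (∫⁻ s, κ s ∂ν) * ∫⁻ x, u x ^ 2 ∂ν := by
  rw [lintegral_prod_symm _ (by fun_prop)]
  calc ∫⁻ x', ∫⁻ x, u x * u x' * κ (x - x') ∂ν ∂ν
      = ∫⁻ x', ∫⁻ s, u (x' + s) * u x' * κ s ∂ν ∂ν := by
        refine lintegral_congr fun x' => ?_
        rw [← lintegral_add_left_eq_self _ x']
        simp only [add_sub_cancel_left]
    _ = ∫⁻ s, κ s * ∫⁻ x', u x' * u (x' + s) ∂ν ∂ν := by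
        rw [lintegral_lintegral_swap (by fun_prop)]
        refine lintegral_congr fun s => ?_
        rw [← lintegral_const_mul _ (by fun_prop)]
        exact lintegral_congr fun x' => by ring
    _ ≤ ∫⁻ s, κ s * ∫⁻ x, u x ^ 2 ∂ν ∂ν :=
        lintegral_mono fun s => mul_le_mul_right (lintegral_mul_comp_add_le hu s) _
    _ = _ := lintegral_mul_const _ hκ

end Correlation

section BilinearForm

open scoped ComplexConjugate ENNReal

variable {X Y : Type*} [MeasurableSpace X] [MeasurableSpace Y] {μ : Measure X} {ν : Measure Y}
  {F : X → ℂ} {H : Y → ℂ} {K : X × Y → ℂ} {J : Set Y}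

lemma integrable_mul_mul_conj_of_norm_le_indicator (hF : Integrable F μ) (hK : Measurable K)
    (hJ : MeasurableSet J) (hJfin : ν J ≠ ∞) (hKJ : ∀ p, ‖K p‖ ≤ J.indicator 1 p.2) :
    Integrable (fun q : (X × X) × Y => F q.1.1 * K (q.1.1, q.2) * conj (F q.1.2 * K (q.1.2, q.2)))
      ((μ.prod μ).prod ν) := by
  have hconj : Measurable (conj : ℂ → ℂ) := Complex.continuous_conj.measurable
  have hind : Integrable (J.indicator (1 : Y → ℂ)) ν :=
    (integrable_indicator_iff hJ).2 (integrableOn_const hJfin)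
  have hFF : Integrable (fun q : X × X => F q.1 * conj (F q.2)) (μ.prod μ) :=
    hF.mul_prod (Complex.conjCLE.integrable_comp_iff.2 hF)
  have hdom : Integrable (fun q : (X × X) × Y => F q.1.1 * conj (F q.1.2) * J.indicator 1 q.2 *
      (K (q.1.1, q.2) * conj (K (q.1.2, q.2)))) ((μ.prod μ).prod ν) := by
    refine (hFF.mul_prod hind).mul_bdd (c := 1) (by fun_prop) (.of_forall fun q => ?_)
    have hK₁ : ∀ p, ‖K p‖ ≤ 1 := fun p =>
      (hKJ p).trans (Set.indicator_le_self' (fun _ _ => zero_le_one) _)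
    rw [norm_mul, RCLike.norm_conj]
    exact mul_le_one₀ (hK₁ _) (norm_nonneg _) (hK₁ _)
  refine hdom.congr (.of_forall fun q => ?_)
  by_cases hq : q.2 ∈ J
  · simp only [Set.indicator_of_mem hq, Pi.one_apply, map_mul]
    ring
  · have hK₀ : ∀ x, K (x, q.2) = 0 := fun x => by
      simpa only [Set.indicator_of_notMem hq, norm_le_zero_iff] using hKJ (x, q.2)
    simp only [hK₀, mul_zero, zero_mul]

lemma lintegral_enorm_mul_mul_le [SFinite ν] (hF : AEMeasurable F μ) (hH : AEMeasurable H ν)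
    (hK : ∀ p, ‖K p‖ ≤ 1) :
    ∫⁻ p, ‖F p.1 * H p.2 * K p‖ₑ ∂(μ.prod ν) ≤ (∫⁻ x, ‖F x‖ₑ ∂μ) * ∫⁻ y, ‖H y‖ₑ ∂ν := by
  rw [← lintegral_prod_mul hF.enorm hH.enorm]
  refine lintegral_mono fun p => ?_
  have hKp : ‖K p‖ₑ ≤ 1 := by
    rw [← ofReal_norm]
    exact ENNReal.ofReal_le_one.2 (hK p)
  rw [enorm_mul, enorm_mul]
  exact mul_le_of_le_one_right' hKp

lemma integral_mul_mul_eq_integral_mul_integral [SFinite μ] [SFinite ν]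
    (hFHK : Integrable (fun p : X × Y => F p.1 * H p.2 * K p) (μ.prod ν)) :
    ∫ p : X × Y, F p.1 * H p.2 * K p ∂(μ.prod ν) = ∫ y, H y * ∫ x, F x * K (x, y) ∂μ ∂ν := by
  rw [integral_prod_symm _ hFHK]
  refine integral_congr_ae (.of_forall fun y => ?_)
  simp only [← integral_const_mul]
  exact integral_congr_ae (.of_forall fun x => by ring)

end BilinearForm

section BilinearFormGroup

open scoped ComplexConjugate ENNReal

variable {G Y : Type*} [AddCommGroup G] [MeasurableSpace G] [MeasurableAdd₂ G] [MeasurableNeg G]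
  [MeasurableSpace Y] {μ : Measure G} {ν : Measure Y} [SFinite μ] [μ.IsAddLeftInvariant] [SFinite ν]

theorem sq_enorm_integral_mul_mul_le {F : G → ℂ} {H : Y → ℂ} {K : G × Y → ℂ} {J : Set Y}
    {κ : G → ℝ≥0∞} (hF : Measurable F) (hFint : Integrable F μ) (hHint : Integrable H ν)
    (hK : Measurable K) (hJ : MeasurableSet J) (hJfin : ν J ≠ ∞)
    (hKJ : ∀ p, ‖K p‖ ≤ J.indicator 1 p.2) (hκ : Measurable κ)
    (hker : ∀ x x', ‖∫ y, K (x, y) * conj (K (x', y)) ∂ν‖ₑ ≤ κ (x - x')) :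
    ‖∫ p : G × Y, F p.1 * H p.2 * K p ∂(μ.prod ν)‖ₑ ^ 2 ≤
      (∫⁻ s, κ s ∂μ) * (∫⁻ x, ‖F x‖ₑ ^ 2 ∂μ) * ∫⁻ y, ‖H y‖ₑ ^ 2 ∂ν := by
  have hFHK : Integrable (fun p : G × Y => F p.1 * H p.2 * K p) (μ.prod ν) :=
    (hFint.mul_prod hHint).mul_bdd (c := 1) hK.aestronglyMeasurable (.of_forall fun p =>
      (hKJ p).trans (Set.indicator_le_self' (fun _ _ => zero_le_one) _))
  have hFKFK := integrable_mul_mul_conj_of_norm_le_indicator hFint hK hJ hJfin hKJ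
  have hker' : ∀ p : G × G, ‖∫ y, F p.1 * K (p.1, y) * conj (F p.2 * K (p.2, y)) ∂ν‖ₑ ≤
      ‖F p.1‖ₑ * ‖F p.2‖ₑ * κ (p.1 - p.2) := fun p => by
    calc ‖∫ y, F p.1 * K (p.1, y) * conj (F p.2 * K (p.2, y)) ∂ν‖ₑ
        = ‖∫ y, F p.1 * conj (F p.2) * (K (p.1, y) * conj (K (p.2, y))) ∂ν‖ₑ := by
          simp only [map_mul, mul_mul_mul_comm]
      _ ≤ ‖F p.1‖ₑ * ‖F p.2‖ₑ * κ (p.1 - p.2) := by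
          rw [integral_const_mul, enorm_mul, enorm_mul, RCLike.enorm_conj]
          gcongr
          exact hker _ _
  rw [integral_mul_mul_eq_integral_mul_integral hFHK]
  refine (sq_enorm_integral_mul_integral_le (g := fun x y => F x * K (x, y))
    hHint.aestronglyMeasurable.aemeasurable (by fun_prop) hFKFK).trans ?_
  rw [mul_comm]
  gcongr
  calc ‖∫ q, F q.1.1 * K (q.1.1, q.2) * conj (F q.1.2 * K (q.1.2, q.2)) ∂((μ.prod μ).prod ν)‖ₑ
      ≤ ∫⁻ p, ‖∫ y, F p.1 * K (p.1, y) * conj (F p.2 * K (p.2, y)) ∂ν‖ₑ ∂(μ.prod μ) := by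
        rw [integral_prod _ hFKFK]
        exact enorm_integral_le_lintegral_enorm _
    _ ≤ ∫⁻ p, ‖F p.1‖ₑ * ‖F p.2‖ₑ * κ (p.1 - p.2) ∂(μ.prod μ) := lintegral_mono hker'
    _ ≤ (∫⁻ s, κ s ∂μ) * ∫⁻ x, ‖F x‖ₑ ^ 2 ∂μ := lintegral_prod_mul_mul_comp_sub_le hF.enorm hκ

end BilinearFormGroup

section TrilinearForm

instance instMeasurableAdd₂Prod {α β : Type*} [Add α] [Add β] [MeasurableSpace α]
    [MeasurableSpace β] [MeasurableAdd₂ α] [MeasurableAdd₂ β] : MeasurableAdd₂ (α × β) :=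
  ⟨by
    simp only [Prod.add_def]
    fun_prop⟩

open scoped ComplexConjugate ENNReal

variable {G : Type*} [AddCommGroup G]

/-- The integrand of the trilinear form `∬ F₁ x * F₂ y * F₃ (x + y) * k (x, y)` on the fibre
`x + y = t`, parametrised by `y` and without the factor `F₃ t`. -/
def sumFiber (F₁ F₂ : G → ℂ) (k : G × G → ℂ) (y t : G) : ℂ := F₁ (t - y) * F₂ y * k (t - y, y)

lemma sumFiber_mul_conj_sumFiber (F₁ F₂ : G → ℂ) (k : G × G → ℂ) (τ x y : G) :
    sumFiber F₁ F₂ k y (x + y) * conj (sumFiber F₁ F₂ k (y + τ) (x + y)) =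
      mulDeriv (-τ) F₁ x * mulDeriv τ F₂ y * mulDeriv (-τ, τ) k (x, y) := by
  have hsub : x + y - (y + τ) = x + -τ := by abel
  simp only [sumFiber, mulDeriv, map_mul, add_sub_cancel_right, hsub, Prod.mk_add_mk]
  ring

lemma norm_mulDeriv_le_indicator {k : G × G → ℂ} {J : Set G}
    (hkJ : ∀ p, ‖k p‖ ≤ J.indicator 1 p.2) (h p : G × G) :
    ‖mulDeriv h k p‖ ≤ J.indicator 1 p.2 := by
  rw [mulDeriv, norm_mul, RCLike.norm_conj]
  exact (mul_le_of_le_one_right (norm_nonneg _) ((hkJ _).trans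
    (Set.indicator_le_self' (fun _ _ => zero_le_one) _))).trans (hkJ p)

variable [MeasurableSpace G] [MeasurableAdd₂ G] {ν : Measure G} [SFinite ν]
  [ν.IsAddLeftInvariant] {F₁ F₂ F₃ : G → ℂ} {k : G × G → ℂ}

lemma measurePreserving_sum_shear :
    MeasurePreserving (fun q : G × G × G => ((q.2.2, q.2.2 + q.1), q.2.1 + q.2.2))
      (ν.prod (ν.prod ν)) ((ν.prod ν).prod ν) := by
  have hshear : MeasurePreserving (fun p : (G × G) × G => ((p.1.1, p.1.1 + p.1.2), p.2 + p.1.1))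
      ((ν.prod ν).prod ν) ((ν.prod ν).prod ν) :=
    (measurePreserving_prod_add ν ν).skew_product (g := fun z x => x + z.1) (by fun_prop)
      (.of_forall fun z => map_add_right_eq_self ν z.1)
  exact hshear.comp <| Measure.measurePreserving_swap.comp <|
    (measurePreserving_prodAssoc ν ν ν).comp Measure.measurePreserving_swap

lemma lintegral_enorm_mulDeriv_mul_mul_le (hF₁ : Measurable F₁) (hF₂ : Measurable F₂)
    (hk₁ : ∀ p, ‖k p‖ ≤ 1) (τ : G) :
    ∫⁻ p : G × G, ‖mulDeriv (-τ) F₁ p.1 * mulDeriv τ F₂ p.2 * mulDeriv (-τ, τ) k p‖ₑ ∂(ν.prod ν) ≤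
      (∫⁻ x, ‖F₁ x‖ₑ ^ 2 ∂ν) * ∫⁻ y, ‖mulDeriv τ F₂ y‖ₑ ∂ν :=
  (lintegral_enorm_mul_mul_le (by fun_prop) (by fun_prop) (norm_mulDeriv_le_one hk₁ _)).trans
    (mul_le_mul_left (lintegral_enorm_mulDeriv_le hF₁ _) _)

lemma lintegral_sqrt_mul_sqrt_mulDeriv_le (hF₁ : Measurable F₁) (hF₂ : Measurable F₂) :
    ∫⁻ τ, (∫⁻ x, ‖mulDeriv τ F₁ x‖ₑ ^ 2 ∂ν) ^ (2⁻¹ : ℝ) *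
        (∫⁻ y, ‖mulDeriv τ F₂ y‖ₑ ^ 2 ∂ν) ^ (2⁻¹ : ℝ) ∂ν ≤
      (∫⁻ x, ‖F₁ x‖ₑ ^ 2 ∂ν) * ∫⁻ y, ‖F₂ y‖ₑ ^ 2 ∂ν := by
  have hCS := sq_lintegral_mul_le (μ := ν)
    ((measurable_lintegral_enorm_mulDeriv_pow (ν := ν) hF₁ 2).pow_const (2⁻¹ : ℝ)).aemeasurable
    ((measurable_lintegral_enorm_mulDeriv_pow (ν := ν) hF₂ 2).pow_const (2⁻¹ : ℝ)).aemeasurable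
  simp only [sq_rpow_inv_two, lintegral_lintegral_enorm_mulDeriv_pow hF₁,
    lintegral_lintegral_enorm_mulDeriv_pow hF₂, ← mul_pow] at hCS
  exact (ENNReal.pow_le_pow_left_iff two_ne_zero).1 hCS

variable [MeasurableNeg G]

lemma integral_trilinear_eq_integral_mul_integral (hF₁ : Measurable F₁) (hF₂ : Measurable F₂)
    (hF₃ : Measurable F₃) (hk : Measurable k)
    (hint : Integrable (fun p : G × G => F₁ p.1 * F₂ p.2 * F₃ (p.1 + p.2) * k p) (ν.prod ν)) :
    ∫ p : G × G, F₁ p.1 * F₂ p.2 * F₃ (p.1 + p.2) * k p ∂(ν.prod ν) =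
      ∫ t, F₃ t * ∫ y, sumFiber F₁ F₂ k y t ∂ν ∂ν := by
  have hmeas : Measurable fun p : G × G => F₁ p.1 * F₂ p.2 * F₃ (p.1 + p.2) * k p := by fun_prop
  have hmp : MeasurePreserving (fun z : G × G => (-z.2 + z.1, z.2)) (ν.prod ν) (ν.prod ν) :=
    Measure.measurePreserving_swap.comp (measurePreserving_prod_neg_add_swap ν ν)
  nth_rw 1 [← hmp.map_eq]
  rw [integral_map hmp.aemeasurable (by fun_prop)]
  refine (integral_prod _ ((hmp.integrable_comp hmeas.aestronglyMeasurable).2 hint)).trans ?_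
  refine integral_congr_ae (.of_forall fun t => ?_)
  simp only [← integral_const_mul]
  refine integral_congr_ae (.of_forall fun y => ?_)
  simp only [Function.comp_apply, sumFiber, neg_add_eq_sub, sub_add_cancel]
  ring

lemma integrable_mulDeriv_mul_mul (hF₁ : Measurable F₁) (hF₂ : Measurable F₂)
    (hF₁₂ : ∫⁻ x, ‖F₁ x‖ₑ ^ 2 ∂ν ≠ ∞) (hF₂int : Integrable F₂ ν)
    (hk : Measurable k) (hk₁ : ∀ p, ‖k p‖ ≤ 1) :
    Integrable (fun q : G × G × G => mulDeriv (-q.1) F₁ q.2.1 * mulDeriv q.1 F₂ q.2.2 *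
      mulDeriv (-q.1, q.1) k q.2) (ν.prod (ν.prod ν)) := by
  have hmeas : Measurable fun q : G × G × G => mulDeriv (-q.1) F₁ q.2.1 * mulDeriv q.1 F₂ q.2.2 *
      mulDeriv (-q.1, q.1) k q.2 := by fun_prop
  have htotal := lintegral_lintegral_enorm_mulDeriv_pow (ν := ν) hF₂ 1
  simp only [pow_one] at htotal
  refine ⟨hmeas.aestronglyMeasurable, ?_⟩
  rw [hasFiniteIntegral_iff_enorm, lintegral_prod _ hmeas.enorm.aemeasurable]
  calc ∫⁻ τ, ∫⁻ p : G × G, ‖mulDeriv (-τ) F₁ p.1 * mulDeriv τ F₂ p.2 *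
        mulDeriv (-τ, τ) k p‖ₑ ∂(ν.prod ν) ∂ν
      ≤ ∫⁻ τ, (∫⁻ x, ‖F₁ x‖ₑ ^ 2 ∂ν) * ∫⁻ y, ‖mulDeriv τ F₂ y‖ₑ ∂ν ∂ν :=
        lintegral_mono (lintegral_enorm_mulDeriv_mul_mul_le hF₁ hF₂ hk₁)
    _ = (∫⁻ x, ‖F₁ x‖ₑ ^ 2 ∂ν) * (∫⁻ y, ‖F₂ y‖ₑ ∂ν) ^ 2 := by
        rw [lintegral_const_mul' _ _ hF₁₂, htotal]
    _ < ∞ := ENNReal.mul_lt_top hF₁₂.lt_top (ENNReal.pow_lt_top hF₂int.2)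

theorem sq_enorm_trilinear_le_lintegral (hF₁ : Measurable F₁) (hF₂ : Measurable F₂)
    (hF₃ : Measurable F₃) (hF₁₂ : ∫⁻ x, ‖F₁ x‖ₑ ^ 2 ∂ν ≠ ∞) (hF₂int : Integrable F₂ ν)
    (hk : Measurable k) (hk₁ : ∀ p, ‖k p‖ ≤ 1) :
    ‖∫ p : G × G, F₁ p.1 * F₂ p.2 * F₃ (p.1 + p.2) * k p ∂(ν.prod ν)‖ₑ ^ 2 ≤
      (∫⁻ t, ‖F₃ t‖ₑ ^ 2 ∂ν) *
        ∫⁻ τ, ‖∫ p : G × G, mulDeriv (-τ) F₁ p.1 * mulDeriv τ F₂ p.2 *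
          mulDeriv (-τ, τ) k p ∂(ν.prod ν)‖ₑ ∂ν := by
  by_cases hint :
      Integrable (fun p : G × G => F₁ p.1 * F₂ p.2 * F₃ (p.1 + p.2) * k p) (ν.prod ν)
  swap
  · rw [integral_undef hint]
    simp
  set Q : (G × G) × G → ℂ := fun q =>
    sumFiber F₁ F₂ k q.1.1 q.2 * conj (sumFiber F₁ F₂ k q.1.2 q.2)
  set R : G × G × G → ℂ := fun q =>
    mulDeriv (-q.1) F₁ q.2.1 * mulDeriv q.1 F₂ q.2.2 * mulDeriv (-q.1, q.1) k q.2
  have hfiber : Measurable (Function.uncurry (sumFiber F₁ F₂ k)) := by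
    unfold sumFiber
    fun_prop
  have hQmeas : Measurable Q :=
    (hfiber.comp (by fun_prop : Measurable fun q : (G × G) × G => (q.1.1, q.2))).mul <|
      Complex.continuous_conj.measurable.comp <|
        hfiber.comp (by fun_prop : Measurable fun q : (G × G) × G => (q.1.2, q.2))
  have hQR : ∀ q : G × G × G, Q ((q.2.2, q.2.2 + q.1), q.2.1 + q.2.2) = R q := fun q =>
    sumFiber_mul_conj_sumFiber F₁ F₂ k q.1 q.2.1 q.2.2
  have hRint : Integrable R (ν.prod (ν.prod ν)) :=
    integrable_mulDeriv_mul_mul hF₁ hF₂ hF₁₂ hF₂int hk hk₁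
  have hQint : Integrable Q ((ν.prod ν).prod ν) :=
    (measurePreserving_sum_shear.integrable_comp hQmeas.aestronglyMeasurable).1 <|
      hRint.congr (.of_forall fun q => (hQR q).symm)
  have hQRint : ∫ q, Q q ∂((ν.prod ν).prod ν) = ∫ q, R q ∂(ν.prod (ν.prod ν)) := by
    rw [← measurePreserving_sum_shear.map_eq,
      integral_map measurePreserving_sum_shear.aemeasurable hQmeas.aestronglyMeasurable]
    exact integral_congr_ae (.of_forall hQR)
  rw [integral_trilinear_eq_integral_mul_integral hF₁ hF₂ hF₃ hk hint]
  refine (sq_enorm_integral_mul_integral_le hF₃.aemeasurable hfiber hQint).trans ?_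
  gcongr
  rw [hQRint, integral_prod _ hRint]
  exact enorm_integral_le_lintegral_enorm _

lemma enorm_integral_mulDeriv_mul_mul_le {J : Set G} {c : ℝ≥0∞} {κ : G → ℝ≥0∞} {τ : G}
    (hF₁ : Measurable F₁) (hF₂ : Measurable F₂) (hF₁₂ : ∫⁻ x, ‖F₁ x‖ₑ ^ 2 ∂ν ≠ ∞)
    (hF₂₂ : ∫⁻ x, ‖F₂ x‖ₑ ^ 2 ∂ν ≠ ∞) (hk : Measurable k) (hJ : MeasurableSet J)
    (hJfin : ν J ≠ ∞) (hkJ : ∀ p, ‖k p‖ ≤ J.indicator 1 p.2) (hκ : Measurable κ)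
    (hκc : ∫⁻ s, κ s ∂ν ≤ c ^ 2)
    (hker : ∀ x x', ‖∫ y, mulDeriv (-τ, τ) k (x, y) * conj (mulDeriv (-τ, τ) k (x', y)) ∂ν‖ₑ ≤
      κ (x - x')) :
    ‖∫ p : G × G, mulDeriv (-τ) F₁ p.1 * mulDeriv τ F₂ p.2 * mulDeriv (-τ, τ) k p ∂(ν.prod ν)‖ₑ ≤
      c * ((∫⁻ x, ‖mulDeriv τ F₁ x‖ₑ ^ 2 ∂ν) ^ (2⁻¹ : ℝ) *
        (∫⁻ y, ‖mulDeriv τ F₂ y‖ₑ ^ 2 ∂ν) ^ (2⁻¹ : ℝ)) := by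
  rw [← ENNReal.pow_le_pow_left_iff two_ne_zero, mul_pow, mul_pow, sq_rpow_inv_two,
    sq_rpow_inv_two, ← lintegral_enorm_mulDeriv_neg_pow F₁ τ 2, ← mul_assoc]
  refine (sq_enorm_integral_mul_mul_le (μ := ν) (ν := ν) (F := mulDeriv (-τ) F₁)
    (H := mulDeriv τ F₂) (K := mulDeriv (-τ, τ) k) (by fun_prop) (integrable_mulDeriv hF₁ hF₁₂ _)
    (integrable_mulDeriv hF₂ hF₂₂ _) (by fun_prop) hJ hJfin (norm_mulDeriv_le_indicator hkJ _)
    hκ hker).trans ?_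
  gcongr

lemma sq_enorm_trilinear_le_of_integrable {J T : Set G} {c : ℝ≥0∞} {κ : G → G → ℝ≥0∞}
    (hF₁ : Measurable F₁) (hF₂ : Measurable F₂) (hF₃ : Measurable F₃)
    (hF₁₂ : ∫⁻ x, ‖F₁ x‖ₑ ^ 2 ∂ν ≠ ∞) (hF₂₂ : ∫⁻ x, ‖F₂ x‖ₑ ^ 2 ∂ν ≠ ∞)
    (hF₂int : Integrable F₂ ν) (hk : Measurable k) (hJ : MeasurableSet J) (hJfin : ν J ≠ ∞)
    (hkJ : ∀ p, ‖k p‖ ≤ J.indicator 1 p.2) (hT : MeasurableSet T)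
    (hκ : ∀ τ ∉ T, Measurable (κ τ)) (hκc : ∀ τ ∉ T, ∫⁻ s, κ τ s ∂ν ≤ c ^ 2)
    (hker : ∀ τ ∉ T, ∀ x x',
      ‖∫ y, mulDeriv (-τ, τ) k (x, y) * conj (mulDeriv (-τ, τ) k (x', y)) ∂ν‖ₑ ≤ κ τ (x - x')) :
    ‖∫ p : G × G, F₁ p.1 * F₂ p.2 * F₃ (p.1 + p.2) * k p ∂(ν.prod ν)‖ₑ ^ 2 ≤
      (∫⁻ t, ‖F₃ t‖ₑ ^ 2 ∂ν) *
        ((∫⁻ x, ‖F₁ x‖ₑ ^ 2 ∂ν) * (∫⁻ y, ‖F₂ y‖ₑ ^ 2 ∂ν) * (ν T + c)) := by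
  have hk₁ : ∀ p, ‖k p‖ ≤ 1 := fun p =>
    (hkJ p).trans (Set.indicator_le_self' (fun _ _ => zero_le_one) _)
  set n₁ := ∫⁻ x, ‖F₁ x‖ₑ ^ 2 ∂ν
  set n₂ := ∫⁻ y, ‖F₂ y‖ₑ ^ 2 ∂ν
  set B : G → ℝ≥0∞ := fun τ => (∫⁻ x, ‖mulDeriv τ F₁ x‖ₑ ^ 2 ∂ν) ^ (2⁻¹ : ℝ) *
    (∫⁻ y, ‖mulDeriv τ F₂ y‖ₑ ^ 2 ∂ν) ^ (2⁻¹ : ℝ)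
  have hB : Measurable B :=
    ((measurable_lintegral_enorm_mulDeriv_pow (ν := ν) hF₁ 2).pow_const _).mul
      ((measurable_lintegral_enorm_mulDeriv_pow (ν := ν) hF₂ 2).pow_const _)
  refine (sq_enorm_trilinear_le_lintegral hF₁ hF₂ hF₃ hF₁₂ hF₂int hk hk₁).trans ?_
  gcongr
  calc _ ≤ ∫⁻ τ, (T.indicator (fun _ => n₁ * n₂) τ + c * B τ) ∂ν := by
        refine lintegral_mono fun τ => ?_
        by_cases hτ : τ ∈ T
        · rw [Set.indicator_of_mem hτ]
          exact ((enorm_integral_le_lintegral_enorm _).trans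
            (lintegral_enorm_mulDeriv_mul_mul_le hF₁ hF₂ hk₁ τ)).trans <|
            (mul_le_mul_right (lintegral_enorm_mulDeriv_le hF₂ τ) n₁).trans le_self_add
        · exact (enorm_integral_mulDeriv_mul_mul_le hF₁ hF₂ hF₁₂ hF₂₂ hk hJ hJfin hkJ
            (hκ τ hτ) (hκc τ hτ) (hker τ hτ)).trans le_add_self
    _ = n₁ * n₂ * ν T + c * ∫⁻ τ, B τ ∂ν := by
        rw [lintegral_add_left (measurable_const.indicator hT), lintegral_indicator_const hT,
          lintegral_const_mul _ hB]
    _ ≤ n₁ * n₂ * ν T + c * (n₁ * n₂) := by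
        gcongr
        exact lintegral_sqrt_mul_sqrt_mulDeriv_le hF₁ hF₂
    _ = n₁ * n₂ * (ν T + c) := by ring

theorem sq_enorm_trilinear_le {J T : Set G} {c : ℝ≥0∞} {κ : G → G → ℝ≥0∞}
    (hF₁ : Measurable F₁) (hF₂ : Measurable F₂) (hF₃ : Measurable F₃)
    (hF₁₂ : ∫⁻ x, ‖F₁ x‖ₑ ^ 2 ∂ν ≠ ∞) (hF₂₂ : ∫⁻ x, ‖F₂ x‖ₑ ^ 2 ∂ν ≠ ∞)
    (hk : Measurable k) (hJ : MeasurableSet J) (hJfin : ν J ≠ ∞)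
    (hkJ : ∀ p, ‖k p‖ ≤ J.indicator 1 p.2) (hT : MeasurableSet T)
    (hκ : ∀ τ ∉ T, Measurable (κ τ)) (hκc : ∀ τ ∉ T, ∫⁻ s, κ τ s ∂ν ≤ c ^ 2)
    (hker : ∀ τ ∉ T, ∀ x x',
      ‖∫ y, mulDeriv (-τ, τ) k (x, y) * conj (mulDeriv (-τ, τ) k (x', y)) ∂ν‖ₑ ≤ κ τ (x - x')) :
    ‖∫ p : G × G, F₁ p.1 * F₂ p.2 * F₃ (p.1 + p.2) * k p ∂(ν.prod ν)‖ₑ ^ 2 ≤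
      (∫⁻ t, ‖F₃ t‖ₑ ^ 2 ∂ν) *
        ((∫⁻ x, ‖F₁ x‖ₑ ^ 2 ∂ν) * (∫⁻ y, ‖F₂ y‖ₑ ^ 2 ∂ν) * (ν T + c)) := by
  have hcut : ∫⁻ y, ‖J.indicator F₂ y‖ₑ ^ 2 ∂ν ≤ ∫⁻ y, ‖F₂ y‖ₑ ^ 2 ∂ν := by
    gcongr
    exact enorm_indicator_le_enorm_self _ _
  have hintegrand : ∀ p : G × G, F₁ p.1 * F₂ p.2 * F₃ (p.1 + p.2) * k p =
      F₁ p.1 * J.indicator F₂ p.2 * F₃ (p.1 + p.2) * k p := fun p => by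
    by_cases hp : p.2 ∈ J
    · rw [Set.indicator_of_mem hp]
    · have hkp : k p = 0 := by
        simpa only [Set.indicator_of_notMem hp, norm_le_zero_iff] using hkJ p
      simp only [hkp, mul_zero]
  simp only [hintegrand]
  refine (sq_enorm_trilinear_le_of_integrable hF₁ (hF₂.indicator hJ) hF₃ hF₁₂
    (ne_top_of_le_ne_top hF₂₂ hcut)
    (integrable_indicator_of_lintegral_sq_ne_top hF₂ hF₂₂ hJ hJfin) hk hJ hJfin hkJ hT hκ hκc
    hker).trans ?_
  gcongr

end TrilinearForm

section RealLine

open scoped ComplexConjugate ENNReal Real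

lemma lintegral_ofReal_mul_inv_one_add_sq {A δ M : ℝ} (hA : 0 ≤ A) (hδ : 0 < δ) (hM : 0 < M) :
    ∫⁻ s : ℝ, ENNReal.ofReal (A * δ * (1 + (δ * M * s) ^ 2)⁻¹) = ENNReal.ofReal (A * π / M) := by
  have hδM : δ * M ≠ 0 := by positivity
  have hint : Integrable fun s : ℝ => A * δ * (1 + (δ * M * s) ^ 2)⁻¹ :=
    (integrable_inv_one_add_sq.comp_mul_left' hδM).const_mul _
  rw [← ofReal_integral_eq_lintegral_ofReal hint (.of_forall fun s => by positivity),
    integral_const_mul, Measure.integral_comp_mul_left (fun x => (1 + x ^ 2)⁻¹) (δ * M),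
    integral_univ_inv_one_add_sq, abs_of_pos (by positivity), smul_eq_mul]
  congr 1
  field_simp

lemma lintegral_sq_enorm_Lp_two {X : Type*} [MeasurableSpace X] {μ : Measure X}
    (f : Lp ℂ 2 μ) : ∫⁻ x, ‖f x‖ₑ ^ 2 ∂μ = ENNReal.ofReal (‖f‖ ^ 2) := by
  rw [← sq_eLpNorm_two, ← Lp.enorm_def, ENNReal.ofReal_pow (norm_nonneg _), ofReal_norm]

lemma sq_rpow_neg_inv_six {m : ℝ} (hm : 0 ≤ m) :
    (m ^ (-(1 / 6) : ℝ)) ^ 2 = m ^ (-(1 / 3) : ℝ) := by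
  rw [← Real.rpow_mul_natCast hm]
  norm_num

lemma mul_cube_rpow_neg_inv_three {m : ℝ} (hm : 0 < m) : m * (m ^ (-(1 / 3) : ℝ)) ^ 3 = 1 := by
  rw [← Real.rpow_mul_natCast hm.le]
  norm_num [Real.rpow_neg_one, hm.ne']

lemma lintegral_ofReal_mul_inv_one_add_sq_le {A δ m τ : ℝ} (hA : 0 ≤ A) (hδ : 0 < δ) (hm : 0 < m)
    (hτ : m ^ (-(1 / 3) : ℝ) < |τ|) :
    ∫⁻ s : ℝ, ENNReal.ofReal (A * δ * (1 + (δ * (m * |τ|) * s) ^ 2)⁻¹) ≤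
      ENNReal.ofReal (√(A * π) * m ^ (-(1 / 3) : ℝ)) ^ 2 := by
  have hcube := mul_cube_rpow_neg_inv_three hm
  have hτ₀ : 0 < m ^ (-(1 / 3) : ℝ) := Real.rpow_pos_of_pos hm _
  generalize m ^ (-(1 / 3) : ℝ) = τ₀ at *
  have hM : 0 < m * |τ| := mul_pos hm (hτ₀.trans hτ)
  rw [lintegral_ofReal_mul_inv_one_add_sq hA hδ hM, ← ENNReal.ofReal_pow (by positivity), mul_pow,
    Real.sq_sqrt (by positivity)]
  refine ENNReal.ofReal_le_ofReal ((div_le_iff₀ hM).2 ?_)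
  calc A * π = A * π * τ₀ ^ 2 * (m * τ₀) := by linear_combination (-A * π) * hcube
    _ ≤ A * π * τ₀ ^ 2 * (m * |τ|) := by gcongr

variable {A δ m : ℝ} {J : Set ℝ} {k : ℝ × ℝ → ℂ}

-- The threshold `m ^ (-1/3)` balances the measure of the small shifts `τ`, for which the `τ`-form
-- is bounded trivially, against the bound `√(A * π / (m * |τ|))` for the large ones.
lemma sq_norm_trilinear_le_of_kernel_bound (hA : 0 ≤ A) (hδ : 0 < δ) (hm : 0 < m)
    (hJ : volume J ≠ ∞) (hk : Measurable k) (hkJ : ∀ p, ‖k p‖ ≤ J.indicator 1 p.2)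
    (hker : ∀ τ x x', ‖∫ y, mulDeriv (-τ, τ) k (x, y) * conj (mulDeriv (-τ, τ) k (x', y))‖ ≤
      A * δ * (1 + (δ * (m * |τ|) * (x - x')) ^ 2)⁻¹)
    (f₁ f₂ f₃ : Lp ℂ 2 (volume : Measure ℝ)) :
    ‖∫ p : ℝ × ℝ, f₁ p.1 * f₂ p.2 * f₃ (p.1 + p.2) * k p‖ ^ 2 ≤
      ‖f₃‖ ^ 2 * (‖f₁‖ ^ 2 * ‖f₂‖ ^ 2 * ((2 + √(A * π)) * m ^ (-(1 / 3) : ℝ))) := by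
  have hfm : ∀ f : Lp ℂ 2 (volume : Measure ℝ), Measurable f := fun f =>
    (Lp.stronglyMeasurable f).measurable
  have hf₂ : ∀ f : Lp ℂ 2 (volume : Measure ℝ), ∫⁻ x, ‖f x‖ₑ ^ 2 ≠ ∞ := fun f => by
    rw [lintegral_sq_enorm_Lp_two]
    exact ENNReal.ofReal_ne_top
  have htri := sq_enorm_trilinear_le (J := toMeasurable volume J)
    (T := Set.Icc (-m ^ (-(1 / 3) : ℝ)) (m ^ (-(1 / 3) : ℝ))) (hfm f₁) (hfm f₂) (hfm f₃)
    (hf₂ f₁) (hf₂ f₂) hk (measurableSet_toMeasurable _ _) (by rwa [measure_toMeasurable])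
    (fun p => (hkJ p).trans (Set.indicator_le_indicator_of_subset (subset_toMeasurable _ _)
      (fun _ => zero_le_one) _)) measurableSet_Icc (fun τ _ => by fun_prop)
    (fun τ hτ => lintegral_ofReal_mul_inv_one_add_sq_le hA hδ hm
      (not_le.1 fun hle => hτ (abs_le.1 hle)))
    (fun τ _ x x' => by
      rw [← ofReal_norm]
      exact ENNReal.ofReal_le_ofReal (hker τ x x'))
  have hτ₀ : 0 < m ^ (-(1 / 3) : ℝ) := Real.rpow_pos_of_pos hm _
  generalize m ^ (-(1 / 3) : ℝ) = τ₀ at *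
  have hT : τ₀ - -τ₀ + √(A * π) * τ₀ = (2 + √(A * π)) * τ₀ := by ring
  rwa [Real.volume_Icc, lintegral_sq_enorm_Lp_two, lintegral_sq_enorm_Lp_two,
    lintegral_sq_enorm_Lp_two, ← ENNReal.ofReal_add (by linarith) (by positivity), hT,
    ← ENNReal.ofReal_mul (by positivity), ← ENNReal.ofReal_mul (by positivity),
    ← ENNReal.ofReal_mul (by positivity), ← ofReal_norm, ← ENNReal.ofReal_pow (norm_nonneg _),
    ENNReal.ofReal_le_ofReal_iff (by positivity)] at htri

theorem norm_trilinear_le_of_kernel_bound (hA : 0 ≤ A) (hδ : 0 < δ) (hm : 0 < m)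
    (hJ : volume J ≠ ∞) (hk : Measurable k) (hkJ : ∀ p, ‖k p‖ ≤ J.indicator 1 p.2)
    (hker : ∀ τ x x', ‖∫ y, mulDeriv (-τ, τ) k (x, y) * conj (mulDeriv (-τ, τ) k (x', y))‖ ≤
      A * δ * (1 + (δ * (m * |τ|) * (x - x')) ^ 2)⁻¹)
    (f₁ f₂ f₃ : Lp ℂ 2 (volume : Measure ℝ)) :
    ‖∫ p : ℝ × ℝ, f₁ p.1 * f₂ p.2 * f₃ (p.1 + p.2) * k p‖ ≤
      √(2 + √(A * π)) * m ^ (-(1 / 6) : ℝ) * ‖f₁‖ * ‖f₂‖ * ‖f₃‖ := by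
  refine le_of_sq_le_sq ?_ (by positivity)
  refine (sq_norm_trilinear_le_of_kernel_bound hA hδ hm hJ hk hkJ hker f₁ f₂ f₃).trans_eq ?_
  rw [mul_pow, mul_pow, mul_pow, mul_pow, Real.sq_sqrt (by positivity), sq_rpow_neg_inv_six hm.le]
  ring

end RealLine

theorem norm_trilinear_cexp_le {δ m : ℝ} (hδ : 0 < δ) (hm : 0 < m) {a : ℝ × ℝ → ℂ} {J : Set ℝ}
    (hJ : volume J ≤ ENNReal.ofReal δ) (ha : ContDiff ℝ 2 a) (hsupp : ∀ p ∈ tsupport a, p.2 ∈ J)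
    (ha₀ : ∀ p, ‖a p‖ ≤ 1) (ha₁ : ∀ p, ‖pdyC a p‖ ≤ δ⁻¹)
    (ha₂ : ∀ p, ‖pdyC (pdyC a) p‖ ≤ δ⁻¹ ^ 2) {φ : ℝ × ℝ → ℝ} (hφ : ContDiff ℝ 5 φ)
    (hD : ∀ p ∈ convexHull ℝ (tsupport a), m ≤ |DOp φ p| ∧ |pdy (DOp φ) p| ≤ m * δ⁻¹ ∧
      |pdy (pdy (DOp φ)) p| ≤ m * δ⁻¹ ^ 2) (f₁ f₂ f₃ : Lp ℂ 2 (volume : Measure ℝ)) :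
    ‖∫ p : ℝ × ℝ, f₁ p.1 * f₂ p.2 * f₃ (p.1 + p.2) * (Complex.exp (Complex.I * φ p) * a p)‖ ≤
      √(2 + √(33 * Real.pi)) * m ^ (-(1 / 6) : ℝ) * ‖f₁‖ * ‖f₂‖ * ‖f₃‖ := by
  have hk : Continuous fun p => Complex.exp (Complex.I * φ p) * a p := by
    have := hφ.continuous
    have := ha.continuous
    fun_prop
  have hkJ : ∀ p, ‖Complex.exp (Complex.I * φ p) * a p‖ ≤ J.indicator 1 p.2 := fun p => by
    rw [norm_mul, Complex.norm_exp_I_mul_ofReal, one_mul]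
    by_cases hp : p.2 ∈ J
    · rw [Set.indicator_of_mem hp, Pi.one_apply]
      exact ha₀ p
    · rw [Set.indicator_of_notMem hp, image_eq_zero_of_notMem_tsupport (mt (hsupp p) hp), norm_zero]
  exact norm_trilinear_le_of_kernel_bound (by norm_num) hδ hm
    (ne_top_of_le_ne_top ENNReal.ofReal_ne_top hJ) hk.measurable hkJ
    (norm_integral_mulDeriv_mul_conj_le hδ hm.le hJ hsupp ha ha₀ ha₁ ha₂ hφ hD) f₁ f₂ f₃

theorem trilinear_van_der_corput_general {δ μ lam : ℝ} (hδ : 0 < δ) (hμ : 0 < μ) (hlam : lam ≠ 0)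
    {a : ℝ × ℝ → ℂ} {J : Set ℝ} (hJ : volume J ≤ ENNReal.ofReal δ) (ha : ContDiff ℝ 2 a)
    (hsupp : ∀ p ∈ tsupport a, p.2 ∈ J) (ha₀ : ∀ p, ‖a p‖ ≤ 1) (ha₁ : ∀ p, ‖pdyC a p‖ ≤ δ⁻¹)
    (ha₂ : ∀ p, ‖pdyC (pdyC a) p‖ ≤ δ⁻¹ ^ 2) {S : ℝ × ℝ → ℝ} (hS : ContDiff ℝ 5 S)
    (hD : ∀ p ∈ convexHull ℝ (tsupport a), μ ≤ |DOp S p| ∧ |pdy (DOp S) p| ≤ μ * δ⁻¹ ∧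
      |pdy (pdy (DOp S)) p| ≤ μ * δ⁻¹ ^ 2) (f₁ f₂ f₃ : Lp ℂ 2 (volume : Measure ℝ)) :
    ‖∫ p : ℝ × ℝ, Complex.exp (Complex.I * lam * S p) *
        f₁ p.1 * f₂ p.2 * f₃ (p.1 + p.2) * a p‖ ≤
      √(2 + √(33 * Real.pi)) * |lam * μ| ^ (-(1 / 6) : ℝ) * ‖f₁‖ * ‖f₂‖ * ‖f₃‖ := by
  have hm : 0 < |lam * μ| := abs_pos.2 (mul_ne_zero hlam hμ.ne')
  have hphase : ContDiff ℝ 5 fun p => lam * S p := contDiff_const.mul hS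
  refine le_trans (le_of_eq ?_) (norm_trilinear_cexp_le hδ hm hJ ha hsupp ha₀ ha₁ ha₂ hphase
    (fun p hp => ?_) f₁ f₂ f₃)
  · congr 2 with p
    push_cast
    ring_nf
  · obtain ⟨hD₀, hD₁, hD₂⟩ := hD p hp
    simp only [DOp_const_mul, pdy_const_mul, abs_mul, abs_of_pos hμ, mul_assoc]
    exact ⟨by gcongr, by gcongr, by gcongr⟩

/-- Trilinear analogue of the Phong–Stein operator van der Corput
lemma (Theorem `local` of the paper). -/
theorem trilinear_van_der_corput :
    ∃ C : ℝ, ∀ δ₁ δ₂ μ lam : ℝ, 0 < δ₁ → δ₁ ≤ 1 → 0 < δ₂ → δ₂ ≤ 1 → 0 < μ → lam ≠ 0 →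
      ∀ (a : ℝ × ℝ → ℂ) (I J : Set ℝ), I.OrdConnected → J.OrdConnected →
        volume I ≤ ENNReal.ofReal δ₁ → volume J ≤ ENNReal.ofReal δ₂ →
        ContDiff ℝ (⊤ : ℕ∞) a → tsupport a ⊆ I ×ˢ J →
        (∀ p : ℝ × ℝ, ‖a p‖ ≤ 1) →
        (∀ p : ℝ × ℝ, ‖pdyC a p‖ ≤ δ₂⁻¹) →
        (∀ p : ℝ × ℝ, ‖pdyC (pdyC a) p‖ ≤ δ₂⁻¹ ^ 2) →
        ∀ S : ℝ × ℝ → ℝ, ContDiff ℝ (⊤ : ℕ∞) S →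
        (∀ p ∈ convexHull ℝ (tsupport a),
          μ ≤ |DOp S p| ∧ |pdy (DOp S) p| ≤ μ * δ₂⁻¹ ∧
            |pdy (pdy (DOp S)) p| ≤ μ * δ₂⁻¹ ^ 2) →
        ∀ f₁ f₂ f₃ : Lp ℂ 2 (volume : Measure ℝ),
          ‖∫ p : ℝ × ℝ, Complex.exp (Complex.I * lam * S p) *
              f₁ p.1 * f₂ p.2 * f₃ (p.1 + p.2) * a p‖ ≤
            C * |lam * μ| ^ (-(1 / 6) : ℝ) * ‖f₁‖ * ‖f₂‖ * ‖f₃‖ :=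
  ⟨√(2 + √(33 * Real.pi)), fun _ _ _ _ _ _ hδ _ hμ hlam _ _ _ _ _ _ hJ ha hsupp ha₀ ha₁ ha₂ _ hS
      hD => trilinear_van_der_corput_general hδ hμ hlam hJ (contDiff_infty.1 ha 2)
    (fun _ hp => (hsupp hp).2) ha₀ ha₁ ha₂ (contDiff_infty.1 hS 5) hD⟩
end
end

section
/- Let S : ℝ² → ℝ be smooth, let μ > 0, δ₂ > 0, and let K ⊆ ℝ² be a convex set such that for all (x,y) ∈ K: |DS(x,y)| ≥ μ, and |∂_y^β DS(x,y)| ≤ μ δ₂^{−β} for β = 1, 2, where DS := ∂_x∂_y(∂_x−∂_y)S. For τ ∈ ℝ set S_τ(x,y) := S(x,y) − S(x−τ, y+τ). Then for every τ ∈ ℝ and every (x,y) such that both (x,y) ∈ K and (x−τ, y+τ) ∈ K, one has: |∂_x∂_y S_τ(x,y)| ≥ μ|τ|, |∂_x∂_y² S_τ(x,y)| ≤ μ δ₂^{−1} |τ|, and |∂_x∂_y³ S_τ(x,y)| ≤ μ δ₂^{−2} |τ|. -/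
open MeasureTheory

noncomputable section

/-- The difference phase `S_τ(x,y) = S(x,y) − S(x−τ, y+τ)`. -/
def Sdiff (S : ℝ × ℝ → ℝ) (τ : ℝ) : ℝ × ℝ → ℝ := fun p => S p - S (p.1 - τ, p.2 + τ)

/-!
All the operators involved are directional derivatives: `∂ₓ`, `∂_y` and `∂ₓ - ∂_y` are the
derivatives along `(1, 0)`, `(0, 1)` and `(1, -1)`. They commute with each other and with the
translation defining `S_τ`, so `∂ₓ∂_y^(k+1) S_τ` is the increment of `∂ₓ∂_y^(k+1) S` over a step
`τ • (1, -1)`, and by the mean value theorem it equals `τ` times a value on the segment of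
`(∂ₓ - ∂_y)∂ₓ∂_y^(k+1) S = ∂_y^k DS`.
-/

section DirectionalDerivative

variable {E F : Type*} [NormedAddCommGroup E] [NormedSpace ℝ E]
  [NormedAddCommGroup F] [NormedSpace ℝ F] {f : E → F}

/-- The derivative of `f` in the direction `v`, as a function of the base point. It is
`lineDeriv` with the arguments reordered, so that `dirDeriv v` is an operator on functions that can
be composed and iterated. -/
def dirDeriv (v : E) (f : E → F) : E → F := fun p => lineDeriv ℝ f p v

lemma dirDeriv_eq_fderiv (hf : Differentiable ℝ f) (v : E) :
    dirDeriv v f = fun p => fderiv ℝ f p v :=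
  funext fun p => (hf p).lineDeriv_eq_fderiv

lemma contDiff_dirDeriv {n : WithTop ℕ∞} (hf : ContDiff ℝ (n + 1) f) (v : E) :
    ContDiff ℝ n (dirDeriv v f) := by
  rw [dirDeriv_eq_fderiv (hf.differentiable (by simp))]
  exact (hf.fderiv_right le_rfl).clm_apply contDiff_const

lemma contDiff_iterate_dirDeriv {n : WithTop ℕ∞} {k : ℕ} (hf : ContDiff ℝ (n + k) f) (v : E) :
    ContDiff ℝ n ((dirDeriv v)^[k] f) := by
  induction k generalizing f with
  | zero => simpa using hf
  | succ k ih => exact ih (contDiff_dirDeriv (by simpa [add_assoc] using hf) v)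

lemma dirDeriv_comm (hf : ContDiff ℝ 2 f) (v w : E) :
    dirDeriv v (dirDeriv w f) = dirDeriv w (dirDeriv v f) := by
  have hf' : Differentiable ℝ (fderiv ℝ f) :=
    (hf.fderiv_right (m := 1) one_add_one_eq_two.le).differentiable one_ne_zero
  have dirDeriv_dirDeriv (a b : E) :
      dirDeriv a (dirDeriv b f) = fun p => fderiv ℝ (fderiv ℝ f) p a b := by
    rw [dirDeriv_eq_fderiv (hf.differentiable two_ne_zero),
      dirDeriv_eq_fderiv (hf'.clm_apply (differentiable_const b))]
    funext p
    simp [fderiv_clm_apply (hf' p) (differentiableAt_const b)]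
  have symm (p : E) : IsSymmSndFDerivAt ℝ f p := hf.contDiffAt.isSymmSndFDerivAt (by simp)
  rw [dirDeriv_dirDeriv, dirDeriv_dirDeriv]
  exact funext fun p => symm p v w

lemma dirDeriv_iterate_comm {k : ℕ} (hf : ContDiff ℝ (k + 1) f) (v w : E) :
    dirDeriv v ((dirDeriv w)^[k] f) = (dirDeriv w)^[k] (dirDeriv v f) := by
  induction k generalizing f with
  | zero => rfl
  | succ k ih =>
    push_cast at hf
    have two_le : (2 : WithTop ℕ∞) ≤ k + 1 + 1 := mod_cast (by lia : 2 ≤ k + 1 + 1)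
    rw [Function.iterate_succ_apply, Function.iterate_succ_apply, ih (contDiff_dirDeriv hf w),
      dirDeriv_comm (hf.of_le two_le)]

lemma dirDeriv_sub_translate (hf : Differentiable ℝ f) (v h : E) :
    dirDeriv v (fun p => f p - f (p + h)) = fun p => dirDeriv v f p - dirDeriv v f (p + h) := by
  have hfh : Differentiable ℝ fun p => f (p + h) := by fun_prop
  rw [dirDeriv_eq_fderiv (hf.fun_sub hfh), dirDeriv_eq_fderiv hf]
  funext p
  rw [fderiv_fun_sub (hf p) (hfh p), fderiv_comp_add_right, sub_apply]

end DirectionalDerivative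

section Plane

variable {f S : ℝ × ℝ → ℝ}

lemma pdx_eq_dirDeriv : pdx = dirDeriv ((1, 0) : ℝ × ℝ) := by
  funext f p
  simpa [pdx, dirDeriv, lineDeriv, Prod.add_def] using
    (deriv_comp_const_add (f := fun t => f (t, p.2)) p.1 0).symm

lemma pdy_eq_dirDeriv : pdy = dirDeriv ((0, 1) : ℝ × ℝ) := by
  funext f p
  simpa [pdy, dirDeriv, lineDeriv, Prod.add_def] using
    (deriv_comp_const_add (f := fun t => f (p.1, t)) p.2 0).symm

lemma pdx_sub_pdy_eq_dirDeriv (hf : Differentiable ℝ f) :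
    (fun p => pdx f p - pdy f p) = dirDeriv (1, -1) f := by
  rw [pdx_eq_dirDeriv, pdy_eq_dirDeriv]
  simp only [dirDeriv_eq_fderiv hf, ← map_sub, Prod.mk_sub_mk, sub_zero, zero_sub]

lemma iterate_pdy_DOp {k : ℕ} (hS : ContDiff ℝ (k + 3) S) :
    pdy^[k] (DOp S) = dirDeriv (1, -1) (pdx (pdy^[k + 1] S)) := by
  have hS' : ContDiff ℝ (k + 1 + 1 + 1) S := mod_cast hS
  have hL : ContDiff ℝ (k + 1 + 1) (dirDeriv (1, -1) S) := contDiff_dirDeriv hS' _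
  have hdy : ContDiff ℝ 2 ((dirDeriv (0, 1))^[k + 1] S) :=
    contDiff_iterate_dirDeriv (by convert hS using 1; push_cast; ring) _
  calc pdy^[k] (DOp S)
    _ = pdy^[k] (pdx (pdy (dirDeriv (1, -1) S))) := by
      rw [DOp, pdx_sub_pdy_eq_dirDeriv (hS'.differentiable (by simp))]
    _ = pdx (pdy^[k + 1] (dirDeriv (1, -1) S)) := by
      rw [Function.iterate_succ_apply, pdx_eq_dirDeriv, pdy_eq_dirDeriv,
        dirDeriv_iterate_comm (contDiff_dirDeriv hL _)]
    _ = pdx (dirDeriv (1, -1) (pdy^[k + 1] S)) := by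
      rw [pdy_eq_dirDeriv, dirDeriv_iterate_comm (k := k + 1) (hS'.of_le le_self_add)]
    _ = dirDeriv (1, -1) (pdx (pdy^[k + 1] S)) := by
      rw [pdx_eq_dirDeriv, pdy_eq_dirDeriv, dirDeriv_comm hdy]

lemma Sdiff_eq_sub_translate (f : ℝ × ℝ → ℝ) (τ : ℝ) :
    Sdiff f τ = fun p => f p - f (p + (-τ, τ)) := by
  funext p
  simp [Sdiff, sub_eq_add_neg, Prod.add_def]

lemma dirDeriv_Sdiff (hf : Differentiable ℝ f) (v : ℝ × ℝ) (τ : ℝ) :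
    dirDeriv v (Sdiff f τ) = Sdiff (dirDeriv v f) τ := by
  simp only [Sdiff_eq_sub_translate, dirDeriv_sub_translate hf]

lemma iterate_dirDeriv_Sdiff {k : ℕ} (hf : ContDiff ℝ k f) (v : ℝ × ℝ) (τ : ℝ) :
    (dirDeriv v)^[k] (Sdiff f τ) = Sdiff ((dirDeriv v)^[k] f) τ := by
  induction k generalizing f with
  | zero => rfl
  | succ k ih =>
    rw [Function.iterate_succ_apply, Function.iterate_succ_apply,
      dirDeriv_Sdiff (hf.differentiable (by simp)), ih (contDiff_dirDeriv hf v)]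

lemma pdx_iterate_pdy_Sdiff {k : ℕ} (hf : ContDiff ℝ (k + 1) f) (τ : ℝ) :
    pdx (pdy^[k] (Sdiff f τ)) = Sdiff (pdx (pdy^[k] f)) τ := by
  have hk : ContDiff ℝ 1 ((dirDeriv ((0, 1) : ℝ × ℝ))^[k] f) :=
    contDiff_iterate_dirDeriv (by rwa [add_comm]) _
  rw [pdx_eq_dirDeriv, pdy_eq_dirDeriv, iterate_dirDeriv_Sdiff (hf.of_le le_self_add),
    dirDeriv_Sdiff (hk.differentiable one_ne_zero)]

lemma exists_mem_segment_Sdiff_eq (hf : Differentiable ℝ f) (τ x y : ℝ) :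
    ∃ q ∈ segment ℝ (x - τ, y + τ) (x, y), Sdiff f τ (x, y) = τ * dirDeriv (1, -1) f q := by
  obtain ⟨q, hq, increment_eq⟩ :=
    domain_mvt (fun p _ => (hf p).hasFDerivAt.hasFDerivWithinAt) convex_univ
      (Set.mem_univ (x - τ, y + τ)) (Set.mem_univ (x, y))
  have step_eq : (x, y) - (x - τ, y + τ) = τ • ((1, -1) : ℝ × ℝ) := by ext <;> simp
  refine ⟨q, hq, ?_⟩
  rw [dirDeriv_eq_fderiv hf, ← smul_eq_mul, ← map_smul, ← step_eq]
  exact increment_eq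

lemma exists_mem_segment_pdx_iterate_pdy_Sdiff_eq {k : ℕ} (hS : ContDiff ℝ (k + 3) S)
    (τ x y : ℝ) :
    ∃ q ∈ segment ℝ (x - τ, y + τ) (x, y),
      pdx (pdy^[k + 1] (Sdiff S τ)) (x, y) = τ * pdy^[k] (DOp S) q := by
  have hG : ContDiff ℝ 1 (pdx (pdy^[k + 1] S)) := by
    rw [pdx_eq_dirDeriv, pdy_eq_dirDeriv]
    refine contDiff_dirDeriv (contDiff_iterate_dirDeriv ?_ _) _
    convert hS using 1
    push_cast
    ring
  rw [iterate_pdy_DOp hS, pdx_iterate_pdy_Sdiff (hS.of_le (mod_cast (by lia : k + 1 + 1 ≤ k + 3)))]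
  exact exists_mem_segment_Sdiff_eq (hG.differentiable one_ne_zero) τ x y

end Plane

theorem Sdiff_mixed_partial_bounds_general {S : ℝ × ℝ → ℝ} {k : ℕ} (hS : ContDiff ℝ (k + 3) S)
    {K : Set (ℝ × ℝ)} (hK : Convex ℝ K) {τ x y : ℝ}
    (hxy : (x, y) ∈ K) (hxy' : (x - τ, y + τ) ∈ K) :
    (∀ m, (∀ p ∈ K, m ≤ |pdy^[k] (DOp S) p|) →
      m * |τ| ≤ |pdx (pdy^[k + 1] (Sdiff S τ)) (x, y)|) ∧
    (∀ M, (∀ p ∈ K, |pdy^[k] (DOp S) p| ≤ M) →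
      |pdx (pdy^[k + 1] (Sdiff S τ)) (x, y)| ≤ M * |τ|) := by
  obtain ⟨q, hq, deriv_eq⟩ := exists_mem_segment_pdx_iterate_pdy_Sdiff_eq hS τ x y
  have hqK : q ∈ K := hK.segment_subset hxy' hxy hq
  rw [deriv_eq, abs_mul, mul_comm |τ|]
  exact ⟨fun m hm => by gcongr; exact hm q hqK, fun M hM => by gcongr; exact hM q hqK⟩

/-- Bounds for the mixed partials of `S_τ` on a convex set. -/
theorem Sdiff_mixed_partial_bounds
    (S : ℝ × ℝ → ℝ) (hS : ContDiff ℝ (⊤ : ℕ∞) S)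
    (μ δ₂ : ℝ) (hμ : 0 < μ) (hδ₂ : 0 < δ₂)
    (K : Set (ℝ × ℝ)) (hK : Convex ℝ K)
    (h1 : ∀ p ∈ K, μ ≤ |DOp S p|)
    (h2 : ∀ p ∈ K, |pdy (DOp S) p| ≤ μ * δ₂⁻¹)
    (h3 : ∀ p ∈ K, |pdy (pdy (DOp S)) p| ≤ μ * δ₂⁻¹ ^ 2)
    (τ x y : ℝ) (hxy : (x, y) ∈ K) (hxy' : (x - τ, y + τ) ∈ K) :
    μ * |τ| ≤ |pdx (pdy (Sdiff S τ)) (x, y)| ∧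
    |pdx (pdy (pdy (Sdiff S τ))) (x, y)| ≤ μ * δ₂⁻¹ * |τ| ∧
    |pdx (pdy (pdy (pdy (Sdiff S τ)))) (x, y)| ≤ μ * δ₂⁻¹ ^ 2 * |τ| := by
  have bounds (k : ℕ) := Sdiff_mixed_partial_bounds_general (k := k)
    (mod_cast contDiff_infty.1 hS (k + 3)) hK hxy hxy'
  exact ⟨(bounds 0).1 μ h1, (bounds 1).2 _ h2, (bounds 2).2 _ h3⟩
end
end
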